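/- arXiv:1706.06928 — 4 statements merged into one kernel-verified Lean document; each statement's English description precedes it below -/
import Mathlib

section
/- Let N ≥ 2 and let u : ℝ^N → ℝ be a function of class C^N, not identically zero, such that u and all its partial derivatives up to order N are Lebesgue integrable on ℝ^N. Then the inequality is strict: ‖u‖_∞ < (√(ℓ_N) · ω_{N−1})^{−1} ∫_{ℝ^N} |∇^N u(x)| dx. In particular, no nonzero function in this class attains equality in the optimal Sobolev embedding inequality. -/
open MeasureTheory Metric Filter Matrix

noncomputable section

/-- The mixed partial derivative `∂^m u / ∂x_{i 0} ⋯ ∂x_{i (m-1)} (x)`, realized as the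
iterated Fréchet derivative applied to the corresponding standard basis vectors. -/
def mixedPartial (N m : ℕ) (u : EuclideanSpace ℝ (Fin N) → ℝ)
    (i : Fin m → Fin N) (x : EuclideanSpace ℝ (Fin N)) : ℝ :=
  iteratedFDeriv ℝ m u x fun k => EuclideanSpace.single (i k) 1

/-- The Frobenius norm `|∇^m u (x)|` of the tensor of `m`-th order partial derivatives. -/
def gradNorm (N m : ℕ) (u : EuclideanSpace ℝ (Fin N) → ℝ)
    (x : EuclideanSpace ℝ (Fin N)) : ℝ :=
  Real.sqrt (∑ i : Fin m → Fin N, mixedPartial N m u i x ^ 2)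

/-- The function `x ↦ log |x|`. -/
def logNorm (N : ℕ) (x : EuclideanSpace ℝ (Fin N)) : ℝ := Real.log ‖x‖

/-- The constant `ℓ_N = ∑ (∂^N log|x|/∂x_{i_1}⋯∂x_{i_N} (e_1))²`. -/
def ell (N : ℕ) (hN : 0 < N) : ℝ :=
  ∑ i : Fin N → Fin N,
    mixedPartial N N (logNorm N) i (EuclideanSpace.single (⟨0, hN⟩ : Fin N) 1) ^ 2

/-- `ω_{N-1}`, the surface measure of the unit sphere `𝕊^{N-1} ⊂ ℝ^N`,
expressed as `N` times the volume of the unit ball. -/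
def omegaSphere (N : ℕ) : ℝ :=
  N * (volume (ball (0 : EuclideanSpace ℝ (Fin N)) 1)).toReal

section part1

open scoped Topology ContDiff

/-- contraction of two tensors -/
def ip (N k : ℕ) (A B : (EuclideanSpace ℝ (Fin N)) [×k]→L[ℝ] ℝ) : ℝ :=
  ∑ i : Fin k → Fin N, A (fun j => EuclideanSpace.single (i j) 1) *
    B (fun j => EuclideanSpace.single (i j) 1)

theorem ip_succ (N k : ℕ) (A B : (EuclideanSpace ℝ (Fin N)) [×(k+1)]→L[ℝ] ℝ) :
    ip N (k+1) A B = ∑ j : Fin N, ip N k (A.curryLeft (EuclideanSpace.single j 1))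
      (B.curryLeft (EuclideanSpace.single j 1)) := by
  unfold ip
  rw [← Fintype.sum_prod_type']
  refine (Fintype.sum_equiv (Fin.consEquiv (fun _ => Fin N)) _ _ ?_).symm
  rintro ⟨j, i⟩
  simp only [ContinuousMultilinearMap.curryLeft_apply]
  have : (Fin.cons (EuclideanSpace.single j 1) fun l => EuclideanSpace.single (i l) 1 :
      Fin (k+1) → EuclideanSpace ℝ (Fin N)) =
      fun l => EuclideanSpace.single ((Fin.consEquiv (fun _ => Fin N)) (j, i) l) 1 := by
    funext l
    refine Fin.cases ?_ (fun l => ?_) l <;> simp [Fin.consEquiv]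
  rw [this]

theorem ip_add_left (N k : ℕ) (A A' B : (EuclideanSpace ℝ (Fin N)) [×k]→L[ℝ] ℝ) :
    ip N k (A + A') B = ip N k A B + ip N k A' B := by
  simp [ip, add_mul, Finset.sum_add_distrib]

theorem ip_add_right (N k : ℕ) (A B B' : (EuclideanSpace ℝ (Fin N)) [×k]→L[ℝ] ℝ) :
    ip N k A (B + B') = ip N k A B + ip N k A B' := by
  simp [ip, mul_add, Finset.sum_add_distrib]

theorem ip_smul_left (N k : ℕ) (c : ℝ) (A B : (EuclideanSpace ℝ (Fin N)) [×k]→L[ℝ] ℝ) :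
    ip N k (c • A) B = c * ip N k A B := by
  simp [ip, Finset.mul_sum, mul_assoc]

theorem ip_smul_right (N k : ℕ) (c : ℝ) (A B : (EuclideanSpace ℝ (Fin N)) [×k]→L[ℝ] ℝ) :
    ip N k A (c • B) = c * ip N k A B := by
  simp [ip, Finset.mul_sum, mul_left_comm]

theorem ip_sum_right (N k : ℕ) {ι : Type} (s : Finset ι)
    (A : (EuclideanSpace ℝ (Fin N)) [×k]→L[ℝ] ℝ)
    (B : ι → (EuclideanSpace ℝ (Fin N)) [×k]→L[ℝ] ℝ) :
    ip N k A (∑ j ∈ s, B j) = ∑ j ∈ s, ip N k A (B j) := by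
  classical
  induction s using Finset.induction_on with
  | empty => simp [ip]
  | insert a s ha ih => rw [Finset.sum_insert ha, Finset.sum_insert ha, ip_add_right, ih]

theorem norm_single_one (N : ℕ) (j : Fin N) :
    ‖(EuclideanSpace.single j 1 : EuclideanSpace ℝ (Fin N))‖ = 1 := by simp

theorem abs_ip_le (N k : ℕ) (A B : (EuclideanSpace ℝ (Fin N)) [×k]→L[ℝ] ℝ) :
    |ip N k A B| ≤ (N:ℝ)^k * (‖A‖ * ‖B‖) := by
  unfold ip
  refine (Finset.abs_sum_le_sum_abs _ _).trans ?_
  have : ∀ i ∈ (Finset.univ : Finset (Fin k → Fin N)),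
      |A (fun j => EuclideanSpace.single (i j) 1) * B (fun j => EuclideanSpace.single (i j) 1)|
        ≤ ‖A‖ * ‖B‖ := by
    intro i _
    rw [abs_mul]
    have hA := A.le_opNorm (fun j => EuclideanSpace.single (i j) 1)
    have hB := B.le_opNorm (fun j => EuclideanSpace.single (i j) 1)
    simp at hA hB
    gcongr
  refine (Finset.sum_le_card_nsmul _ _ _ this).trans ?_
  simp

/-- invariance of the trace of a bilinear form -/
theorem trace_inv (N : ℕ) (b : EuclideanSpace ℝ (Fin N) →ₗ[ℝ] EuclideanSpace ℝ (Fin N) →ₗ[ℝ] ℝ)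
    (R : EuclideanSpace ℝ (Fin N) ≃ₗᵢ[ℝ] EuclideanSpace ℝ (Fin N)) :
    ∑ j, b (R (EuclideanSpace.single j 1)) (R (EuclideanSpace.single j 1)) =
      ∑ j, b (EuclideanSpace.single j 1) (EuclideanSpace.single j 1) := by
  have h1 := InnerProductSpace.canonicalCovariantTensor_eq_sum (EuclideanSpace ℝ (Fin N))
    (EuclideanSpace.basisFun (Fin N) ℝ)
  have h2 := InnerProductSpace.canonicalCovariantTensor_eq_sum (EuclideanSpace ℝ (Fin N))
    ((EuclideanSpace.basisFun (Fin N) ℝ).map R)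
  have h3 := congrArg (TensorProduct.lift b) (h2.symm.trans h1)
  simpa using h3

theorem ip_inv (N k : ℕ) (R : EuclideanSpace ℝ (Fin N) ≃ₗᵢ[ℝ] EuclideanSpace ℝ (Fin N))
    (A B A' B' : (EuclideanSpace ℝ (Fin N)) [×k]→L[ℝ] ℝ)
    (hA : ∀ v, A (fun j => R (v j)) = A' v) (hB : ∀ v, B (fun j => R (v j)) = B' v) :
    ip N k A B = ip N k A' B' := by
  induction k with
  | zero =>
    have hA0 := hA (fun j => j.elim0)
    have hB0 := hB (fun j => j.elim0)
    simp only [ip]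
    refine Finset.sum_congr rfl fun i _ => ?_
    congr 1
    · convert hA0 using 1
      · congr 1; funext j; exact j.elim0
      · congr 1; funext j; exact j.elim0
    · convert hB0 using 1
      · congr 1; funext j; exact j.elim0
      · congr 1; funext j; exact j.elim0
  | succ k ih =>
    rw [ip_succ, ip_succ]
    let b : EuclideanSpace ℝ (Fin N) →ₗ[ℝ] EuclideanSpace ℝ (Fin N) →ₗ[ℝ] ℝ :=
      LinearMap.mk₂ ℝ (fun v w => ip N k (A.curryLeft v) (B.curryLeft w))
        (by intros; simp [ip_add_left]) (by intros; simp [ip_smul_left])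
        (by intros; simp [ip_add_right]) (by intros; simp [ip_smul_right])
    have := trace_inv N b R
    simp only [b, LinearMap.mk₂_apply] at this
    rw [← this]
    refine Finset.sum_congr rfl fun j _ => ?_
    apply ih
    · intro v
      rw [ContinuousMultilinearMap.curryLeft_apply, ContinuousMultilinearMap.curryLeft_apply,
        ← hA]
      congr 1
      funext l
      refine Fin.cases ?_ (fun l => ?_) l <;> simp
    · intro v
      rw [ContinuousMultilinearMap.curryLeft_apply, ContinuousMultilinearMap.curryLeft_apply,
        ← hB]
      congr 1
      funext l
      refine Fin.cases ?_ (fun l => ?_) l <;> simp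

/-- continuous bilinear version of `ip` is not needed; smoothness of contractions -/
theorem ContDiffAt.ip_contr {N k : ℕ} {n : WithTop ℕ∞} {x : EuclideanSpace ℝ (Fin N)}
    {A B : EuclideanSpace ℝ (Fin N) → (EuclideanSpace ℝ (Fin N)) [×k]→L[ℝ] ℝ}
    (hA : ContDiffAt ℝ n A x) (hB : ContDiffAt ℝ n B x) :
    ContDiffAt ℝ n (fun y => ip N k (A y) (B y)) x := by
  unfold ip
  refine ContDiffAt.sum fun i _ => ContDiffAt.mul ?_ ?_
  · exact (ContinuousMultilinearMap.apply ℝ (fun _ : Fin k => EuclideanSpace ℝ (Fin N)) ℝ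
      (fun j => EuclideanSpace.single (i j) 1)).contDiff.contDiffAt.comp x hA
  · exact (ContinuousMultilinearMap.apply ℝ (fun _ : Fin k => EuclideanSpace ℝ (Fin N)) ℝ
      (fun j => EuclideanSpace.single (i j) 1)).contDiff.contDiffAt.comp x hB

theorem fderiv_ip {N k : ℕ} {x : EuclideanSpace ℝ (Fin N)}
    {A B : EuclideanSpace ℝ (Fin N) → (EuclideanSpace ℝ (Fin N)) [×k]→L[ℝ] ℝ}
    (hA : DifferentiableAt ℝ A x) (hB : DifferentiableAt ℝ B x) (v : EuclideanSpace ℝ (Fin N)) :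
    fderiv ℝ (fun y => ip N k (A y) (B y)) x v =
      ip N k (fderiv ℝ A x v) (B x) + ip N k (A x) (fderiv ℝ B x v) := by
  unfold ip
  have key : HasFDerivAt (fun y => ∑ i : Fin k → Fin N,
      A y (fun j => EuclideanSpace.single (i j) 1) *
      B y (fun j => EuclideanSpace.single (i j) 1)) (∑ i : Fin k → Fin N,
      (A x (fun j => EuclideanSpace.single (i j) 1) •
        (ContinuousMultilinearMap.apply ℝ (fun _ : Fin k => EuclideanSpace ℝ (Fin N)) ℝ
          (fun j => EuclideanSpace.single (i j) 1)).comp (fderiv ℝ B x) +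
       B x (fun j => EuclideanSpace.single (i j) 1) •
        (ContinuousMultilinearMap.apply ℝ (fun _ : Fin k => EuclideanSpace ℝ (Fin N)) ℝ
          (fun j => EuclideanSpace.single (i j) 1)).comp (fderiv ℝ A x))) x := by
    refine HasFDerivAt.fun_sum fun i _ => HasFDerivAt.mul ?_ ?_
    · exact (ContinuousMultilinearMap.apply ℝ (fun _ : Fin k => EuclideanSpace ℝ (Fin N)) ℝ
        (fun j => EuclideanSpace.single (i j) 1)).hasFDerivAt.comp x hA.hasFDerivAt
    · exact (ContinuousMultilinearMap.apply ℝ (fun _ : Fin k => EuclideanSpace ℝ (Fin N)) ℝ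
        (fun j => EuclideanSpace.single (i j) 1)).hasFDerivAt.comp x hB.hasFDerivAt
  rw [key.fderiv]
  simp only [_root_.sum_apply, ← Finset.sum_add_distrib]
  refine Finset.sum_congr rfl fun i _ => ?_
  simp
  ring

end part1

section part2

open scoped Topology ContDiff

abbrev EE (N : ℕ) := EuclideanSpace ℝ (Fin N)

/-- standard basis vector -/
abbrev eb {N : ℕ} (j : Fin N) : EE N := EuclideanSpace.single j (1:ℝ)

/-- divergence of a tensor field -/
def divT {N k : ℕ} (F : EE N → (EE N) [×(k+1)]→L[ℝ] ℝ) (x : EE N) : (EE N) [×k]→L[ℝ] ℝ :=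
  ∑ j : Fin N, (fderiv ℝ F x (eb j)).curryLeft (eb j)

/-- smooth, homogeneous, equivariant tensor fields -/
structure Good (N k : ℕ) (F : EE N → (EE N) [×k]→L[ℝ] ℝ) : Prop where
  smooth : ∀ x, x ≠ 0 → ContDiffAt ℝ ∞ F x
  homog : ∀ t : ℝ, 0 < t → ∀ x, x ≠ 0 → t ^ N • F (t • x) = t ^ k • F x
  equiv : ∀ (R : EE N ≃ₗᵢ[ℝ] EE N) (x : EE N), x ≠ 0 → ∀ v : Fin k → EE N,
    F (R x) (fun j => R (v j)) = F x v

/-- currying as a continuous linear map -/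
def curryL {N k : ℕ} (v : EE N) : ((EE N) [×(k+1)]→L[ℝ] ℝ) →L[ℝ] ((EE N) [×k]→L[ℝ] ℝ) :=
  (ContinuousLinearMap.apply ℝ _ v).comp
    (continuousMultilinearCurryLeftEquiv ℝ (fun _ : Fin (k+1) => EE N) ℝ).toContinuousLinearEquiv.toContinuousLinearMap

theorem curryL_apply {N k : ℕ} (v : EE N) (A : (EE N) [×(k+1)]→L[ℝ] ℝ) :
    curryL v A = A.curryLeft v := rfl

theorem fderiv_eval {N k : ℕ} {F : EE N → (EE N) [×k]→L[ℝ] ℝ} {x : EE N}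
    (hF : DifferentiableAt ℝ F x) (v : Fin k → EE N) (w : EE N) :
    fderiv ℝ (fun y => F y v) x w = fderiv ℝ F x w v := by
  have := ((ContinuousMultilinearMap.apply ℝ (fun _ : Fin k => EE N) ℝ v).hasFDerivAt.comp x
    hF.hasFDerivAt).fderiv
  have h2 : (fun y => F y v) = (ContinuousMultilinearMap.apply ℝ (fun _ : Fin k => EE N) ℝ v) ∘ F := rfl
  rw [h2, this]
  rfl

theorem Good.differentiableAt {N k : ℕ} {F : EE N → (EE N) [×k]→L[ℝ] ℝ} (hF : Good N k F)
    {x : EE N} (hx : x ≠ 0) : DifferentiableAt ℝ F x :=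
  (hF.smooth x hx).differentiableAt (by simp)

theorem Good.div {N k : ℕ} {F : EE N → (EE N) [×(k+1)]→L[ℝ] ℝ} (hF : Good N (k+1) F) :
    Good N k (divT F) where
  smooth x hx := by
    unfold divT
    refine ContDiffAt.sum fun j _ => ?_
    have h1 : ContDiffAt ℝ ∞ (fderiv ℝ F) x := (hF.smooth x hx).fderiv_right (by simp)
    have h2 : ContDiffAt ℝ ∞ (fun y => fderiv ℝ F y (eb j)) x := h1.clm_apply contDiffAt_const
    exact (curryL (k := k) (eb j)).contDiff.contDiffAt.comp x h2
  homog t ht x hx := by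
    have htx : t • x ≠ 0 := smul_ne_zero ht.ne' hx
    have h1 : HasFDerivAt (fun y => t ^ N • F (t • y))
        (t ^ N • ((fderiv ℝ F (t • x)).comp (t • ContinuousLinearMap.id ℝ (EE N)))) x := by
      have h0 : HasFDerivAt (fun y : EE N => t • y) (t • ContinuousLinearMap.id ℝ (EE N)) x :=
        (hasFDerivAt_id x).const_smul t
      have h0' : HasFDerivAt (fun y : EE N => F (t • y))
          ((fderiv ℝ F (t • x)).comp (t • ContinuousLinearMap.id ℝ (EE N))) x :=
        HasFDerivAt.comp x (hF.differentiableAt htx).hasFDerivAt h0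
      exact h0'.fun_const_smul _
    have h2 : HasFDerivAt (fun y => t ^ (k+1) • F y) (t ^ (k+1) • fderiv ℝ F x) x :=
      (hF.differentiableAt hx).hasFDerivAt.fun_const_smul _
    have h3 : (fun y => t ^ N • F (t • y)) =ᶠ[𝓝 x] (fun y => t ^ (k+1) • F y) := by
      filter_upwards [isOpen_compl_singleton.mem_nhds hx] with y hy
      exact hF.homog t ht y hy
    have h4 := h1.unique (h2.congr_of_eventuallyEq h3)
    unfold divT
    rw [Finset.smul_sum, Finset.smul_sum]
    refine Finset.sum_congr rfl fun j _ => ?_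
    have h5 := congrArg (fun L => curryL (k := k) (eb j) (L (eb j))) h4
    simp only [_root_.smul_apply, ContinuousLinearMap.comp_apply,
      ContinuousLinearMap.id_apply, map_smul, curryL_apply] at h5
    have h6 : t • (t ^ N • (fderiv ℝ F (t • x) (eb j)).curryLeft (eb j)) =
        t • (t ^ k • (fderiv ℝ F x (eb j)).curryLeft (eb j)) := by
      rw [smul_comm, h5, smul_smul, pow_succ']
    exact smul_right_injective _ ht.ne' h6
  equiv R x hx v := by
    have hRx : R x ≠ 0 := by simpa using hx
    have key : ∀ (w : EE N) (m : Fin (k+1) → EE N),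
        fderiv ℝ F (R x) (R w) (fun j => R (m j)) = fderiv ℝ F x w m := by
      intro w m
      rw [← fderiv_eval (hF.differentiableAt hx), ← fderiv_eval (hF.differentiableAt hRx)]
      have h1 : (fun y => F y m) =ᶠ[𝓝 x] ((fun y => F y (fun j => R (m j))) ∘ R) := by
        filter_upwards [isOpen_compl_singleton.mem_nhds hx] with y hy
        exact (hF.equiv R y hy m).symm
      rw [h1.fderiv_eq]
      have hd : DifferentiableAt ℝ (fun y => F y (fun j => R (m j))) (R x) :=
        ((ContinuousMultilinearMap.apply ℝ (fun _ : Fin (k+1) => EE N) ℝ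
          (fun j => R (m j))).differentiableAt.comp (R x) (hF.differentiableAt hRx))
      have hR : HasFDerivAt R (R.toContinuousLinearEquiv : EE N →L[ℝ] EE N) x :=
        R.toContinuousLinearEquiv.hasFDerivAt
      rw [(hd.hasFDerivAt.comp x hR).fderiv]
      rfl
    unfold divT
    simp only [_root_.sum_apply, ContinuousMultilinearMap.curryLeft_apply]
    let b : EE N →ₗ[ℝ] EE N →ₗ[ℝ] ℝ :=
      LinearMap.mk₂ ℝ (fun p q => fderiv ℝ F (R x) p (Fin.cons q (fun j => R (v j))))
        (by intros; simp) (by intros; simp)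
        (by intro p q q'
            have := (fderiv ℝ F (R x) p).curryLeft.map_add q q'
            exact congrArg (fun L => L (fun j => R (v j))) this)
        (by intro c p q
            have := (fderiv ℝ F (R x) p).curryLeft.map_smul c q
            exact congrArg (fun L => L (fun j => R (v j))) this)
    have := trace_inv N b R
    have hb : ∀ p q, b p q = fderiv ℝ F (R x) p (Fin.cons q (fun j => R (v j))) :=
      fun _ _ => rfl
    simp only [hb] at this
    rw [← this]
    refine Finset.sum_congr rfl fun j _ => ?_
    rw [← key]
    congr 1
    funext l
    refine Fin.cases ?_ (fun l => ?_) l <;> simp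

theorem Good.bound {N k : ℕ} {F : EE N → (EE N) [×k]→L[ℝ] ℝ} (hF : Good N k F) :
    ∃ C : ℝ, 0 ≤ C ∧ ∀ x, x ≠ 0 → ‖F x‖ ≤ C * (‖x‖ ^ k / ‖x‖ ^ N) := by
  have hc : ContinuousOn F (sphere 0 1) := fun x hx =>
    (hF.differentiableAt (by rintro rfl; simp at hx)).continuousAt.continuousWithinAt
  obtain ⟨C, hC⟩ := (isCompact_sphere (0 : EE N) 1).exists_bound_of_continuousOn hc
  refine ⟨max C 0, le_max_right _ _, fun x hx => ?_⟩
  have hn : 0 < ‖x‖ := norm_pos_iff.2 hx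
  set y := ‖x‖⁻¹ • x with hy
  have hyn : ‖y‖ = 1 := by rw [hy, norm_smul]; simp [hn.ne']
  have hy0 : y ≠ 0 := by rintro h; rw [h] at hyn; simp at hyn
  have h1 := hF.homog ‖x‖ hn y hy0
  have h2 : ‖x‖ • y = x := by rw [hy, smul_smul, mul_inv_cancel₀ hn.ne', one_smul]
  rw [h2] at h1
  have h3 := congrArg norm h1
  rw [norm_smul, norm_smul, norm_pow, norm_pow, norm_norm] at h3
  have h4 : ‖F y‖ ≤ max C 0 := (hC y (by simp [hyn])).trans (le_max_left _ _)
  rw [mul_div_assoc', le_div_iff₀ (by positivity), mul_comm, h3, mul_comm]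
  gcongr

theorem covec {N : ℕ} (hN : 0 < N) (G : EE N → EE N →ₗ[ℝ] ℝ)
    (homog : ∀ t : ℝ, 0 < t → ∀ x, x ≠ 0 → ∀ v, t ^ N * G (t • x) v = t * G x v)
    (equiv : ∀ (R : EE N ≃ₗᵢ[ℝ] EE N) (x : EE N) (hx : x ≠ 0) (v : EE N), G (R x) (R v) = G x v)
    (x : EE N) (hx : x ≠ 0) (v : EE N) :
    G x v = G (eb ⟨0, hN⟩) (eb ⟨0, hN⟩) * (inner ℝ x v / ‖x‖ ^ N) := by
  have orth : ∀ x : EE N, x ≠ 0 → ∀ v, inner ℝ x v = 0 → G x v = 0 := by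
    intro x hx v hv
    have h1 : (Submodule.span ℝ {v})ᗮ.reflection x = x := by
      apply Submodule.reflection_mem_subspace_eq_self
      rw [Submodule.mem_orthogonal_singleton_iff_inner_left]
      exact hv
    have h2 := equiv ((Submodule.span ℝ {v})ᗮ.reflection) x hx v
    rw [h1, Submodule.reflection_orthogonalComplement_singleton_eq_neg, map_neg] at h2
    linarith
  have unit : ∀ x : EE N, ‖x‖ = 1 → G x x = G (eb ⟨0, hN⟩) (eb ⟨0, hN⟩) := by
    intro x hx
    have h0 : ‖eb (⟨0, hN⟩ : Fin N)‖ = 1 := by simp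
    have h1 := Submodule.reflection_sub (v := eb (⟨0, hN⟩ : Fin N)) (w := x) (by rw [h0, hx])
    have h2 := equiv (x := eb (⟨0, hN⟩ : Fin N)) (hx := by rw [← norm_ne_zero_iff, h0]; simp)
      (v := eb (⟨0, hN⟩ : Fin N)) (R := (Submodule.span ℝ {eb (⟨0, hN⟩ : Fin N) - x})ᗮ.reflection)
    rw [h1] at h2
    exact h2
  have hn : 0 < ‖x‖ := norm_pos_iff.2 hx
  set y := ‖x‖⁻¹ • x with hy
  have hyn : ‖y‖ = 1 := by rw [hy, norm_smul]; simp [hn.ne']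
  have hy0 : y ≠ 0 := by rintro h; rw [h] at hyn; simp at hyn
  have h2 : ‖x‖ • y = x := by rw [hy, smul_smul, mul_inv_cancel₀ hn.ne', one_smul]
  have h1 := homog ‖x‖ hn y hy0 v
  rw [h2] at h1
  have h3 : G y v = inner ℝ y v * G y y := by
    have h4 := orth y hy0 (v - inner ℝ y v • y) (by
      rw [inner_sub_right, inner_smul_right, real_inner_self_eq_norm_sq, hyn]; ring)
    rw [map_sub, map_smul, smul_eq_mul] at h4
    linarith
  rw [h3, unit y hyn, hy, real_inner_smul_left] at h1
  field_simp at h1 ⊢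
  linarith

theorem hasFDerivAt_norm' {N : ℕ} {x : EE N} (hx : x ≠ 0) :
    HasFDerivAt (fun y : EE N => ‖y‖) (‖x‖⁻¹ • innerSL ℝ x) x := by
  have h1 : DifferentiableAt ℝ (fun y : EE N => ‖y‖) x :=
    (contDiffAt_norm ℝ hx (n := 1)).differentiableAt (by simp)
  have h2 := h1.hasFDerivAt.pow 2
  have h3 := (hasStrictFDerivAt_norm_sq x).hasFDerivAt
  have h4 := h2.unique h3
  have hn : ‖x‖ ≠ 0 := norm_ne_zero_iff.2 hx
  suffices h6 : fderiv ℝ (fun y : EE N => ‖y‖) x = ‖x‖⁻¹ • innerSL ℝ x by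
    rw [← h6]; exact h1.hasFDerivAt
  refine ContinuousLinearMap.ext fun v => ?_
  have h5 := congrArg (fun L => L v) h4
  simp at h5 ⊢
  field_simp
  linarith

theorem div_free {N : ℕ} (c : ℝ) {x : EE N} (hx : x ≠ 0) :
    ∑ j : Fin N, fderiv ℝ (fun y : EE N => c * (inner ℝ y (eb j) / ‖y‖ ^ N)) x (eb j) = 0 := by
  have hn : ‖x‖ ≠ 0 := norm_ne_zero_iff.2 hx
  have key : ∀ j : Fin N, fderiv ℝ (fun y : EE N => c * (inner ℝ y (eb j) / ‖y‖ ^ N)) x (eb j)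
      = c * ((‖x‖ ^ N)⁻¹ - x j ^ 2 * (N * (‖x‖ ^ N)⁻¹ * (‖x‖⁻¹)^2)) := by
    intro j
    have h1 : HasFDerivAt (fun y : EE N => inner ℝ y (eb j)) (innerSL ℝ (eb j)) x := by
      have := (innerSL ℝ (eb j)).hasFDerivAt (x := x)
      refine this.congr_of_eventuallyEq (Eventually.of_forall fun y => ?_)
      exact real_inner_comm _ _
    have h2 := ((hasFDerivAt_norm' hx).pow N)
    have h3 := (hasDerivAt_inv (pow_ne_zero N hn)).comp_hasFDerivAt x h2
    have h4 := (h1.mul h3).const_mul c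
    simp only [div_eq_mul_inv]
    rw [show fderiv ℝ (fun y : EE N => c * (inner ℝ y (eb j) * (‖y‖ ^ N)⁻¹)) x = _ from h4.fderiv]
    have hN : N ≠ 0 := by rintro rfl; exact j.elim0
    obtain ⟨M, rfl⟩ := Nat.exists_eq_succ_of_ne_zero hN
    simp [EuclideanSpace.inner_single_right]
    field_simp
    ring
  rw [Finset.sum_congr rfl fun j _ => key j, ← Finset.mul_sum, Finset.sum_sub_distrib,
    ← Finset.sum_mul]
  have : ∑ j : Fin N, x j ^ 2 = ‖x‖ ^ 2 := by
    rw [EuclideanSpace.norm_sq_eq]; simp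
  rw [this]
  simp
  right
  field_simp
  ring

theorem covec_div_free {N : ℕ} (hN : 0 < N) (G : EE N → EE N →ₗ[ℝ] ℝ)
    (homog : ∀ t : ℝ, 0 < t → ∀ x, x ≠ 0 → ∀ v, t ^ N * G (t • x) v = t * G x v)
    (equiv : ∀ (R : EE N ≃ₗᵢ[ℝ] EE N) (x : EE N) (hx : x ≠ 0) (v : EE N), G (R x) (R v) = G x v)
    (x : EE N) (hx : x ≠ 0) :
    ∑ j : Fin N, fderiv ℝ (fun y => G y (eb j)) x (eb j) = 0 := by
  rw [← div_free (G (eb ⟨0, hN⟩) (eb ⟨0, hN⟩)) hx]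
  refine Finset.sum_congr rfl fun j _ => ?_
  rw [Filter.EventuallyEq.fderiv_eq]
  filter_upwards [isOpen_compl_singleton.mem_nhds hx] with y hy
  exact covec hN G homog equiv y hy (eb j)

/-- derivatives of log -/
theorem logNorm_smooth {N : ℕ} {x : EE N} (hx : x ≠ 0) : ContDiffAt ℝ ∞ (logNorm N) x := by
  unfold logNorm
  exact (contDiffAt_norm ℝ hx).log (norm_ne_zero_iff.2 hx)

theorem logD_smooth {N : ℕ} (k : ℕ) {x : EE N} (hx : x ≠ 0) :
    ContDiffAt ℝ ∞ (iteratedFDeriv ℝ k (logNorm N)) x :=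
  (logNorm_smooth hx).iteratedFDeriv_right (by exact_mod_cast le_top)

theorem logD_equiv {N : ℕ} (k : ℕ) (R : EE N ≃ₗᵢ[ℝ] EE N) (x : EE N) (v : Fin k → EE N) :
    iteratedFDeriv ℝ k (logNorm N) (R x) (fun j => R (v j)) =
      iteratedFDeriv ℝ k (logNorm N) x v := by
  have h := R.toContinuousLinearEquiv.iteratedFDerivWithin_comp_right (logNorm N)
    (s := Set.univ) uniqueDiffOn_univ (x := x) (Set.mem_univ _) k
  rw [Set.preimage_univ, iteratedFDerivWithin_univ, iteratedFDerivWithin_univ] at h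
  have h2 : logNorm N ∘ R.toContinuousLinearEquiv = logNorm N := by
    funext y; simp [logNorm]
  rw [h2] at h
  rw [h]
  rfl

theorem logD_homog {N : ℕ} (k : ℕ) (hk : k ≠ 0) (t : ℝ) (ht : 0 < t) (x : EE N) (hx : x ≠ 0) :
    t ^ k • iteratedFDeriv ℝ k (logNorm N) (t • x) = iteratedFDeriv ℝ k (logNorm N) x := by
  let g : EE N ≃L[ℝ] EE N := ContinuousLinearEquiv.smulLeft (Units.mk0 t ht.ne')
  have hg : ∀ y, g y = t • y := fun y => rfl
  have h := g.iteratedFDerivWithin_comp_right (logNorm N)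
    (s := Set.univ) uniqueDiffOn_univ (x := x) (Set.mem_univ _) k
  rw [Set.preimage_univ, iteratedFDerivWithin_univ, iteratedFDerivWithin_univ] at h
  have h2 : logNorm N ∘ g =ᶠ[𝓝 x] logNorm N + fun _ => Real.log t := by
    filter_upwards [isOpen_compl_singleton.mem_nhds hx] with y hy
    have : ‖y‖ ≠ 0 := norm_ne_zero_iff.2 hy
    simp only [Function.comp, hg, logNorm, norm_smul, Pi.add_apply, Real.norm_eq_abs,
      abs_of_pos ht]
    rw [Real.log_mul ht.ne' this, add_comm]
  rw [(h2.iteratedFDeriv ℝ k).eq_of_nhds, iteratedFDeriv_add_apply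
    ((logNorm_smooth hx).of_le (by exact_mod_cast le_top)) contDiffAt_const,
    iteratedFDeriv_const_of_ne hk, hg] at h
  simp only [Pi.zero_apply, add_zero] at h
  rw [h]
  ext v
  have := (iteratedFDeriv ℝ k (logNorm N) (t • x)).map_smul_univ (fun _ => t) v
  simp at this
  simp [hg, this]

theorem good_log {N : ℕ} (hN : 0 < N) :
    Good N N (fun x => ‖x‖ ^ N • iteratedFDeriv ℝ N (logNorm N) x) where
  smooth x hx := ((contDiffAt_norm ℝ hx).pow N).smul (logD_smooth N hx)
  homog t ht x hx := by
    rw [norm_smul, mul_pow, Real.norm_eq_abs, abs_of_pos ht, ← logD_homog N hN.ne' t ht x hx]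
    simp only [smul_smul]
    ring_nf
  equiv R x hx v := by
    simp [logD_equiv]

/-- pointwise identity: `⟨∇^{k+1} log, F⟩ + ⟨∇^k log, div F⟩ = 0` -/
theorem log_ibp {N k : ℕ} (hN : 0 < N) (hk : k ≠ 0) {F : EE N → (EE N) [×(k+1)]→L[ℝ] ℝ}
    (hF : Good N (k+1) F) (x : EE N) (hx : x ≠ 0) :
    ip N (k+1) (iteratedFDeriv ℝ (k+1) (logNorm N) x) (F x) =
      - ip N k (iteratedFDeriv ℝ k (logNorm N) x) (divT F x) := by
  let G : EE N → EE N →ₗ[ℝ] ℝ := fun y =>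
    { toFun := fun v => ip N k (iteratedFDeriv ℝ k (logNorm N) y) ((F y).curryLeft v)
      map_add' := by intros; simp [ip_add_right]
      map_smul' := by intros; simp [ip_smul_right] }
  have hG : ∀ y v, G y v = ip N k (iteratedFDeriv ℝ k (logNorm N) y) ((F y).curryLeft v) :=
    fun _ _ => rfl
  have h := covec_div_free hN G (by
    intro t ht y hy v
    rw [hG, hG]
    have h1 := hF.homog t ht y hy
    have h2 := congrArg (fun L => curryL (k := k) v L) h1
    simp only [map_smul, curryL_apply] at h2
    rw [← ip_smul_right, h2, ip_smul_right, ← logD_homog k hk t ht y hy, ip_smul_left]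
    ring) (by
    intro R y hy v
    rw [hG, hG]
    apply ip_inv N k R
    · intro w; exact logD_equiv k R y w
    · intro w
      rw [ContinuousMultilinearMap.curryLeft_apply, ContinuousMultilinearMap.curryLeft_apply,
        ← hF.equiv R y hy]
      congr 1
      funext l
      refine Fin.cases ?_ (fun l => ?_) l <;> simp) x hx
  simp only [hG] at h
  have h3 : ∀ j : Fin N, fderiv ℝ (fun y => ip N k (iteratedFDeriv ℝ k (logNorm N) y)
      ((F y).curryLeft (eb j))) x (eb j) =
      ip N k (fderiv ℝ (iteratedFDeriv ℝ k (logNorm N)) x (eb j)) ((F x).curryLeft (eb j)) +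
      ip N k (iteratedFDeriv ℝ k (logNorm N) x) ((fderiv ℝ F x (eb j)).curryLeft (eb j)) := by
    intro j
    have hc : HasFDerivAt (fun y => (F y).curryLeft (eb j))
        ((curryL (k := k) (eb j)).comp (fderiv ℝ F x)) x :=
      (curryL (k := k) (eb j)).hasFDerivAt.comp x (hF.differentiableAt hx).hasFDerivAt
    rw [fderiv_ip ((logD_smooth k hx).differentiableAt (by simp)) hc.differentiableAt,
      hc.fderiv]
    rfl
  rw [Finset.sum_congr rfl fun j _ => h3 j, Finset.sum_add_distrib, ← ip_sum_right] at h
  rw [ip_succ]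
  exact eq_neg_of_add_eq_zero_left h

end part2

section part3

open scoped Topology ContDiff

/-- smooth radial step -/
def psi (N : ℕ) (x : EE N) : ℝ := Real.smoothTransition (‖x‖ ^ 2 - 1)

/-- cutoff away from zero and infinity -/
def chi (N n : ℕ) (x : EE N) : ℝ :=
  psi N (((n:ℝ) + 2) • x) - psi N (((n:ℝ) + 2)⁻¹ • x)

theorem psi_smooth (N : ℕ) : ContDiff ℝ ∞ (psi N) :=
  Real.smoothTransition.contDiff.comp ((contDiff_norm_sq ℝ).sub contDiff_const)

theorem psi_diff (N : ℕ) : Differentiable ℝ (psi N) := (psi_smooth N).differentiable (by simp)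

theorem psi_zero {N : ℕ} {x : EE N} (hx : ‖x‖ ≤ 1) : psi N x = 0 :=
  Real.smoothTransition.zero_of_nonpos (by nlinarith [norm_nonneg x])

theorem psi_one {N : ℕ} {x : EE N} (hx : 2 ≤ ‖x‖) : psi N x = 1 :=
  Real.smoothTransition.one_of_one_le (by nlinarith [norm_nonneg x])

theorem fderiv_psi_zero {N : ℕ} {x : EE N} (hx : ‖x‖ < 1) : fderiv ℝ (psi N) x = 0 := by
  have : psi N =ᶠ[𝓝 x] fun _ => 0 := by
    filter_upwards [(isOpen_lt continuous_norm continuous_const).mem_nhds hx] with y hy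
    exact psi_zero (le_of_lt hy)
  rw [this.fderiv_eq]; simp

theorem fderiv_psi_one {N : ℕ} {x : EE N} (hx : 2 < ‖x‖) : fderiv ℝ (psi N) x = 0 := by
  have : psi N =ᶠ[𝓝 x] fun _ => 1 := by
    filter_upwards [(isOpen_lt continuous_const continuous_norm).mem_nhds hx] with y hy
    exact psi_one (le_of_lt hy)
  rw [this.fderiv_eq]; simp

theorem fderiv_psi_apply {N : ℕ} (x v : EE N) :
    fderiv ℝ (psi N) x v = deriv Real.smoothTransition (‖x‖ ^ 2 - 1) * (2 * inner ℝ x v) := by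
  have h1 : HasFDerivAt (fun y : EE N => ‖y‖ ^ 2 - 1) (2 • innerSL ℝ x) x :=
    ((hasStrictFDerivAt_norm_sq x).hasFDerivAt).sub_const 1
  have h2 : HasDerivAt Real.smoothTransition (deriv Real.smoothTransition (‖x‖ ^ 2 - 1))
      (‖x‖ ^ 2 - 1) :=
    ((Real.smoothTransition.contDiff (n := 1)).differentiable (by simp) _).hasDerivAt
  have h3 := h2.comp_hasFDerivAt x h1
  have h4 : fderiv ℝ (psi N) x = _ := h3.fderiv
  rw [h4]
  simp

theorem psi_bound (N : ℕ) : ∃ C : ℝ, 0 ≤ C ∧ ∀ x : EE N, ‖x‖ * ‖fderiv ℝ (psi N) x‖ ≤ C := by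
  have hc : Continuous (fun x : EE N => ‖x‖ * ‖fderiv ℝ (psi N) x‖) :=
    continuous_norm.mul ((psi_smooth N).continuous_fderiv (by simp)).norm
  obtain ⟨C, hC⟩ := (isCompact_closedBall (0 : EE N) 2).exists_bound_of_continuousOn
    hc.continuousOn
  refine ⟨max C 0, le_max_right _ _, fun x => ?_⟩
  by_cases hx : ‖x‖ ≤ 2
  · have := hC x (by simpa using hx)
    exact ((le_abs_self _).trans this).trans (le_max_left _ _)
  · rw [fderiv_psi_one (not_le.1 hx)]; simp

theorem chi_smooth (N n : ℕ) : ContDiff ℝ ∞ (chi N n) :=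
  ((psi_smooth N).comp (contDiff_const_smul _)).sub ((psi_smooth N).comp (contDiff_const_smul _))

theorem fderiv_chi (N n : ℕ) (x : EE N) :
    fderiv ℝ (chi N n) x = ((n:ℝ) + 2) • fderiv ℝ (psi N) (((n:ℝ) + 2) • x) -
      ((n:ℝ) + 2)⁻¹ • fderiv ℝ (psi N) (((n:ℝ) + 2)⁻¹ • x) := by
  have key : ∀ a : ℝ, HasFDerivAt (fun y => psi N (a • y)) (a • fderiv ℝ (psi N) (a • x)) x := by
    intro a
    have h0 : HasFDerivAt (fun y : EE N => a • y) (a • ContinuousLinearMap.id ℝ (EE N)) x :=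
        (hasFDerivAt_id x).const_smul a
    have h1 := HasFDerivAt.comp x (psi_diff N (a • x)).hasFDerivAt h0
    have e : a • fderiv ℝ (psi N) (a • x) =
        (fderiv ℝ (psi N) (a • x)).comp (a • ContinuousLinearMap.id ℝ (EE N)) := by
      refine ContinuousLinearMap.ext fun v => ?_
      simp
    rw [e]
    exact h1
  exact ((key _).sub (key _)).fderiv

theorem chi_abs_le (N n : ℕ) (x : EE N) : |chi N n x| ≤ 1 := by
  unfold chi psi
  have a1 := Real.smoothTransition.nonneg (‖((n:ℝ) + 2) • x‖ ^ 2 - 1)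
  have a2 := Real.smoothTransition.le_one (‖((n:ℝ) + 2) • x‖ ^ 2 - 1)
  have b1 := Real.smoothTransition.nonneg (‖((n:ℝ) + 2)⁻¹ • x‖ ^ 2 - 1)
  have b2 := Real.smoothTransition.le_one (‖((n:ℝ) + 2)⁻¹ • x‖ ^ 2 - 1)
  rw [abs_le]; constructor <;> linarith

theorem chi_zero_near (N n : ℕ) : (0 : EE N) ∉ tsupport (chi N n) := by
  rw [notMem_tsupport_iff_eventuallyEq]
  have hn : (0:ℝ) < (n:ℝ) + 2 := by positivity
  filter_upwards [ball_mem_nhds (0 : EE N) (inv_pos.2 hn)] with x hx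
  rw [mem_ball_zero_iff] at hx
  have h1 : ‖((n:ℝ) + 2) • x‖ ≤ 1 := by
    rw [norm_smul, Real.norm_eq_abs, abs_of_pos hn]
    calc _ ≤ ((n:ℝ) + 2) * ((n:ℝ) + 2)⁻¹ := by gcongr
      _ = 1 := mul_inv_cancel₀ hn.ne'
  have h3 : ((n:ℝ) + 2)⁻¹ ≤ 1 := inv_le_one_of_one_le₀ (by linarith [(n.cast_nonneg : (0:ℝ) ≤ n)])
  have h2 : ‖((n:ℝ) + 2)⁻¹ • x‖ ≤ 1 := by
    rw [norm_smul, Real.norm_eq_abs, abs_of_pos (inv_pos.2 hn)]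
    have := norm_nonneg x
    nlinarith [inv_pos.2 hn]
  simp [chi, psi_zero h1, psi_zero h2]

theorem chi_compact (N n : ℕ) : HasCompactSupport (chi N n) := by
  have hn : (0:ℝ) < (n:ℝ) + 2 := by positivity
  have hn2 : (2:ℝ) ≤ (n:ℝ) + 2 := by linarith [(n.cast_nonneg : (0:ℝ) ≤ n)]
  refine HasCompactSupport.of_support_subset_isCompact
    (isCompact_closedBall (0 : EE N) (2 * ((n:ℝ) + 2))) ?_
  intro x hx
  by_contra h
  simp only [mem_closedBall, dist_zero_right, not_le] at h
  apply hx
  have h1 : 2 ≤ ‖((n:ℝ) + 2) • x‖ := by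
    rw [norm_smul, Real.norm_eq_abs, abs_of_pos hn]
    nlinarith
  have h2 : 2 ≤ ‖((n:ℝ) + 2)⁻¹ • x‖ := by
    rw [norm_smul, Real.norm_eq_abs, abs_of_pos (inv_pos.2 hn), inv_mul_eq_div, le_div_iff₀ hn]
    exact h.le
  simp [chi, psi_one h1, psi_one h2]

theorem chi_eventually (N : ℕ) {x : EE N} (hx : x ≠ 0) :
    ∀ᶠ n : ℕ in atTop, chi N n x = 1 ∧ fderiv ℝ (chi N n) x = 0 := by
  have hn : 0 < ‖x‖ := norm_pos_iff.2 hx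
  have t : Tendsto (fun n : ℕ => (n:ℝ) + 2) atTop atTop :=
    tendsto_atTop_add_const_right _ _ tendsto_natCast_atTop_atTop
  filter_upwards [t.eventually_gt_atTop (2 / ‖x‖), t.eventually_gt_atTop ‖x‖] with n h1 h2
  have hp : (0:ℝ) < (n:ℝ) + 2 := by positivity
  have e1 : 2 < ‖((n:ℝ) + 2) • x‖ := by
    rw [norm_smul, Real.norm_eq_abs, abs_of_pos hp]
    rwa [div_lt_iff₀ hn] at h1
  have e2 : ‖((n:ℝ) + 2)⁻¹ • x‖ < 1 := by
    rw [norm_smul, Real.norm_eq_abs, abs_of_pos (inv_pos.2 hp), inv_mul_eq_div, div_lt_one hp]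
    exact h2
  rw [fderiv_chi, fderiv_psi_one e1, fderiv_psi_zero e2, chi, psi_one e1.le, psi_zero e2.le]
  simp

theorem chi_bound (N : ℕ) : ∃ C : ℝ, 0 ≤ C ∧ ∀ (n : ℕ) (x : EE N),
    ‖x‖ * ‖fderiv ℝ (chi N n) x‖ ≤ C := by
  obtain ⟨C, hC0, hC⟩ := psi_bound N
  refine ⟨C + C, by positivity, fun n x => ?_⟩
  have key : ∀ a : ℝ, ‖x‖ * ‖a • fderiv ℝ (psi N) (a • x)‖ ≤ C := by
    intro a
    refine le_trans (le_of_eq ?_) (hC (a • x))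
    rw [norm_smul, norm_smul]; ring
  rw [fderiv_chi]
  calc _ ≤ ‖x‖ * (_ + _) := by gcongr; exact norm_sub_le _ _
    _ ≤ _ := by rw [mul_add]; exact add_le_add (key _) (key _)

/-- approximate identity kernel -/
def phi (N : ℕ) (x : EE N) : ℝ := fderiv ℝ (psi N) x x / ‖x‖ ^ N

theorem phi_nonneg (N : ℕ) (x : EE N) : 0 ≤ phi N x := by
  unfold phi
  rw [fderiv_psi_apply, real_inner_self_eq_norm_sq]
  have := Real.smoothTransition.monotone.deriv_nonneg (x := ‖x‖ ^ 2 - 1)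
  positivity

theorem phi_bound (N : ℕ) : ∃ C : ℝ, 0 ≤ C ∧ ∀ x, |phi N x| ≤ C := by
  obtain ⟨C, hC0, hC⟩ := psi_bound N
  refine ⟨C, hC0, fun x => ?_⟩
  by_cases hx : ‖x‖ < 1
  · simp [phi, fderiv_psi_zero hx, hC0]
  · unfold phi
    have h1 : |fderiv ℝ (psi N) x x| ≤ C := by
      refine ((fderiv ℝ (psi N) x).le_opNorm x).trans ?_
      rw [mul_comm]; exact hC x
    rw [abs_div, abs_of_nonneg (by positivity : (0:ℝ) ≤ ‖x‖ ^ N)]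
    exact (div_le_self (abs_nonneg _) (one_le_pow₀ (not_lt.1 hx))).trans h1

theorem integral_phi {N : ℕ} (hN : 0 < N) : ∫ x, phi N x = omegaSphere N := by
  have : Nonempty (Fin N) := ⟨⟨0, hN⟩⟩
  have h1 : (fun x : EE N => phi N x) = fun x =>
      (fun r : ℝ => deriv Real.smoothTransition (r ^ 2 - 1) * (2 * r ^ 2) / r ^ N) ‖x‖ := by
    funext x
    simp only [phi, fderiv_psi_apply, real_inner_self_eq_norm_sq]
  rw [h1]
  refine (integral_fun_norm_addHaar volume
    (fun r : ℝ => deriv Real.smoothTransition (r ^ 2 - 1) * (2 * r ^ 2) / r ^ N)).trans ?_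
  have h2 : ∫ y in Set.Ioi (0:ℝ), y ^ (Module.finrank ℝ (EE N) - 1) •
      (deriv Real.smoothTransition (y ^ 2 - 1) * (2 * y ^ 2) / y ^ N) = 1 := by
    have h3 : ∫ y in Set.Ioi (0:ℝ), y ^ (Module.finrank ℝ (EE N) - 1) •
      (deriv Real.smoothTransition (y ^ 2 - 1) * (2 * y ^ 2) / y ^ N) =
      ∫ y in Set.Ioi (0:ℝ), deriv Real.smoothTransition (y ^ 2 - 1) * (2 * y) := by
      refine setIntegral_congr_fun measurableSet_Ioi fun y hy => ?_
      have hy' : y ≠ 0 := ne_of_gt hy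
      obtain ⟨M, rfl⟩ := Nat.exists_eq_succ_of_ne_zero hN.ne'
      simp
      field_simp
      ring
    rw [h3]
    have h4 := integral_Ioi_of_hasDerivAt_of_nonneg' (a := 0) (l := 1)
      (g := fun y : ℝ => Real.smoothTransition (y ^ 2 - 1))
      (g' := fun y => deriv Real.smoothTransition (y ^ 2 - 1) * (2 * y)) (by
        intro y _
        have h5 : HasDerivAt (fun y : ℝ => y ^ 2 - 1) (2 * y) y := by
          simpa using ((hasDerivAt_id y).pow 2).sub_const 1
        have h6 : HasDerivAt Real.smoothTransition (deriv Real.smoothTransition (y ^ 2 - 1))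
          (y ^ 2 - 1) :=
          ((Real.smoothTransition.contDiff (n := 1)).differentiable (by simp) _).hasDerivAt
        exact h6.comp y h5) (by
        intro y hy
        have hy' : 0 < y := hy
        have := Real.smoothTransition.monotone.deriv_nonneg (x := y ^ 2 - 1)
        positivity) (by
        refine tendsto_const_nhds.congr' ?_
        filter_upwards [eventually_ge_atTop 2] with y hy
        rw [Real.smoothTransition.one_of_one_le]
        nlinarith)
    rw [h4]
    simp [Real.smoothTransition.zero_of_nonpos]
  rw [h2]
  simp [omegaSphere, Measure.real]

theorem omega_pos {N : ℕ} (hN : 0 < N) : 0 < omegaSphere N := by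
  unfold omegaSphere
  have h1 : 0 < (volume (ball (0 : EE N) 1)).toReal :=
    ENNReal.toReal_pos (measure_ball_pos _ _ one_pos).ne' measure_ball_lt_top.ne
  positivity

theorem chi_peak {N : ℕ} (hN : 0 < N) {u : EE N → ℝ} (hu : Integrable u) (hc : Continuous u) :
    Tendsto (fun n : ℕ => ∫ x, u x * (fderiv ℝ (chi N n) x x / ‖x‖ ^ N)) atTop
      (𝓝 (omegaSphere N * u 0)) := by
  have hω := omega_pos hN
  have t : Tendsto (fun n : ℕ => (n:ℝ) + 2) atTop atTop :=
    tendsto_atTop_add_const_right _ _ tendsto_natCast_atTop_atTop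
  have p1 := (tendsto_integral_comp_smul_smul_of_integrable (μ := (volume : Measure (EE N)))
    (φ := fun x => (omegaSphere N)⁻¹ * phi N x)
    (fun x => mul_nonneg (inv_pos.2 hω).le (phi_nonneg N x))
    (by rw [integral_const_mul, integral_phi hN, inv_mul_cancel₀ hω.ne'])
    (by
      refine tendsto_const_nhds.congr' ?_
      have : ∀ᶠ x : EE N in Bornology.cobounded (EE N), 2 < ‖x‖ :=
        tendsto_norm_cobounded_atTop.eventually_gt_atTop 2
      filter_upwards [this] with x hx
      simp [phi, fderiv_psi_one hx]) hu hc.continuousAt).comp t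
  have p2 := p1.const_mul (omegaSphere N)
  obtain ⟨C, hC0, hC⟩ := phi_bound N
  have hphi_meas : Measurable (phi N) := by
    unfold phi
    have : Continuous fun x : EE N => fderiv ℝ (psi N) x x :=
      ((psi_smooth N).continuous_fderiv (by simp)).clm_apply continuous_id
    exact this.measurable.div (measurable_norm.pow_const N)
  have int : ∀ a : ℝ, Integrable (fun x => u x * phi N (a • x)) := by
    intro a
    refine hu.mul_bdd (c := C) ?_ (Eventually.of_forall fun x => hC _)
    exact (hphi_meas.comp (measurable_const_smul a)).aestronglyMeasurable
  have p3 : Tendsto (fun n : ℕ => (((n:ℝ) + 2)⁻¹) ^ N *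
      ∫ x, u x * phi N (((n:ℝ) + 2)⁻¹ • x)) atTop (𝓝 0) := by
    have h0 : Tendsto (fun n : ℕ => (((n:ℝ) + 2)⁻¹) ^ N) atTop (𝓝 0) := by
      have := (tendsto_inv_atTop_zero.comp t).pow N
      rwa [zero_pow hN.ne'] at this
    refine h0.zero_mul_isBoundedUnder_le ?_
    refine isBoundedUnder_of ⟨C * ∫ x, |u x|, fun n => ?_⟩
    simp only [Function.comp]
    refine (norm_integral_le_integral_norm _).trans ?_
    rw [← integral_const_mul]
    refine integral_mono (int _).norm (hu.abs.const_mul C) fun x => ?_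
    simp only [norm_mul, Real.norm_eq_abs]
    rw [mul_comm]
    gcongr
    exact hC _
  have p4 := p2.sub p3
  rw [sub_zero] at p4
  refine p4.congr fun n => ?_
  have hn : (0:ℝ) < (n:ℝ) + 2 := by positivity
  have hfin : Module.finrank ℝ (EE N) = N := by simp
  simp only [Function.comp, hfin, smul_eq_mul]
  rw [← integral_const_mul, ← integral_const_mul, ← integral_sub]
  · refine integral_congr_ae (Eventually.of_forall fun x => ?_)
    simp only [fderiv_chi, phi]
    by_cases hx : x = 0
    · simp [hx]
    have hx' : ‖x‖ ≠ 0 := norm_ne_zero_iff.2 hx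
    simp only [norm_smul, Real.norm_eq_abs, abs_of_pos hn, abs_of_pos (inv_pos.2 hn),
      _root_.sub_apply, _root_.smul_apply, map_smul, smul_eq_mul]
    generalize fderiv ℝ (psi N) (((n:ℝ) + 2) • x) x = A
    generalize fderiv ℝ (psi N) (((n:ℝ) + 2)⁻¹ • x) x = B
    rw [mul_pow, mul_pow, inv_pow]
    have hω' := hω.ne'
    field_simp
  · refine ((int ((n:ℝ)+2)).const_mul ((((n:ℝ)+2)^N))).congr (Eventually.of_forall fun x => ?_)
    simp only
    field_simp
  · exact (int _).const_mul _

end part3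

section part4

open scoped Topology ContDiff

theorem cs_integrable {N : ℕ} {f g : EE N → ℝ} (hf : Continuous f) (hfc : HasCompactSupport f)
    (h0 : (0 : EE N) ∉ tsupport f) (hg : ∀ x, x ≠ 0 → ContinuousAt g x) :
    Integrable (fun x => f x * g x) := by
  refine Continuous.integrable_of_hasCompactSupport ?_ hfc.mul_right
  rw [continuous_iff_continuousAt]
  intro x
  by_cases hx : x = 0
  · subst hx
    rw [notMem_tsupport_iff_eventuallyEq] at h0
    have : (fun x => f x * g x) =ᶠ[𝓝 0] fun _ => 0 := by
      filter_upwards [h0] with y hy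
      simp [hy]
    exact continuousAt_const.congr this.symm
  · exact hf.continuousAt.mul (hg x hx)

theorem ae_ne_zero {N : ℕ} (hN : 0 < N) : ∀ᵐ x : EE N, x ≠ 0 := by
  have : Nonempty (Fin N) := ⟨⟨0, hN⟩⟩
  exact Measure.ae_ne volume 0

theorem aesm_off {N : ℕ} (hN : 0 < N) {g : EE N → ℝ} (hg : ∀ x, x ≠ 0 → ContinuousAt g x) :
    AEStronglyMeasurable g volume := by
  have : Nonempty (Fin N) := ⟨⟨0, hN⟩⟩
  have h : ContinuousOn g {0}ᶜ := fun x hx => (hg x hx).continuousWithinAt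
  have h2 := h.aestronglyMeasurable (μ := volume) (measurableSet_singleton _).compl
  rwa [Measure.restrict_eq_self_of_ae_mem (s := ({0} : Set (EE N))ᶜ) (ae_ne_zero hN)] at h2

theorem wint {N k : ℕ} (hN : 0 < N) (hk : 1 ≤ k) (hkN : k ≤ N) {f : EE N → ℝ}
    (hf : Continuous f) (hi : Integrable f) :
    Integrable (fun x => f x * (‖x‖ ^ k / ‖x‖ ^ N)) := by
  have hne : Nonempty (Fin N) := ⟨⟨0, hN⟩⟩
  have hm : AEStronglyMeasurable (fun x : EE N => f x * (‖x‖ ^ k / ‖x‖ ^ N)) volume := by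
    refine aesm_off hN fun x hx => ?_
    refine hf.continuousAt.mul ((by fun_prop : ContinuousAt (fun x : EE N => ‖x‖ ^ k) x).div
      (by fun_prop) (pow_ne_zero _ (norm_ne_zero_iff.2 hx)))
  rw [← integrableOn_univ, ← Set.union_compl_self (ball (0 : EE N) 1), integrableOn_union]
  constructor
  · have h1 : IntegrableOn (fun x : EE N => (fun r : ℝ => r ^ k / r ^ N) ‖x‖) (ball (0 : EE N) 1) := by
      refine (integrableOn_fun_norm_addHaar volume (f := fun r : ℝ => r ^ k / r ^ N)).2 ?_
      have h2 : IntegrableOn (fun y : ℝ => y ^ (k - 1)) (Set.Ioo 0 1) :=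
        ((continuous_pow (k - 1)).integrableOn_Icc (a := 0) (b := 1)).mono_set Set.Ioo_subset_Icc_self
      refine h2.congr_fun (fun y hy => ?_) measurableSet_Ioo
      have hy' : y ≠ 0 := ne_of_gt hy.1
      obtain ⟨M, rfl⟩ := Nat.exists_eq_succ_of_ne_zero hN.ne'
      obtain ⟨l, rfl⟩ := Nat.exists_eq_succ_of_ne_zero (by omega : k ≠ 0)
      simp
      field_simp
      ring
    obtain ⟨C, hC⟩ := (isCompact_closedBall (0 : EE N) 1).exists_bound_of_continuousOn
      hf.continuousOn
    refine Integrable.mono' (h1.const_mul C) hm.restrict ?_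
    filter_upwards [ae_restrict_mem measurableSet_ball] with x hx
    rw [norm_mul, Real.norm_of_nonneg (by positivity : (0:ℝ) ≤ ‖x‖ ^ k / ‖x‖ ^ N)]
    gcongr
    exact hC x (ball_subset_closedBall hx)
  · refine Integrable.mono' hi.norm.integrableOn hm.restrict ?_
    filter_upwards [ae_restrict_mem measurableSet_ball.compl] with x hx
    have hx1 : 1 ≤ ‖x‖ := by simpa using hx
    rw [norm_mul, Real.norm_of_nonneg (by positivity : (0:ℝ) ≤ ‖x‖ ^ k / ‖x‖ ^ N)]
    have : ‖x‖ ^ k / ‖x‖ ^ N ≤ 1 :=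
      div_le_one_of_le₀ (pow_le_pow_right₀ hx1 hkN) (by positivity)
    nlinarith [norm_nonneg (f x)]

theorem ibp_chi {N : ℕ} (n : ℕ) {V : EE N → ℝ} (v : EE N)
    (hV : ∀ x, x ≠ 0 → ContDiffAt ℝ 1 V x) :
    Integrable (fun x => chi N n x * fderiv ℝ V x v) ∧
    Integrable (fun x => fderiv ℝ (chi N n) x v * V x) ∧
    ∫ x, chi N n x * fderiv ℝ V x v = - ∫ x, fderiv ℝ (chi N n) x v * V x := by
  have hVc : ∀ x, x ≠ 0 → ContinuousAt V x := fun x hx => (hV x hx).continuousAt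
  have hVd : ∀ x, x ≠ 0 → ContinuousAt (fun x => fderiv ℝ V x v) x := fun x hx =>
    ((hV x hx).fderiv_right (m := 0) (by simp)).continuousAt.clm_apply continuousAt_const
  have i1 := cs_integrable (chi_smooth N n).continuous (chi_compact N n) (chi_zero_near N n) hVc
  have i2 := cs_integrable (chi_smooth N n).continuous (chi_compact N n) (chi_zero_near N n) hVd
  have i3 := cs_integrable (f := fun x => fderiv ℝ (chi N n) x v)
    (((chi_smooth N n).continuous_fderiv (by simp)).clm_apply continuous_const)
    ((chi_compact N n).fderiv_apply ℝ v)
    (fun h => chi_zero_near N n (tsupport_fderiv_apply_subset ℝ v h)) hVc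
  refine ⟨i2, i3, ?_⟩
  refine integral_mul_fderiv_eq_neg_fderiv_mul_of_integrable i3 i2 i1 (fun x _ =>
    (chi_smooth N n).differentiable (by simp) x) fun x hx => ?_
  have hx0 : x ≠ 0 := by rintro rfl; exact chi_zero_near N n hx
  exact (hV x hx0).differentiableAt (by simp)

theorem ibp_lim {N : ℕ} (hN : 0 < N) {V : Fin N → EE N → ℝ}
    (hV : ∀ j x, x ≠ 0 → ContDiffAt ℝ 1 (V j) x)
    (hD : Integrable fun x => ∑ j, fderiv ℝ (V j) x (eb j)) {L : ℝ}
    (hL : Tendsto (fun n => ∫ x, ∑ j, fderiv ℝ (chi N n) x (eb j) * V j x) atTop (𝓝 L)) :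
    ∫ x, ∑ j, fderiv ℝ (V j) x (eb j) = - L := by
  have h1 : Tendsto (fun n => ∫ x, chi N n x * ∑ j, fderiv ℝ (V j) x (eb j)) atTop
      (𝓝 (∫ x, ∑ j, fderiv ℝ (V j) x (eb j))) := by
    refine tendsto_integral_of_dominated_convergence
      (fun x => ‖∑ j, fderiv ℝ (V j) x (eb j)‖) ?_ hD.norm ?_ ?_
    · intro n
      exact (chi_smooth N n).continuous.aestronglyMeasurable.mul hD.aestronglyMeasurable
    · intro n
      refine Eventually.of_forall fun x => ?_
      rw [norm_mul]
      have := chi_abs_le N n x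
      rw [Real.norm_eq_abs]
      nlinarith [norm_nonneg (∑ j, fderiv ℝ (V j) x (eb j))]
    · filter_upwards [ae_ne_zero hN] with x hx
      refine tendsto_const_nhds.congr' ?_
      filter_upwards [chi_eventually N hx] with n hn
      rw [hn.1, one_mul]
  refine tendsto_nhds_unique h1 (hL.neg.congr fun n => ?_)
  simp_rw [Finset.mul_sum]
  rw [integral_finsetSum _ fun j _ => (ibp_chi n (eb j) (hV j)).2.1,
    integral_finsetSum _ fun j _ => (ibp_chi n (eb j) (hV j)).1, ← Finset.sum_neg_distrib]
  exact Finset.sum_congr rfl fun j _ => ((ibp_chi n (eb j) (hV j)).2.2).symm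

end part4

section part5

open scoped Topology ContDiff

theorem ip_cont {N k : ℕ} {x : EE N} {A B : EE N → (EE N) [×k]→L[ℝ] ℝ}
    (hA : ContinuousAt A x) (hB : ContinuousAt B x) :
    ContinuousAt (fun y => ip N k (A y) (B y)) x := by
  unfold ip
  refine tendsto_finsetSum _ fun i _ => ?_
  exact ((ContinuousMultilinearMap.apply ℝ (fun _ : Fin k => EE N) ℝ _).continuous.continuousAt.comp
    hA).mul ((ContinuousMultilinearMap.apply ℝ (fun _ : Fin k => EE N) ℝ _).continuous.continuousAt.comp
    hB)

theorem norm_curryLeft_le {N k : ℕ} (A : (EE N) [×(k+1)]→L[ℝ] ℝ) (v : EE N) :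
    ‖A.curryLeft v‖ ≤ ‖A‖ * ‖v‖ := by
  have := A.curryLeft.le_opNorm v
  rwa [ContinuousMultilinearMap.curryLeft_norm] at this

theorem ip_int {N k : ℕ} (hN : 0 < N) (hk : 1 ≤ k) (hkN : k ≤ N)
    {A F : EE N → (EE N) [×k]→L[ℝ] ℝ} (hA : Continuous A) (hAi : Integrable fun x => ‖A x‖)
    (hF : Good N k F) : Integrable (fun x => ip N k (A x) (F x)) := by
  obtain ⟨C, hC0, hC⟩ := hF.bound
  have h1 := (wint hN hk hkN hA.norm hAi).const_mul ((N:ℝ)^k * C)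
  refine h1.mono' (aesm_off hN fun x hx => ip_cont hA.continuousAt
    (hF.differentiableAt hx).continuousAt) ?_
  filter_upwards [ae_ne_zero hN] with x hx
  refine (abs_ip_le N k _ _).trans ?_
  have := hC x hx
  calc _ ≤ (N:ℝ)^k * (‖A x‖ * (C * (‖x‖ ^ k / ‖x‖ ^ N))) := by gcongr
    _ = _ := by ring

/-- vector field used in the integration by parts -/
def VF {N k : ℕ} (u : EE N → ℝ) (F : EE N → (EE N) [×(k+1)]→L[ℝ] ℝ) (j : Fin N) (x : EE N) : ℝ :=
  ip N k (iteratedFDeriv ℝ k u x) ((F x).curryLeft (eb j))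

theorem u_cont {N k : ℕ} (hkN : k ≤ N) {u : EE N → ℝ} (hu : ContDiff ℝ (N : ℕ∞) u) :
    Continuous (iteratedFDeriv ℝ k u) :=
  hu.continuous_iteratedFDeriv (by exact_mod_cast hkN)

theorem u_contDiff {N k : ℕ} (hkN : k + 1 ≤ N) {u : EE N → ℝ} (hu : ContDiff ℝ (N : ℕ∞) u) :
    ContDiff ℝ 1 (iteratedFDeriv ℝ k u) :=
  hu.iteratedFDeriv_right (by rw [add_comm]; exact_mod_cast hkN)

theorem VF_smooth {N k : ℕ} (hkN : k + 1 ≤ N) {u : EE N → ℝ} (hu : ContDiff ℝ (N : ℕ∞) u)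
    {F : EE N → (EE N) [×(k+1)]→L[ℝ] ℝ} (hF : Good N (k+1) F) (j : Fin N) (x : EE N) (hx : x ≠ 0) :
    ContDiffAt ℝ 1 (VF u F j) x := by
  refine ContDiffAt.ip_contr (u_contDiff hkN hu).contDiffAt ?_
  have h1 : ContDiffAt ℝ 1 F x := (hF.smooth x hx).of_le (by exact_mod_cast le_top)
  exact (curryL (k := k) (eb j)).contDiff.contDiffAt.comp x h1

theorem VF_div {N k : ℕ} (hkN : k + 1 ≤ N) {u : EE N → ℝ} (hu : ContDiff ℝ (N : ℕ∞) u)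
    {F : EE N → (EE N) [×(k+1)]→L[ℝ] ℝ} (hF : Good N (k+1) F) (x : EE N) (hx : x ≠ 0) :
    ∑ j, fderiv ℝ (VF u F j) x (eb j) =
      ip N (k+1) (iteratedFDeriv ℝ (k+1) u x) (F x) + ip N k (iteratedFDeriv ℝ k u x) (divT F x) := by
  rw [ip_succ, divT, ip_sum_right, ← Finset.sum_add_distrib]
  refine Finset.sum_congr rfl fun j _ => ?_
  have hd : DifferentiableAt ℝ (fun y => curryL (k := k) (eb j) (F y)) x :=
    (curryL (k := k) (eb j)).differentiableAt.comp x (hF.differentiableAt hx)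
  have h := fderiv_ip (((u_contDiff hkN hu).differentiable (by simp)) x) hd (eb j)
  have e : fderiv ℝ (fun y => curryL (k := k) (eb j) (F y)) x (eb j) =
      (fderiv ℝ F x (eb j)).curryLeft (eb j) := by
    have := ((curryL (k := k) (eb j)).hasFDerivAt.comp x (hF.differentiableAt hx).hasFDerivAt).fderiv
    have h2 : fderiv ℝ (fun y => curryL (k := k) (eb j) (F y)) x = _ := this
    rw [h2]; rfl
  rw [e] at h
  exact h

theorem inner_eb {N : ℕ} (x : EE N) (j : Fin N) : inner ℝ x (eb j) = x j := by
  simpa using EuclideanSpace.inner_single_right j (1:ℝ) x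

theorem rep_step {N k : ℕ} (hN : 0 < N) (hk : k ≠ 0) (hkN : k + 1 ≤ N) {u : EE N → ℝ}
    (hu : ContDiff ℝ (N : ℕ∞) u)
    (hint : ∀ k ≤ N, Integrable (fun x => ‖iteratedFDeriv ℝ k u x‖))
    {F : EE N → (EE N) [×(k+1)]→L[ℝ] ℝ} (hF : Good N (k+1) F) :
    ∫ x, ip N (k+1) (iteratedFDeriv ℝ (k+1) u x) (F x) =
      - ∫ x, ip N k (iteratedFDeriv ℝ k u x) (divT F x) := by
  have i1 := ip_int hN (by omega) hkN (u_cont hkN hu) (hint _ hkN) hF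
  have i2 := ip_int hN (by omega) (by omega) (u_cont (k := k) (by omega) hu)
    (hint _ (by omega)) hF.div
  have hae : (fun x => ∑ j, fderiv ℝ (VF u F j) x (eb j)) =ᵐ[volume] fun x =>
      ip N (k+1) (iteratedFDeriv ℝ (k+1) u x) (F x) +
        ip N k (iteratedFDeriv ℝ k u x) (divT F x) := by
    filter_upwards [ae_ne_zero hN] with x hx
    exact VF_div hkN hu hF x hx
  obtain ⟨C, hC0, hC⟩ := hF.bound
  obtain ⟨C', hC'0, hC'⟩ := chi_bound N
  have h := ibp_lim hN (VF_smooth hkN hu hF) ((i1.add i2).congr hae.symm) (L := 0) (by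
    have h0 : ∫ x : EE N, (0:ℝ) = 0 := by simp
    rw [← h0]
    refine tendsto_integral_of_dominated_convergence
      (fun x => (N * ((N:ℝ)^k * (C * C'))) * (‖iteratedFDeriv ℝ k u x‖ * (‖x‖ ^ k / ‖x‖ ^ N)))
      ?_ ?_ ?_ ?_
    · intro n
      exact (integrable_finsetSum _ fun j _ =>
        (ibp_chi n (eb j) (VF_smooth hkN hu hF j)).2.1).aestronglyMeasurable
    · exact (wint hN (by omega) (by omega) (u_cont (by omega) hu).norm
        (hint k (by omega))).const_mul _
    · intro n
      filter_upwards [ae_ne_zero hN] with x hx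
      refine (norm_sum_le _ _).trans ?_
      have : ∀ j ∈ (Finset.univ : Finset (Fin N)), ‖fderiv ℝ (chi N n) x (eb j) * VF u F j x‖ ≤
          ((N:ℝ)^k * (C * C')) * (‖iteratedFDeriv ℝ k u x‖ * (‖x‖ ^ k / ‖x‖ ^ N)) := by
        intro j _
        have a1 : ‖fderiv ℝ (chi N n) x (eb j)‖ ≤ ‖fderiv ℝ (chi N n) x‖ := by
          have := (fderiv ℝ (chi N n) x).le_opNorm (eb j)
          rwa [norm_single_one, mul_one] at this
        have a2 : ‖(F x).curryLeft (eb j)‖ ≤ C * (‖x‖ ^ (k+1) / ‖x‖ ^ N) := by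
          have := norm_curryLeft_le (F x) (eb j)
          rw [norm_single_one, mul_one] at this
          exact this.trans (hC x hx)
        have a3 : ‖VF u F j x‖ ≤ (N:ℝ)^k * (‖iteratedFDeriv ℝ k u x‖ *
            (C * (‖x‖ ^ (k+1) / ‖x‖ ^ N))) := by
          refine (abs_ip_le N k _ _).trans ?_
          gcongr
        have a4 := hC' n x
        rw [norm_mul]
        calc _ ≤ ‖fderiv ℝ (chi N n) x‖ * ((N:ℝ)^k * (‖iteratedFDeriv ℝ k u x‖ *
            (C * (‖x‖ ^ (k+1) / ‖x‖ ^ N)))) := by gcongr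
          _ = (‖x‖ * ‖fderiv ℝ (chi N n) x‖) * ((N:ℝ)^k * (‖iteratedFDeriv ℝ k u x‖ *
            (C * (‖x‖ ^ k / ‖x‖ ^ N)))) := by ring
          _ ≤ C' * ((N:ℝ)^k * (‖iteratedFDeriv ℝ k u x‖ *
            (C * (‖x‖ ^ k / ‖x‖ ^ N)))) := by gcongr
          _ = _ := by ring
      refine (Finset.sum_le_sum this).trans (le_of_eq ?_)
      simp
      ring
    · filter_upwards [ae_ne_zero hN] with x hx
      refine tendsto_const_nhds.congr' ?_
      filter_upwards [chi_eventually N hx] with n hn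
      simp [hn.2])
  rw [integral_congr_ae hae, integral_add i1 i2, neg_zero] at h
  linarith

theorem rep_base {N : ℕ} (hN : 0 < N) {u : EE N → ℝ}
    (hu : ContDiff ℝ (N : ℕ∞) u)
    (hint : ∀ k ≤ N, Integrable (fun x => ‖iteratedFDeriv ℝ k u x‖))
    {F : EE N → (EE N) [×(0+1)]→L[ℝ] ℝ} (hF : Good N (0+1) F) :
    ∫ x, ip N (0+1) (iteratedFDeriv ℝ (0+1) u x) (F x) =
      - (ip N (0+1) (iteratedFDeriv ℝ (0+1) (logNorm N) (eb ⟨0, hN⟩)) (F (eb ⟨0, hN⟩)) *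
        (omegaSphere N * u 0)) := by
  have hui : Integrable u := by
    have := hint 0 (by omega)
    simp only [norm_iteratedFDeriv_zero] at this
    exact (integrable_norm_iff hu.continuous.aestronglyMeasurable).1 this
  let G : EE N → EE N →ₗ[ℝ] ℝ := fun y =>
    { toFun := fun v => (F y).curryLeft v Fin.elim0
      map_add' := by intros; simp
      map_smul' := by intros; simp }
  have hG : ∀ y v, G y v = F y (fun _ => v) := by
    intro y v
    change F y (Fin.cons v Fin.elim0) = _
    congr 1
    funext j
    have hj : j = 0 := Subsingleton.elim (α := Fin 1) j 0
    rw [hj]; rfl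
  have homog : ∀ t : ℝ, 0 < t → ∀ x, x ≠ 0 → ∀ v, t ^ N * G (t • x) v = t * G x v := by
    intro t ht x hx v
    have := congrArg (fun A => A (fun _ => v)) (hF.homog t ht x hx)
    simpa [hG] using this
  have equiv : ∀ (R : EE N ≃ₗᵢ[ℝ] EE N) (x : EE N) (hx : x ≠ 0) (v : EE N),
      G (R x) (R v) = G x v := by
    intro R x hx v
    rw [hG, hG]
    exact hF.equiv R x hx (fun _ => v)
  set e0 : EE N := eb ⟨0, hN⟩ with he0
  set c := G e0 e0 with hc
  have hcv := covec hN G homog equiv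
  have hdiv : ∀ x, x ≠ 0 → divT F x = 0 := by
    intro x hx
    ext v
    have := covec_div_free hN G homog equiv x hx
    rw [_root_.zero_apply, ← this]
    simp only [divT, _root_.sum_apply]
    refine Finset.sum_congr rfl fun j _ => ?_
    have e : (fun y => G y (eb j)) = fun y => F y (fun _ => eb j) := by
      funext y; exact hG y _
    rw [e, fderiv_eval (hF.differentiableAt hx), ContinuousMultilinearMap.curryLeft_apply]
    congr 1
    funext i
    have hi : i = 0 := Subsingleton.elim (α := Fin 1) i 0
    rw [hi]; rfl
  have hip0 : ∀ (A B : (EE N) [×0]→L[ℝ] ℝ), ip N 0 A B = A Fin.elim0 * B Fin.elim0 := by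
    intro A B
    simp only [ip, Finset.univ_unique, Finset.sum_singleton]
    congr 2 <;> exact Subsingleton.elim _ _
  have hVF : ∀ j x, x ≠ 0 → VF u F j x = u x * (c * (inner ℝ x (eb j) / ‖x‖ ^ N)) := by
    intro j x hx
    rw [VF, hip0, ← hcv x hx]
    rfl
  have i1 := ip_int hN (by omega) (by omega) (u_cont (k := 0+1) (by omega) hu)
    (hint (0+1) (by omega)) hF
  have hae : (fun x => ∑ j, fderiv ℝ (VF u F j) x (eb j)) =ᵐ[volume] fun x =>
      ip N (0+1) (iteratedFDeriv ℝ (0+1) u x) (F x) := by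
    filter_upwards [ae_ne_zero hN] with x hx
    rw [VF_div (by omega) hu hF x hx, hdiv x hx, hip0]
    simp
  have h := ibp_lim hN (VF_smooth (by omega) hu hF) (i1.congr hae.symm)
    (L := c * (omegaSphere N * u 0)) (by
    refine ((chi_peak hN hui hu.continuous).const_mul c).congr fun n => ?_
    rw [← integral_const_mul]
    refine integral_congr_ae ?_
    filter_upwards [ae_ne_zero hN] with x hx
    have hs : fderiv ℝ (chi N n) x x = ∑ j, x j * fderiv ℝ (chi N n) x (eb j) := by
      have : x = ∑ j, x j • (eb j : EE N) := by
        simpa using ((EuclideanSpace.basisFun (Fin N) ℝ).sum_repr x).symm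
      conv_lhs => rw [this]
      rw [map_sum]
      refine Finset.sum_congr rfl fun j _ => ?_
      conv_lhs => rw [← this]
      simp
    rw [hs, Finset.sum_div, Finset.mul_sum, Finset.mul_sum]
    refine Finset.sum_congr rfl fun j _ => ?_
    rw [hVF j x hx, inner_eb]
    ring)
  rw [integral_congr_ae hae] at h
  rw [h]
  congr 2
  have he : e0 ≠ 0 := by rw [he0]; simp
  rw [ip_succ, hc]
  have hlog : ∀ j, (iteratedFDeriv ℝ (0+1) (logNorm N) e0).curryLeft (eb j) Fin.elim0 =
      inner ℝ e0 (eb j) := by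
    intro j
    have h1 := ((hasFDerivAt_norm' he).log (norm_ne_zero_iff.2 he)).fderiv
    have h2 : fderiv ℝ (logNorm N) e0 = _ := h1
    have h3 : (iteratedFDeriv ℝ (0+1) (logNorm N) e0).curryLeft (eb j) Fin.elim0 =
      fderiv ℝ (logNorm N) e0 (eb j) := by
      rw [ContinuousMultilinearMap.curryLeft_apply]
      exact iteratedFDeriv_one_apply _
    rw [h3, h2, he0]
    simp
  simp only [hip0, hlog]
  have hsum : ∀ j, inner ℝ e0 (eb j) = if j = ⟨0, hN⟩ then (1:ℝ) else 0 := by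
    intro j
    rw [inner_eb, he0]
    simp [Pi.single_apply]
  simp only [hsum, ite_mul, one_mul, zero_mul, Finset.sum_ite_eq', Finset.mem_univ, if_true]
  rfl

theorem rep {N : ℕ} (hN : 0 < N) {u : EE N → ℝ}
    (hu : ContDiff ℝ (N : ℕ∞) u)
    (hint : ∀ k ≤ N, Integrable (fun x => ‖iteratedFDeriv ℝ k u x‖)) (k : ℕ) :
    ∀ (_ : k + 1 ≤ N) (F : EE N → (EE N) [×(k+1)]→L[ℝ] ℝ) (_ : Good N (k+1) F),
    ∫ x, ip N (k+1) (iteratedFDeriv ℝ (k+1) u x) (F x) =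
      - (ip N (k+1) (iteratedFDeriv ℝ (k+1) (logNorm N) (eb ⟨0, hN⟩)) (F (eb ⟨0, hN⟩)) *
        (omegaSphere N * u 0)) := by
  induction k with
  | zero => exact fun _ F hF => rep_base hN hu hint hF
  | succ k ih =>
    intro hk F hF
    rw [rep_step hN (by omega) hk hu hint hF, ih (by omega) _ hF.div,
      log_ibp hN (by omega) hF _ (by simp)]
    ring

end part5

section part6

open scoped Topology ContDiff

/-- the extremal kernel -/
def TT (N : ℕ) (x : EE N) : (EE N) [×N]→L[ℝ] ℝ := ‖x‖ ^ N • iteratedFDeriv ℝ N (logNorm N) x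

theorem eb_ne {N : ℕ} (j : Fin N) : (eb j : EE N) ≠ 0 := by simp

theorem TT_e0 {N : ℕ} (j : Fin N) : TT N (eb j) = iteratedFDeriv ℝ N (logNorm N) (eb j) := by
  unfold TT
  rw [norm_single_one, one_pow, one_smul]

theorem ell_eq {N : ℕ} (hN : 0 < N) :
    ell N hN = ip N N (TT N (eb ⟨0, hN⟩)) (TT N (eb ⟨0, hN⟩)) := by
  rw [TT_e0]
  unfold ell ip mixedPartial
  exact Finset.sum_congr rfl fun i _ => by rw [sq]

theorem rep_log {N : ℕ} (hN : 0 < N) {u : EE N → ℝ} (hu : ContDiff ℝ (N : ℕ∞) u)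
    (hint : ∀ k ≤ N, Integrable (fun x => ‖iteratedFDeriv ℝ k u x‖)) :
    ∫ x, ip N N (iteratedFDeriv ℝ N u x) (TT N x) = - (ell N hN * (omegaSphere N * u 0)) := by
  rw [ell_eq]
  conv_rhs => rw [TT_e0 ⟨0, hN⟩]
  have key : ∀ (k : ℕ) (_ : N = k + 1), ∀ F : EE N → (EE N) [×N]→L[ℝ] ℝ, Good N N F →
      ∫ x, ip N N (iteratedFDeriv ℝ N u x) (F x) =
      - (ip N N (iteratedFDeriv ℝ N (logNorm N) (eb ⟨0, hN⟩)) (F (eb ⟨0, hN⟩)) *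
        (omegaSphere N * u 0)) := by
    rintro k rfl F hF
    exact rep hN hu hint k le_rfl F hF
  have := key (N - 1) (by omega) (TT N) (good_log hN)
  rwa [TT_e0] at this

theorem exists_rot {N : ℕ} {a b : EE N} (h : ‖a‖ = ‖b‖) : ∃ R : EE N ≃ₗᵢ[ℝ] EE N, R a = b :=
  ⟨(Submodule.span ℝ {a - b})ᗮ.reflection, Submodule.reflection_sub (v := a) (w := b) h⟩

theorem ip_TT {N : ℕ} (hN : 0 < N) {x : EE N} (hx : x ≠ 0) :
    ip N N (TT N x) (TT N x) = ell N hN := by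
  have hG : Good N N (TT N) := good_log hN
  set e0 : EE N := eb ⟨0, hN⟩ with he0
  have hn : 0 < ‖x‖ := norm_pos_iff.2 hx
  have hθ : ‖‖x‖⁻¹ • x‖ = ‖e0‖ := by
    rw [he0, norm_single_one, norm_smul, norm_inv, norm_norm, inv_mul_cancel₀ hn.ne']
  have hθ0 : ‖x‖⁻¹ • x ≠ 0 := smul_ne_zero (inv_ne_zero hn.ne') hx
  have h1 := hG.homog ‖x‖ hn _ hθ0
  rw [smul_smul, mul_inv_cancel₀ hn.ne', one_smul] at h1
  have h2 : TT N x = TT N (‖x‖⁻¹ • x) := by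
    have h3 := congrArg (fun A => (‖x‖ ^ N)⁻¹ • A) h1
    simpa only [smul_smul, inv_mul_cancel₀ (pow_ne_zero N hn.ne'), one_smul] using h3
  obtain ⟨R, hR⟩ := exists_rot hθ.symm
  have he : e0 ≠ 0 := eb_ne _
  rw [h2, ell_eq, ← hR]
  exact ip_inv N N R _ _ _ _ (hG.equiv R e0 he) (hG.equiv R e0 he)

theorem ray_deriv {N k : ℕ} {f : EE N → ℝ} {x : EE N} {r : ℝ}
    (hf : DifferentiableAt ℝ (iteratedFDeriv ℝ k f) (r • x)) (w : Fin k → EE N) :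
    HasDerivAt (fun s : ℝ => iteratedFDeriv ℝ k f (s • x) w)
      (iteratedFDeriv ℝ (k+1) f (r • x) (Fin.cons x w)) r := by
  have h1 : HasDerivAt (fun s : ℝ => s • x) x r := by
    simpa using (hasDerivAt_id r).smul_const x
  have h2 := hf.hasFDerivAt.comp_hasDerivAt r h1
  have h3 := (ContinuousMultilinearMap.apply ℝ (fun _ : Fin k => EE N) ℝ w).hasFDerivAt.comp_hasDerivAt
    r h2
  exact h3

theorem log_radial {N : ℕ} {x : EE N} (hx : x ≠ 0) (k : ℕ) :
    iteratedFDeriv ℝ (k+1) (logNorm N) x (fun _ => x) ≠ 0 := by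
  have h1x : (1:ℝ) • x ≠ 0 := by simpa using hx
  induction k with
  | zero =>
    have h2 : fderiv ℝ (logNorm N) x = _ :=
      ((hasFDerivAt_norm' hx).log (norm_ne_zero_iff.2 hx)).fderiv
    have h3 : iteratedFDeriv ℝ (0+1) (logNorm N) x (fun _ => x) = fderiv ℝ (logNorm N) x x :=
      iteratedFDeriv_one_apply _
    rw [h3, h2]
    simp [hx]
  | succ k ih =>
    have h1 := ray_deriv ((logD_smooth (k+1) h1x).differentiableAt (by simp)) (fun _ => x)
    have e : (Fin.cons x (fun _ => x) : Fin (k+1+1) → EE N) = fun _ => x := by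
      funext i
      refine Fin.cases ?_ (fun j => ?_) i <;> simp
    rw [one_smul, e] at h1
    have h2 : HasDerivAt (fun s : ℝ => (s ^ (k+1))⁻¹ * iteratedFDeriv ℝ (k+1) (logNorm N) x (fun _ => x))
        (-((k:ℝ)+1) * iteratedFDeriv ℝ (k+1) (logNorm N) x (fun _ => x)) 1 := by
      have := ((hasDerivAt_pow (k+1) (1:ℝ)).inv (by simp)).mul_const
        (iteratedFDeriv ℝ (k+1) (logNorm N) x (fun _ => x))
      simpa using this
    have h3 : (fun s : ℝ => iteratedFDeriv ℝ (k+1) (logNorm N) (s • x) (fun _ => x)) =ᶠ[𝓝 1]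
        (fun s : ℝ => (s ^ (k+1))⁻¹ * iteratedFDeriv ℝ (k+1) (logNorm N) x (fun _ => x)) := by
      filter_upwards [lt_mem_nhds (zero_lt_one : (0:ℝ) < 1)] with s hs
      rw [← logD_homog (k+1) (by omega) s hs x hx]
      have : s ^ (k+1) ≠ 0 := pow_ne_zero _ (ne_of_gt hs)
      simp
      field_simp
    have h4 := h1.unique (h2.congr_of_eventuallyEq h3)
    rw [h4]
    refine mul_ne_zero ?_ ih
    have : (0:ℝ) < (k:ℝ) + 1 := by positivity
    exact neg_ne_zero.2 this.ne'

theorem ip_self_nonneg {N k : ℕ} (A : (EE N) [×k]→L[ℝ] ℝ) : 0 ≤ ip N k A A :=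
  Finset.sum_nonneg fun _ _ => mul_self_nonneg _

theorem ell_pos {N : ℕ} (hN : 0 < N) : 0 < ell N hN := by
  rw [ell_eq]
  refine (ip_self_nonneg _).lt_of_ne' ?_
  intro h
  unfold ip at h
  rw [Finset.sum_eq_zero_iff_of_nonneg fun i _ => mul_self_nonneg _] at h
  have h1 := h (fun _ => ⟨0, hN⟩) (Finset.mem_univ _)
  rw [mul_self_eq_zero, TT_e0] at h1
  obtain ⟨k, rfl⟩ := Nat.exists_eq_succ_of_ne_zero hN.ne'
  exact log_radial (eb_ne _) k h1

end part6

section part7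

open scoped Topology ContDiff

theorem sup_bound {N : ℕ} (hN : 0 < N) : ∃ C : ℝ, 0 ≤ C ∧ ∀ v : EE N → ℝ, ContDiff ℝ (N : ℕ∞) v →
    (∀ k ≤ N, Integrable (fun x => ‖iteratedFDeriv ℝ k v x‖)) →
    |v 0| ≤ C * ∫ x, ‖iteratedFDeriv ℝ N v x‖ := by
  obtain ⟨C, hC0, hC⟩ := (good_log hN).bound
  have hl := ell_pos hN
  have hω := omega_pos hN
  refine ⟨(ell N hN * omegaSphere N)⁻¹ * (N ^ N * C), by positivity, fun v hv hint => ?_⟩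
  have h1 := rep_log hN hv hint
  have h2 : |∫ x, ip N N (iteratedFDeriv ℝ N v x) (TT N x)| ≤
      ∫ x, ((N:ℝ) ^ N * C) * ‖iteratedFDeriv ℝ N v x‖ := by
    rw [← Real.norm_eq_abs]
    refine norm_integral_le_of_norm_le ((hint N le_rfl).const_mul _) ?_
    filter_upwards [ae_ne_zero hN] with x hx
    refine (abs_ip_le N N _ _).trans ?_
    have h3 : ‖TT N x‖ ≤ C := by
      have := hC x hx
      rwa [div_self (pow_ne_zero _ (norm_ne_zero_iff.2 hx)), mul_one] at this
    calc _ ≤ (N:ℝ) ^ N * (‖iteratedFDeriv ℝ N v x‖ * C) := by gcongr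
      _ = _ := by ring
  rw [h1, integral_const_mul, abs_neg, abs_mul, abs_mul, abs_of_pos hl, abs_of_pos hω] at h2
  rw [mul_assoc, inv_mul_eq_div, le_div_iff₀ (by positivity)]
  linarith

/-- sum of all derivative norms -/
def gsum {N : ℕ} (u : EE N → ℝ) (x : EE N) : ℝ :=
  ∑ k ∈ Finset.range (N + 1), ‖iteratedFDeriv ℝ k u x‖

theorem gsum_int {N : ℕ} {u : EE N → ℝ}
    (hint : ∀ k ≤ N, Integrable (fun x => ‖iteratedFDeriv ℝ k u x‖)) : Integrable (gsum u) :=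
  integrable_finsetSum _ fun k hk => hint k (by simpa [Nat.lt_succ_iff] using hk)

theorem local_bound {N : ℕ} (hN : 0 < N) {u : EE N → ℝ}
    (hu : ContDiff ℝ (N : ℕ∞) u)
    (hint : ∀ k ≤ N, Integrable (fun x => ‖iteratedFDeriv ℝ k u x‖)) :
    ∃ C : ℝ, ∀ y, |u y| ≤ C * ∫ z, (ball y 3).indicator (gsum u) z := by
  obtain ⟨C, hC0, hC⟩ := sup_bound hN
  let b : ContDiffBump (0 : EE N) := ⟨1, 2, one_pos, one_lt_two⟩
  have hb : ContDiff ℝ (N : ℕ∞) (fun x => b x) := b.contDiff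
  have hbc : HasCompactSupport (fun x => b x) := b.hasCompactSupport
  have hbt : tsupport (fun x => b x) = closedBall 0 2 := b.tsupport_eq
  have hB : ∀ k : ℕ, ∃ B : ℝ, k ≤ N → ∀ x, ‖iteratedFDeriv ℝ k (fun x => b x) x‖ ≤ B := by
    intro k
    by_cases hk : k ≤ N
    · obtain ⟨B, hB⟩ := (hbc.iteratedFDeriv (𝕜 := ℝ) k).exists_bound_of_continuous (u_cont hk hb)
      exact ⟨B, fun _ => hB⟩
    · exact ⟨0, fun h => absurd h hk⟩
  choose B hB using hB
  refine ⟨C * ∑ i ∈ Finset.range (N + 1), (N.choose i : ℝ) * B (N - i), fun y => ?_⟩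
  let v : EE N → ℝ := fun x => u (x + y) * b x
  have huy : ContDiff ℝ (N : ℕ∞) (fun x => u (x + y)) := hu.comp (contDiff_id.add contDiff_const)
  have hv : ContDiff ℝ (N : ℕ∞) v := huy.mul hb
  have hvc : HasCompactSupport v := hbc.mul_left
  have h := hC v hv (fun k hk => ((u_cont hk hv).norm).integrable_of_hasCompactSupport
    (hvc.iteratedFDeriv (𝕜 := ℝ) k).norm)
  have hv0 : v 0 = u y := by
    have : b 0 = 1 := b.one_of_mem_closedBall (by simp [b])
    simp [v, this]
  rw [hv0] at h
  refine h.trans ?_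
  rw [mul_assoc]
  refine mul_le_mul_of_nonneg_left ?_ hC0
  have gint := gsum_int hint
  rw [← integral_const_mul, ← integral_add_right_eq_self
    (fun z => (∑ i ∈ Finset.range (N + 1), (N.choose i : ℝ) * B (N - i)) *
      (ball y 3).indicator (gsum u) z) y]
  refine integral_mono_of_nonneg (Eventually.of_forall fun x => norm_nonneg _)
    (((gint.indicator measurableSet_ball).const_mul _).comp_add_right y)
    (Eventually.of_forall fun x => ?_)
  have hle := norm_iteratedFDeriv_mul_le (n := N) huy hb x le_rfl
  simp only
  by_cases hx : ‖x‖ < 3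
  · have hx' : x + y ∈ ball y 3 := by simpa using hx
    rw [Set.indicator_of_mem hx', Finset.sum_mul]
    refine hle.trans (Finset.sum_le_sum fun i hi => ?_)
    rw [iteratedFDeriv_comp_add_right]
    have h1 : ‖iteratedFDeriv ℝ i u (x + y)‖ ≤ gsum u (x + y) :=
      Finset.single_le_sum (f := fun k => ‖iteratedFDeriv ℝ k u (x + y)‖)
        (fun _ _ => norm_nonneg _) hi
    have h2 := hB (N - i) (by omega) x
    have h3 := norm_nonneg (iteratedFDeriv ℝ (N - i) (fun x => b x) x)
    have h4 := norm_nonneg (iteratedFDeriv ℝ i u (x + y))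
    have h5 := h4.trans h1
    calc _ ≤ (N.choose i : ℝ) * gsum u (x + y) * B (N - i) := by
          refine mul_le_mul ?_ h2 h3 (by positivity)
          gcongr
      _ = _ := by ring
  · have hx' : x + y ∉ ball y 3 := by simpa using hx
    have hx2 : iteratedFDeriv ℝ N v x = 0 := by
      by_contra hne
      have h1 : x ∈ tsupport v := support_iteratedFDeriv_subset N hne
      have h2 : x ∈ tsupport (fun x => b x) := tsupport_mul_subset_right h1
      rw [hbt] at h2
      simp at h2
      linarith
    rw [Set.indicator_of_notMem hx', hx2]
    simp

theorem decay {N : ℕ} (hN : 0 < N) {u : EE N → ℝ}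
    (hu : ContDiff ℝ (N : ℕ∞) u)
    (hint : ∀ k ≤ N, Integrable (fun x => ‖iteratedFDeriv ℝ k u x‖)) :
    Tendsto u (Filter.comap norm atTop) (𝓝 0) := by
  obtain ⟨C, hC⟩ := local_bound hN hu hint
  have gint := gsum_int hint
  have h : Tendsto (fun y => ∫ z, (ball y 3).indicator (gsum u) z) (Filter.comap norm atTop)
      (𝓝 (∫ z : EE N, (0:ℝ))) := by
    refine tendsto_integral_filter_of_dominated_convergence (fun z => ‖gsum u z‖) ?_ ?_ gint.norm ?_
    · exact Eventually.of_forall fun y => (gint.indicator measurableSet_ball).aestronglyMeasurable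
    · exact Eventually.of_forall fun y => Eventually.of_forall fun z =>
        norm_indicator_le_norm_self _ _
    · refine Eventually.of_forall fun z => ?_
      refine tendsto_const_nhds.congr' ?_
      have : Tendsto (norm : EE N → ℝ) (Filter.comap norm atTop) atTop := tendsto_comap
      filter_upwards [this.eventually_gt_atTop (‖z‖ + 3)] with y hy
      rw [Set.indicator_of_notMem]
      simp only [mem_ball, not_lt, dist_eq_norm]
      have := norm_sub_norm_le y z
      rw [norm_sub_rev z y]
      linarith
  rw [integral_zero] at h
  have h2 := h.const_mul C
  rw [mul_zero] at h2
  exact squeeze_zero_norm hC h2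

theorem exists_max {N : ℕ} (hN : 0 < N) {u : EE N → ℝ}
    (hu : ContDiff ℝ (N : ℕ∞) u) (hne : u ≠ 0)
    (hint : ∀ k ≤ N, Integrable (fun x => ‖iteratedFDeriv ℝ k u x‖)) :
    ∃ x0, u x0 ≠ 0 ∧ ∀ x, |u x| ≤ |u x0| := by
  obtain ⟨a, ha⟩ := Function.ne_iff.1 hne
  have hd := decay hN hu hint
  rw [comap_norm_atTop, Metric.cobounded_eq_cocompact] at hd
  have hd' : Tendsto (fun x => |u x|) (cocompact (EE N)) (𝓝 0) := by
    simpa using hd.abs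
  have ha' : 0 < |u a| := abs_pos.2 ha
  obtain ⟨x0, hx0⟩ := hu.continuous.abs.exists_forall_ge' a
    ((hd'.eventually_lt_const ha').mono fun _ h => h.le)
  exact ⟨x0, abs_pos.1 (ha'.trans_le (hx0 a)), hx0⟩

end part7

section part8

open scoped Topology ContDiff

theorem ip_comm' {N k : ℕ} (A B : (EE N) [×k]→L[ℝ] ℝ) : ip N k A B = ip N k B A :=
  Finset.sum_congr rfl fun _ _ => mul_comm _ _

theorem ip_self_zero {N k : ℕ} {A : (EE N) [×k]→L[ℝ] ℝ} (h : ip N k A A = 0) : A = 0 := by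
  unfold ip at h
  rw [Finset.sum_eq_zero_iff_of_nonneg fun i _ => mul_self_nonneg _] at h
  have h2 : A.toMultilinearMap = 0 := by
    refine Module.Basis.ext_multilinear
      (fun _ => (EuclideanSpace.basisFun (Fin N) ℝ).toBasis) fun i => ?_
    have := mul_self_eq_zero.1 (h i (Finset.mem_univ _))
    simpa using this
  exact ContinuousMultilinearMap.toMultilinearMap_injective h2

theorem ip_cs {N k : ℕ} (A B : (EE N) [×k]→L[ℝ] ℝ) :
    ip N k A B ^ 2 ≤ ip N k A A * ip N k B B := by
  have := Finset.sum_mul_sq_le_sq_mul_sq Finset.univ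
    (fun i : Fin k → Fin N => A (fun j => EuclideanSpace.single (i j) 1))
    (fun i : Fin k → Fin N => B (fun j => EuclideanSpace.single (i j) 1))
  simpa only [ip, sq] using this

theorem ip_cs_eq {N k : ℕ} (A B : (EE N) [×k]→L[ℝ] ℝ)
    (h : ip N k A B ^ 2 = ip N k A A * ip N k B B) :
    ip N k B B • A = ip N k A B • B := by
  have h0 : ip N k (ip N k B B • A + (- ip N k A B) • B) (ip N k B B • A + (- ip N k A B) • B) = 0 := by
    simp only [ip_add_left, ip_add_right, ip_smul_left, ip_smul_right]
    rw [ip_comm' B A]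
    linear_combination (-ip N k B B) * h
  have h1 := ip_self_zero h0
  ext v
  have h2 := congrArg (fun A => A v) h1
  simp only [_root_.add_apply, _root_.smul_apply, smul_eq_mul, _root_.zero_apply] at h2 ⊢
  linarith

theorem gradNorm_eq {N : ℕ} (u : EE N → ℝ) (x : EE N) :
    gradNorm N N u x = √(ip N N (iteratedFDeriv ℝ N u x) (iteratedFDeriv ℝ N u x)) := by
  unfold gradNorm ip mixedPartial
  simp only [sq]

theorem gradNorm_cont {N : ℕ} {u : EE N → ℝ} (hu : ContDiff ℝ (N : ℕ∞) u) :
    Continuous (gradNorm N N u) := by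
  have : gradNorm N N u = fun x => _ := funext fun x => gradNorm_eq u x
  rw [this]
  refine Real.continuous_sqrt.comp ?_
  rw [continuous_iff_continuousAt]
  exact fun x => ip_cont (u_cont le_rfl hu).continuousAt (u_cont le_rfl hu).continuousAt

theorem gradNorm_int {N : ℕ} {u : EE N → ℝ} (hu : ContDiff ℝ (N : ℕ∞) u)
    (hint : Integrable (fun x => ‖iteratedFDeriv ℝ N u x‖)) : Integrable (gradNorm N N u) := by
  refine (hint.const_mul (√((N:ℝ)^N))).mono' (gradNorm_cont hu).aestronglyMeasurable
    (Eventually.of_forall fun x => ?_)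
  rw [gradNorm_eq, Real.norm_of_nonneg (Real.sqrt_nonneg _)]
  have h := (le_abs_self _).trans (abs_ip_le N N (iteratedFDeriv ℝ N u x) (iteratedFDeriv ℝ N u x))
  refine (Real.sqrt_le_sqrt h).trans (le_of_eq ?_)
  rw [Real.sqrt_mul (by positivity), Real.sqrt_mul_self (norm_nonneg _)]

theorem eq_case {N : ℕ} (hN : 0 < N) {u : EE N → ℝ} (hu : ContDiff ℝ (N : ℕ∞) u)
    (hint : ∀ k ≤ N, Integrable (fun x => ‖iteratedFDeriv ℝ k u x‖))
    (hle : ∫ x, gradNorm N N u x ≤ √(ell N hN) * omegaSphere N * |u 0|) :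
    ∀ x, x ≠ 0 → ∃ μ : ℝ, ∀ v, iteratedFDeriv ℝ N u x v =
      μ * iteratedFDeriv ℝ N (logNorm N) x v := by
  have hl := ell_pos hN
  have hω := omega_pos hN
  have hG : Good N N (TT N) := good_log hN
  obtain ⟨σ, hσ, hσu⟩ : ∃ σ : ℝ, |σ| = 1 ∧ - σ * u 0 = |u 0| := by
    rcases le_total 0 (u 0) with h | h
    · exact ⟨-1, by simp, by rw [abs_of_nonneg h]; ring⟩
    · exact ⟨1, by simp, by rw [abs_of_nonpos h]; ring⟩
  let f : EE N → ℝ := fun x => √(ell N hN) * gradNorm N N u x -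
    σ * ip N N (iteratedFDeriv ℝ N u x) (TT N x)
  have i1 := gradNorm_int hu (hint N le_rfl)
  have i2 := ip_int hN hN le_rfl (u_cont le_rfl hu) (hint N le_rfl) hG
  have cs : ∀ x, x ≠ 0 → |ip N N (iteratedFDeriv ℝ N u x) (TT N x)| ≤
      √(ell N hN) * gradNorm N N u x := by
    intro x hx
    have := ip_cs (iteratedFDeriv ℝ N u x) (TT N x)
    rw [ip_TT hN hx] at this
    rw [gradNorm_eq, ← Real.sqrt_mul hl.le, mul_comm]
    exact Real.abs_le_sqrt this
  have f0 : 0 ≤ᵐ[volume] f := by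
    filter_upwards [ae_ne_zero hN] with x hx
    have h1 := cs x hx
    have h2 : σ * ip N N (iteratedFDeriv ℝ N u x) (TT N x) ≤
        |ip N N (iteratedFDeriv ℝ N u x) (TT N x)| := by
      refine (le_abs_self _).trans ?_
      rw [abs_mul, hσ, one_mul]
    simp only [f, Pi.zero_apply]
    linarith
  have fint : Integrable f := (i1.const_mul _).sub (i2.const_mul _)
  have hI : ∫ x, f x = √(ell N hN) * (∫ x, gradNorm N N u x) -
      ell N hN * omegaSphere N * |u 0| := by
    simp only [f]
    rw [integral_sub (i1.const_mul _) (i2.const_mul _), integral_const_mul, integral_const_mul,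
      rep_log hN hu hint, ← hσu]
    ring
  have hI0 : ∫ x, f x = 0 := by
    refine le_antisymm ?_ (integral_nonneg_of_ae f0)
    rw [hI]
    have h1 := mul_le_mul_of_nonneg_left hle (Real.sqrt_nonneg (ell N hN))
    have h2 := Real.mul_self_sqrt hl.le
    have h3 : √(ell N hN) * (√(ell N hN) * omegaSphere N * |u 0|) =
      ell N hN * omegaSphere N * |u 0| := by
      rw [← mul_assoc, ← mul_assoc, h2]
    linarith
  have hae := (integral_eq_zero_iff_of_nonneg_ae f0 fint).1 hI0
  have fcont : ContinuousOn f {0}ᶜ := fun x hx => by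
    refine ContinuousAt.continuousWithinAt ?_
    exact (continuousAt_const.mul (gradNorm_cont hu).continuousAt).sub (continuousAt_const.mul
      (ip_cont (u_cont le_rfl hu).continuousAt (hG.differentiableAt hx).continuousAt))
  have hz : Set.EqOn f 0 {0}ᶜ := Measure.eqOn_open_of_ae_eq (ae_restrict_of_ae hae)
    isOpen_compl_singleton fcont continuousOn_const
  intro x hx
  have h1 := hz hx
  simp only [f, Pi.zero_apply] at h1
  have h2 : ip N N (iteratedFDeriv ℝ N u x) (TT N x) ^ 2 =
      ip N N (iteratedFDeriv ℝ N u x) (iteratedFDeriv ℝ N u x) * ip N N (TT N x) (TT N x) := by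
    rw [ip_TT hN hx]
    have h3 : √(ell N hN) * gradNorm N N u x = σ * ip N N (iteratedFDeriv ℝ N u x) (TT N x) := by
      linarith
    have h4 := congrArg (fun t => t ^ 2) h3
    simp only [mul_pow] at h4
    rw [Real.sq_sqrt hl.le, gradNorm_eq, Real.sq_sqrt (ip_self_nonneg _), ← sq_abs σ, hσ] at h4
    linarith
  have h3 := ip_cs_eq _ _ h2
  rw [ip_TT hN hx] at h3
  refine ⟨(ell N hN)⁻¹ * (ip N N (iteratedFDeriv ℝ N u x) (TT N x) * ‖x‖ ^ N), fun v => ?_⟩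
  have h4 := congrArg (fun A => A v) h3
  simp only [TT, _root_.smul_apply, smul_eq_mul] at h4
  simp only [TT]
  field_simp
  linarith

end part8

section part9

open scoped Topology ContDiff

theorem poly_antideriv (P : Polynomial ℝ) : ∃ Q : Polynomial ℝ, Polynomial.derivative Q = P := by
  induction P using Polynomial.induction_on' with
  | add p q hp hq =>
    obtain ⟨a, rfl⟩ := hp
    obtain ⟨b, rfl⟩ := hq
    exact ⟨a + b, by simp⟩
  | monomial n a =>
    refine ⟨Polynomial.monomial (n+1) (a / ((n:ℝ)+1)), ?_⟩
    rw [Polynomial.derivative_monomial]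
    have : (n:ℝ) + 1 ≠ 0 := by positivity
    simp
    field_simp

theorem poly_of_chain (m : ℕ) : ∀ g : ℕ → ℝ → ℝ,
    (∀ j < m, ∀ r, 0 < r → HasDerivAt (g j) (g (j+1) r) r) → (∀ r, 0 < r → g m r = 0) →
    ∃ P : Polynomial ℝ, ∀ r, 0 < r → g 0 r = P.eval r := by
  induction m with
  | zero => exact fun g _ h => ⟨0, fun r hr => by simpa using h r hr⟩
  | succ m ih =>
    intro g hg h0
    obtain ⟨P, hP⟩ := ih (fun j => g (j+1)) (fun j hj => hg (j+1) (by omega)) h0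
    obtain ⟨Q, hQ⟩ := poly_antideriv P
    have hd : ∀ r ∈ Set.Ioi (0:ℝ), HasDerivWithinAt (fun r => g 0 r - Q.eval r) 0 (Set.Ioi 0) r := by
      intro r hr
      have h1 := (hg 0 (by omega) r hr).sub (Q.hasDerivAt r)
      rw [hQ, hP r hr, sub_self] at h1
      exact h1.hasDerivWithinAt
    refine ⟨Q + Polynomial.C (g 0 1 - Q.eval 1), fun r hr => ?_⟩
    have h2 : g 0 r - Q.eval r = g 0 1 - Q.eval 1 := by
      refine (convex_Ioi (0:ℝ)).is_const_of_fderivWithin_eq_zero (𝕜 := ℝ)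
        (f := fun r => g 0 r - Q.eval r)
        (fun r hr => (hd r hr).differentiableWithinAt) (fun r hr => ?_) hr
        (Set.mem_Ioi.2 one_pos)
      rw [(hd r hr).hasFDerivWithinAt.fderivWithin (uniqueDiffOn_Ioi 0 r hr)]
      simp
    simp only [Polynomial.eval_add, Polynomial.eval_C]
    linarith

theorem poly_zero {P : Polynomial ℝ}
    (h : Tendsto (fun n : ℕ => P.eval ((n:ℝ) + 1)) atTop (𝓝 0)) : P = 0 := by
  have t : Tendsto (fun n : ℕ => (n:ℝ) + 1) atTop atTop :=
    tendsto_atTop_add_const_right _ _ tendsto_natCast_atTop_atTop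
  by_cases hd : 0 < P.degree
  · exfalso
    have h1 := (P.abs_tendsto_atTop hd).comp t
    have h2 := h.abs
    exact not_tendsto_nhds_of_tendsto_atTop h1 _ h2
  · have h1 := Polynomial.eq_C_of_degree_le_zero (not_lt.1 hd)
    rw [h1] at h
    simp only [Polynomial.eval_C] at h
    have := tendsto_nhds_unique h tendsto_const_nhds
    rw [h1, ← this]; simp

/-- test vectors along a ray -/
def rv {N : ℕ} (x y : EE N) : (j : ℕ) → Fin (2 + j) → EE N
  | 0 => ![y, y]
  | j + 1 => Fin.cons x (rv x y j)

/-- combination of derivatives along a ray -/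
def GG {N : ℕ} (f : EE N → ℝ) (x y : EE N) (j : ℕ) (r : ℝ) : ℝ :=
  ‖y‖ ^ 2 * iteratedFDeriv ℝ (2 + j) f (r • x) (rv x x j) +
    ‖x‖ ^ 2 * iteratedFDeriv ℝ (2 + j) f (r • x) (rv x y j)

theorem GG_deriv {N j : ℕ} {f : EE N → ℝ} {x : EE N} {r : ℝ}
    (hf : DifferentiableAt ℝ (iteratedFDeriv ℝ (2 + j) f) (r • x)) (y : EE N) :
    HasDerivAt (GG f x y j) (GG f x y (j+1) r) r :=
  ((ray_deriv hf (rv x x j)).const_mul _).add ((ray_deriv hf (rv x y j)).const_mul _)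

theorem fderiv_log {N : ℕ} {z : EE N} (hz : z ≠ 0) (a : EE N) :
    fderiv ℝ (logNorm N) z a = inner ℝ z a / ‖z‖ ^ 2 := by
  have h2 : fderiv ℝ (logNorm N) z = _ :=
      ((hasFDerivAt_norm' hz).log (norm_ne_zero_iff.2 hz)).fderiv
  rw [h2]
  have := norm_ne_zero_iff.2 hz
  simp
  field_simp

theorem log_two {N : ℕ} {z : EE N} (hz : z ≠ 0) (a : EE N) :
    iteratedFDeriv ℝ 2 (logNorm N) z ![a, a] =
      ‖a‖ ^ 2 / ‖z‖ ^ 2 - 2 * (inner ℝ z a) ^ 2 / ‖z‖ ^ 4 := by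
  have hn := norm_ne_zero_iff.2 hz
  rw [iteratedFDeriv_two_apply]
  have hd : DifferentiableAt ℝ (fderiv ℝ (logNorm N)) z :=
    ((logNorm_smooth hz).fderiv_right (m := ∞) (by simp)).differentiableAt (by simp)
  have h1 : fderiv ℝ (fun y => fderiv ℝ (logNorm N) y a) z a =
      fderiv ℝ (fderiv ℝ (logNorm N)) z a a := by
    rw [fderiv_clm_apply hd (differentiableAt_const a)]
    simp
  have h2 : (fun y => fderiv ℝ (logNorm N) y a) =ᶠ[𝓝 z] fun y => inner ℝ y a / ‖y‖ ^ 2 := by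
    filter_upwards [isOpen_ne.mem_nhds hz] with y hy
    exact fderiv_log hy a
  have h3 : HasFDerivAt (fun y : EE N => inner ℝ y a) (innerSL ℝ a) z := by
    have := (innerSL ℝ a).hasFDerivAt (x := z)
    refine this.congr_of_eventuallyEq (Eventually.of_forall fun y => ?_)
    simp [real_inner_comm]
  have h4 := h3.mul ((hasDerivAt_inv (pow_ne_zero 2 hn)).comp_hasFDerivAt z
    (hasStrictFDerivAt_norm_sq z).hasFDerivAt)
  change fderiv ℝ (fderiv ℝ (logNorm N)) z a a = _
  rw [← h1, h2.fderiv_eq]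
  simp only [div_eq_mul_inv]
  have h5 : fderiv ℝ (fun y : EE N => inner ℝ y a * (‖y‖ ^ 2)⁻¹) z = _ := h4.fderiv
  rw [h5]
  simp
  field_simp
  ring

theorem GG_log {N : ℕ} {x y : EE N} (hx : x ≠ 0) (hxy : inner ℝ x y = 0) (j : ℕ) :
    ∀ r : ℝ, 0 < r → GG (logNorm N) x y j r = 0 := by
  have hn := norm_ne_zero_iff.2 hx
  induction j with
  | zero =>
    intro r hr
    have hz : r • x ≠ 0 := smul_ne_zero hr.ne' hx
    change ‖y‖ ^ 2 * iteratedFDeriv ℝ 2 (logNorm N) (r • x) ![x, x] +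
      ‖x‖ ^ 2 * iteratedFDeriv ℝ 2 (logNorm N) (r • x) ![y, y] = 0
    rw [log_two hz, log_two hz, real_inner_smul_left, real_inner_smul_left, hxy, norm_smul,
      Real.norm_eq_abs, abs_of_pos hr, real_inner_self_eq_norm_sq]
    field_simp
    ring
  | succ j ih =>
    intro r hr
    have hz : r • x ≠ 0 := smul_ne_zero hr.ne' hx
    have h1 := GG_deriv (j := j) ((logD_smooth (2 + j) hz).differentiableAt (by simp)) y
    have h2 : GG (logNorm N) x y j =ᶠ[𝓝 r] fun _ => 0 := by
      filter_upwards [lt_mem_nhds hr] with s hs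
      exact ih s hs
    exact h1.unique ((hasDerivAt_const r (0:ℝ)).congr_of_eventuallyEq h2)

theorem GG_poly {N m : ℕ} (hm : N = 2 + m) {u : EE N → ℝ} (hu : ContDiff ℝ (N : ℕ∞) u)
    (he : ∀ x, x ≠ 0 → ∃ μ : ℝ, ∀ v, iteratedFDeriv ℝ N u x v =
      μ * iteratedFDeriv ℝ N (logNorm N) x v) {x y : EE N} (hx : x ≠ 0) (hxy : inner ℝ x y = 0) :
    ∃ P : Polynomial ℝ, ∀ r, 0 < r → GG u x y 0 r = P.eval r := by
  refine poly_of_chain m (GG u x y) (fun j hj r hr => ?_) fun r hr => ?_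
  · exact GG_deriv ((u_contDiff (k := 2 + j) (by omega) hu).differentiable (by simp) _) y
  · have hz : r • x ≠ 0 := smul_ne_zero hr.ne' hx
    have key : ∀ (M : ℕ), M = N → (∀ x, x ≠ 0 → ∃ μ : ℝ, ∀ v, iteratedFDeriv ℝ M u x v =
      μ * iteratedFDeriv ℝ M (logNorm N) x v) := by
      rintro M rfl; exact he
    obtain ⟨μ, hμ⟩ := key (2 + m) hm.symm _ hz
    have h1 := GG_log hx hxy m r hr
    unfold GG at h1 ⊢
    rw [hμ, hμ]
    linear_combination μ * h1

end part9

section part10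

open scoped Topology ContDiff

theorem ae_tendsto {N : ℕ} (hN : 2 ≤ N) {g : EE N → ℝ} (hg : Integrable g) (hg0 : ∀ x, 0 ≤ g x) :
    ∀ᵐ x, Tendsto (fun n : ℕ => g (((n:ℝ) + 1) • x)) atTop (𝓝 0) := by
  have hi : ∀ n : ℕ, Integrable (fun x => g (((n:ℝ) + 1) • x)) := fun n =>
    hg.comp_smul (by positivity)
  have hv : ∀ n : ℕ, ∫ x, ‖g (((n:ℝ) + 1) • x)‖ = (((n:ℝ)+1)^N)⁻¹ * ∫ x, g x := by
    intro n
    simp only [Real.norm_of_nonneg (hg0 _)]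
    rw [Measure.integral_comp_smul, finrank_euclideanSpace_fin, smul_eq_mul,
      abs_of_nonneg (by positivity)]
  have hs : Summable fun n : ℕ => ∫ x, ‖g (((n:ℝ) + 1) • x)‖ := by
    simp only [hv]
    refine Summable.mul_right _ ?_
    have := (summable_nat_add_iff 1).2 (Real.summable_nat_pow_inv.2 (show 1 < N by omega))
    simpa using this
  have hl : ∑' n : ℕ, ∫⁻ x, ‖g (((n:ℝ) + 1) • x)‖ₑ ≠ ⊤ := by
    have h1 : ∀ n : ℕ, ∫⁻ x, ‖g (((n:ℝ) + 1) • x)‖ₑ = ENNReal.ofReal (∫ x, ‖g (((n:ℝ) + 1) • x)‖) :=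
      fun n => (ofReal_integral_norm_eq_lintegral_enorm (hi n)).symm
    simp only [h1]
    rw [← ENNReal.ofReal_tsum_of_nonneg (fun n => integral_nonneg fun _ => norm_nonneg _) hs]
    exact ENNReal.ofReal_ne_top
  rw [← lintegral_tsum fun n => (hi n).aestronglyMeasurable.enorm] at hl
  have h2 := ae_lt_top' (AEMeasurable.tsum fun n => (hi n).aestronglyMeasurable.enorm) hl
  filter_upwards [h2] with x hx
  have h3 := ENNReal.tendsto_atTop_zero_of_tsum_ne_top hx.ne
  rw [tendsto_zero_iff_enorm_tendsto_zero]
  exact h3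

theorem GG_bound {N : ℕ} (u : EE N → ℝ) (x y : EE N) (r : ℝ) :
    |GG u x y 0 r| ≤ 2 * ‖x‖ ^ 2 * ‖y‖ ^ 2 * ‖iteratedFDeriv ℝ 2 u (r • x)‖ := by
  have h : ∀ a : EE N, |iteratedFDeriv ℝ 2 u (r • x) ![a, a]| ≤
      ‖iteratedFDeriv ℝ 2 u (r • x)‖ * ‖a‖ ^ 2 := by
    intro a
    have := (iteratedFDeriv ℝ 2 u (r • x)).le_opNorm ![a, a]
    simpa [Fin.prod_univ_two, sq] using this
  change |‖y‖ ^ 2 * iteratedFDeriv ℝ 2 u (r • x) ![x, x] +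
      ‖x‖ ^ 2 * iteratedFDeriv ℝ 2 u (r • x) ![y, y]| ≤ _
  refine (abs_add_le _ _).trans ?_
  rw [abs_mul, abs_mul, abs_of_nonneg (sq_nonneg ‖x‖), abs_of_nonneg (sq_nonneg ‖y‖)]
  have h1 := mul_le_mul_of_nonneg_left (h x) (sq_nonneg ‖y‖)
  have h2 := mul_le_mul_of_nonneg_left (h y) (sq_nonneg ‖x‖)
  linarith

theorem GG_zero_ae {N : ℕ} (hN : 2 ≤ N) {u : EE N → ℝ} (hu : ContDiff ℝ (N : ℕ∞) u)
    (hint : ∀ k ≤ N, Integrable (fun x => ‖iteratedFDeriv ℝ k u x‖))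
    (he : ∀ x, x ≠ 0 → ∃ μ : ℝ, ∀ v, iteratedFDeriv ℝ N u x v =
      μ * iteratedFDeriv ℝ N (logNorm N) x v) :
    ∀ᵐ x : EE N, ∀ y, inner ℝ x y = 0 → GG u x y 0 1 = 0 := by
  filter_upwards [ae_tendsto hN (hint 2 hN) (fun _ => norm_nonneg _),
    ae_ne_zero (show 0 < N by omega)] with x hx hx0 y hxy
  obtain ⟨m, hm⟩ : ∃ m, N = 2 + m := ⟨N - 2, by omega⟩
  obtain ⟨P, hP⟩ := GG_poly hm hu he hx0 hxy
  have h0 : P = 0 := by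
    refine poly_zero ?_
    refine squeeze_zero_norm (fun n => ?_)
      (by simpa using hx.const_mul (2 * ‖x‖ ^ 2 * ‖y‖ ^ 2))
    rw [← hP _ (by positivity)]
    exact GG_bound u x y _
  rw [hP 1 one_pos, h0]; simp

theorem GG_zero {N : ℕ} (hN : 2 ≤ N) {u : EE N → ℝ} (hu : ContDiff ℝ (N : ℕ∞) u)
    (hint : ∀ k ≤ N, Integrable (fun x => ‖iteratedFDeriv ℝ k u x‖))
    (he : ∀ x, x ≠ 0 → ∃ μ : ℝ, ∀ v, iteratedFDeriv ℝ N u x v =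
      μ * iteratedFDeriv ℝ N (logNorm N) x v) {x y : EE N} (hx : x ≠ 0) (hxy : inner ℝ x y = 0) :
    ‖y‖ ^ 2 * iteratedFDeriv ℝ 2 u x ![x, x] + ‖x‖ ^ 2 * iteratedFDeriv ℝ 2 u x ![y, y] = 0 := by
  let Y : EE N → EE N := fun z => ‖z‖ ^ 2 • y - (inner ℝ z y : ℝ) • z
  have hYc : Continuous Y := by fun_prop
  have hY : ∀ z, inner ℝ z (Y z) = 0 := by
    intro z
    simp only [Y, inner_sub_right, inner_smul_right, real_inner_self_eq_norm_sq]
    ring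
  let F : EE N → ℝ := fun z => ‖Y z‖ ^ 2 * iteratedFDeriv ℝ 2 u z ![z, z] +
    ‖z‖ ^ 2 * iteratedFDeriv ℝ 2 u z ![Y z, Y z]
  have hc := u_cont (k := 2) hN hu
  have hD : ∀ w : EE N → EE N, Continuous w →
      Continuous (fun z => iteratedFDeriv ℝ 2 u z ![w z, w z]) := by
    intro w hw
    have hv : Continuous (fun z => ![w z, w z]) := by
      refine continuous_pi fun i => ?_
      fin_cases i <;> exact hw
    exact hc.eval hv
  have hF : Continuous F :=
    ((hYc.norm.pow 2).mul (hD _ continuous_id)).add ((continuous_norm.pow 2).mul (hD _ hYc))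
  have h0 : F =ᵐ[volume] fun _ => 0 := by
    filter_upwards [GG_zero_ae hN hu hint he] with z hz
    have := hz (Y z) (hY z)
    unfold GG at this
    simp only [one_smul] at this
    exact this
  have h1 : F = fun _ => 0 := (Continuous.ae_eq_iff_eq volume hF continuous_const).1 h0
  have h2 : F x = 0 := congrFun h1 x
  have hYx : Y x = ‖x‖ ^ 2 • y := by simp [Y, hxy]
  have hn := norm_ne_zero_iff.2 hx
  have h3 : iteratedFDeriv ℝ 2 u x ![‖x‖ ^ 2 • y, ‖x‖ ^ 2 • y] =
      ‖x‖ ^ 4 * iteratedFDeriv ℝ 2 u x ![y, y] := by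
    rw [iteratedFDeriv_two_apply, iteratedFDeriv_two_apply]
    simp
    ring
  simp only [F, hYx, h3, norm_smul] at h2
  have h4 : ‖(‖x‖ ^ 2)‖ = ‖x‖ ^ 2 := by simp
  rw [h4] at h2
  have h5 : ‖x‖ ^ 4 * (‖y‖ ^ 2 * iteratedFDeriv ℝ 2 u x ![x, x] +
      ‖x‖ ^ 2 * iteratedFDeriv ℝ 2 u x ![y, y]) = 0 := by linear_combination h2
  exact (mul_eq_zero.1 h5).resolve_left (pow_ne_zero 4 hn)

end part10

section part11

open scoped Topology ContDiff

theorem harm_zero {N : ℕ} (hN : 2 ≤ N) {u : EE N → ℝ} (hu : ContDiff ℝ (N : ℕ∞) u)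
    (hd : Tendsto u (Filter.comap norm atTop) (𝓝 0))
    (hz : ∀ x y : EE N, x ≠ 0 → inner ℝ x y = 0 →
      ‖y‖ ^ 2 * iteratedFDeriv ℝ 2 u x ![x, x] + ‖x‖ ^ 2 * iteratedFDeriv ℝ 2 u x ![y, y] = 0) :
    u 0 = 0 := by
  let a : EE N := eb ⟨0, by omega⟩
  let b : EE N := eb ⟨1, by omega⟩
  have haa : inner ℝ a a = 1 := by simp [a, eb]
  have hbb : inner ℝ b b = 1 := by simp [b, eb]
  have hab : inner ℝ a b = 0 := by
    rw [inner_eb]; simp [a]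
  have hba : inner ℝ b a = 0 := by rw [real_inner_comm, hab]
  let L : ℂ →L[ℝ] EE N := Complex.reCLM.smulRight a + Complex.imCLM.smulRight b
  have hL : ∀ z : ℂ, L z = z.re • a + z.im • b := fun z => by simp [L]
  have hLn : ∀ z : ℂ, ‖L z‖ ^ 2 = ‖z‖ ^ 2 := by
    intro z
    rw [← real_inner_self_eq_norm_sq, hL, Complex.sq_norm, Complex.normSq_apply]
    simp only [inner_add_left, inner_add_right, inner_smul_left, inner_smul_right, haa, hbb, hab,
      hba]
    simp
  have hLn' : ∀ z : ℂ, ‖L z‖ = ‖z‖ := fun z =>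
    (sq_eq_sq₀ (norm_nonneg _) (norm_nonneg _)).1 (hLn z)
  have hu2 : ContDiff ℝ 2 u := hu.of_le (WithTop.coe_le_coe.2 (Nat.cast_le (α := ℕ∞).2 hN) : ((2:ℕ) : ℕ∞) ≤ (((N : ℕ∞)) : WithTop ℕ∞))
  let g : ℂ → ℝ := fun z => u (L z)
  have hg : ContDiff ℝ 2 g := hu2.comp L.contDiff
  have hit : ∀ z v, iteratedFDeriv ℝ 2 g z ![v, v] = iteratedFDeriv ℝ 2 u (L z) ![L v, L v] := by
    intro z v
    have := L.iteratedFDeriv_comp_right hu2 z (i := 2) le_rfl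
    change iteratedFDeriv ℝ 2 (u ∘ L) z ![v, v] = _
    rw [this, ContinuousMultilinearMap.compContinuousLinearMap_apply]
    congr 1
    ext i
    fin_cases i <;> rfl
  have hlap : ∀ z : ℂ, z ≠ 0 → Laplacian.laplacian g z = 0 := by
    intro z hz0
    rw [InnerProductSpace.laplacian_eq_iteratedFDeriv_complexPlane]
    simp only [hit]
    have h1 : L 1 = a := by simp [hL]
    have hI : L Complex.I = b := by simp [hL]
    rw [h1, hI]
    have hn : ‖z‖ ≠ 0 := norm_ne_zero_iff.2 hz0
    have hLz : L z ≠ 0 := by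
      rw [← norm_ne_zero_iff, hLn']; exact hn
    have hLI : L (Complex.I * z) = (-z.im) • a + z.re • b := by simp [hL]
    have ho : inner ℝ (L z) (L (Complex.I * z)) = 0 := by
      rw [hLI, hL]
      simp only [inner_add_left, inner_add_right, inner_smul_left, inner_smul_right, haa, hbb, hab,
        hba]
      simp
      ring
    have h := hz _ _ hLz ho
    rw [hLn, hLn, norm_mul, Complex.norm_I, one_mul, ← mul_add] at h
    have h2 := (mul_eq_zero.1 h).resolve_left (pow_ne_zero 2 hn)
    have hsq : z.re ^ 2 + z.im ^ 2 = ‖z‖ ^ 2 := by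
      rw [Complex.sq_norm, Complex.normSq_apply]; ring
    have h3 : ‖z‖ ^ 2 * (iteratedFDeriv ℝ 2 u (L z) ![a, a] +
        iteratedFDeriv ℝ 2 u (L z) ![b, b]) = 0 := by
      have quad : ∀ (w : EE N) (r s : ℝ), iteratedFDeriv ℝ 2 u w ![r • a + s • b, r • a + s • b] =
          r ^ 2 * iteratedFDeriv ℝ 2 u w ![a, a] + r * s * (iteratedFDeriv ℝ 2 u w ![a, b] +
          iteratedFDeriv ℝ 2 u w ![b, a]) + s ^ 2 * iteratedFDeriv ℝ 2 u w ![b, b] := by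
        intro w r s
        simp only [iteratedFDeriv_two_apply]
        simp
        ring
      have q1 := quad (L z) z.re z.im
      have q2 := quad (L z) (-z.im) z.re
      rw [← hL] at q1
      rw [← hLI] at q2
      rw [q1, q2] at h2
      rw [← hsq]
      linear_combination h2
    exact (mul_eq_zero.1 h3).resolve_left (pow_ne_zero 2 hn)
  have hlap0 : Laplacian.laplacian g = 0 := by
    have hc : Continuous (Laplacian.laplacian g) := by
      rw [InnerProductSpace.laplacian_eq_iteratedFDeriv_complexPlane]
      have h := hg.continuous_iteratedFDeriv (m := 2) (by norm_cast)
      exact (h.eval continuous_const).add (h.eval continuous_const)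
    exact hc.ext_on (dense_compl_singleton (0:ℂ)) continuous_const fun z hz => hlap z hz
  have hharm : ∀ z, InnerProductSpace.HarmonicAt g z := fun z =>
    ⟨hg.contDiffAt, by rw [hlap0]⟩
  have hmean : ∀ R : ℝ, Real.circleAverage g 0 R = u 0 := by
    intro R
    rw [InnerProductSpace.HarmonicOnNhd.circleAverage_eq fun z _ => hharm z]
    simp [g]
  have hbd : ∀ ε : ℝ, 0 < ε → |u 0| ≤ ε := by
    intro ε hε
    have h1 : ∀ᶠ x in Filter.comap norm atTop, |u x| < ε := by
      have := hd.abs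
      rw [abs_zero] at this
      exact this.eventually_lt_const hε
    rw [Filter.eventually_comap] at h1
    obtain ⟨R, hR⟩ := h1.exists_forall_of_atTop
    rw [← hmean |R|]
    refine Real.abs_circleAverage_le_circleAverage_abs.trans
      (Real.circleAverage_mono_on_of_le_circle ?_ fun z hz => ?_)
    · exact (hg.continuous.abs.continuousOn).circleIntegrable'
    · refine (hR |R| (le_abs_self R) (L z) ?_).le
      rw [hLn']
      simpa using hz
  exact abs_eq_zero.1 (le_antisymm (le_of_forall_pos_le_add fun ε hε => by
    simpa using hbd ε hε) (abs_nonneg _))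

end part11

/-- for `N ≥ 2`, no nonzero `C^N` function with all partial derivatives up to
order `N` integrable attains equality: `‖u‖_∞ < (√(ℓ_N) ω_{N-1})⁻¹ ∫ |∇^N u|`. -/
theorem statement9 (N : ℕ) (hN : 2 ≤ N)
    (u : EuclideanSpace ℝ (Fin N) → ℝ)
    (hu : ContDiff ℝ (N : ℕ∞) u) (hne : u ≠ 0)
    (hint : ∀ k ≤ N, Integrable (fun x => ‖iteratedFDeriv ℝ k u x‖)) :
    (⨆ x, |u x|) <
      (Real.sqrt (ell N (by omega)) * omegaSphere N)⁻¹ * ∫ x, gradNorm N N u x := by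
  have hN0 : 0 < N := by omega
  obtain ⟨x0, hx0, hmax⟩ := exists_max hN0 hu hne hint
  have hsup : (⨆ x, |u x|) ≤ |u x0| := ciSup_le hmax
  refine lt_of_le_of_lt hsup ?_
  have hpos : 0 < Real.sqrt (ell N hN0) * omegaSphere N :=
    mul_pos (Real.sqrt_pos.2 (ell_pos hN0)) (omega_pos hN0)
  by_contra hcon
  have hle : ∫ x, gradNorm N N u x ≤ Real.sqrt (ell N hN0) * omegaSphere N * |u x0| :=
    (inv_mul_le_iff₀ hpos).1 (not_lt.1 hcon)
  let v : EuclideanSpace ℝ (Fin N) → ℝ := fun x => u (x + x0)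
  have hv : ContDiff ℝ (N : ℕ∞) v := hu.comp (contDiff_id.add contDiff_const)
  have hit : ∀ k x, iteratedFDeriv ℝ k v x = iteratedFDeriv ℝ k u (x + x0) := fun k x =>
    iteratedFDeriv_comp_add_right k x0 x
  have hvint : ∀ k ≤ N, Integrable (fun x => ‖iteratedFDeriv ℝ k v x‖) := by
    intro k hk
    simp only [hit]
    exact (hint k hk).comp_add_right x0
  have hgrad : ∫ x, gradNorm N N v x = ∫ x, gradNorm N N u x := by
    rw [← integral_add_right_eq_self (gradNorm N N u) x0]
    refine integral_congr_ae (Filter.Eventually.of_forall fun x => ?_)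
    simp only [gradNorm, mixedPartial, hit]
  have hv0 : v 0 = u x0 := by simp [v]
  rw [← hgrad, ← hv0] at hle
  have he := eq_case hN0 hv hvint hle
  refine hx0 ?_
  rw [← hv0]
  exact harm_zero hN hv (decay hN0 hv hvint) fun x y hx hxy => GG_zero hN hv hvint he hx hxy
end
end

section
/- Let N ≥ 1 and let Ω ⊆ ℝ^N be any nonempty open set. Then the constant (√(ℓ_N) ω_{N−1})^{−1} remains optimal on Ω: for every ε > 0 there exists a nonzero u ∈ C_c^∞(ℝ^N) with support contained in Ω such that ∫_{Ω} |∇^N u(x)| dx < (√(ℓ_N) · ω_{N−1} + ε) · ‖u‖_∞. -/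
open MeasureTheory Metric Filter Matrix

noncomputable section

lemma hs_frob_basis (N m : ℕ) (b c : OrthonormalBasis (Fin N) ℝ (EuclideanSpace ℝ (Fin N)))
    (T : ContinuousMultilinearMap ℝ (fun _ : Fin m => EuclideanSpace ℝ (Fin N)) ℝ) :
    ∑ i : Fin m → Fin N, T (fun k => b (i k)) ^ 2 =
      ∑ i : Fin m → Fin N, T (fun k => c (i k)) ^ 2 := by
  induction m with
  | zero =>
    refine Finset.sum_congr rfl fun i _ => ?_
    congr 2
    ext k
    exact k.elim0
  | succ m ih =>
    have key : ∀ d : OrthonormalBasis (Fin N) ℝ (EuclideanSpace ℝ (Fin N)),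
        ∑ i : Fin (m+1) → Fin N, T (fun k => d (i k)) ^ 2 =
        ∑ j : Fin N, ∑ i : Fin m → Fin N, (T.curryLeft (d j)) (fun k => d (i k)) ^ 2 := by
      intro d
      rw [← (Fin.consEquiv (fun _ => Fin N)).sum_comp, Fintype.sum_prod_type]
      refine Finset.sum_congr rfl fun j _ => Finset.sum_congr rfl fun i _ => ?_
      rw [ContinuousMultilinearMap.curryLeft_apply]
      congr 2
      ext k
      refine Fin.cases ?_ (fun k => ?_) k <;> simp [Fin.consEquiv]
    rw [key b, key c]
    have h1 : ∀ j, ∑ i : Fin m → Fin N, (T.curryLeft (b j)) (fun k => b (i k)) ^ 2 =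
      ∑ i : Fin m → Fin N, (T.curryLeft (b j)) (fun k => c (i k)) ^ 2 := fun j => ih _
    simp_rw [h1]
    rw [Finset.sum_comm]
    conv_rhs => rw [Finset.sum_comm]
    refine Finset.sum_congr rfl fun i _ => ?_
    let L : StrongDual ℝ (EuclideanSpace ℝ (Fin N)) :=
      (ContinuousMultilinearMap.apply ℝ (fun _ : Fin m => EuclideanSpace ℝ (Fin N)) ℝ (fun k => c (i k))).comp T.curryLeft
    have hb := b.norm_dual L
    have hc := c.norm_dual L
    rw [hb] at hc
    exact hc

lemma hs_iter_equiv {N m : ℕ} (A : (EuclideanSpace ℝ (Fin N)) ≃L[ℝ] (EuclideanSpace ℝ (Fin N))) (f : (EuclideanSpace ℝ (Fin N)) → ℝ) (x : EuclideanSpace ℝ (Fin N)) :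
    iteratedFDeriv ℝ m (f ∘ A) x =
      (iteratedFDeriv ℝ m f (A x)).compContinuousLinearMap
        fun _ => (A : (EuclideanSpace ℝ (Fin N)) →L[ℝ] (EuclideanSpace ℝ (Fin N))) := by
  have := A.iteratedFDerivWithin_comp_right f (s := Set.univ) uniqueDiffOn_univ (x := x)
    (Set.mem_univ _) m
  simpa [iteratedFDerivWithin_univ] using this

/-- `y ↦ r • R y` -/
def hsScale {N : ℕ} (r : ℝ) (hr : r ≠ 0) (R : (EuclideanSpace ℝ (Fin N)) ≃ₗᵢ[ℝ] (EuclideanSpace ℝ (Fin N))) : (EuclideanSpace ℝ (Fin N)) ≃L[ℝ] (EuclideanSpace ℝ (Fin N)) :=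
  R.toContinuousLinearEquiv.trans (ContinuousLinearEquiv.smulLeft (Units.mk0 r hr))

lemma hsScale_apply {N : ℕ} (r : ℝ) (hr : r ≠ 0) (R : (EuclideanSpace ℝ (Fin N)) ≃ₗᵢ[ℝ] (EuclideanSpace ℝ (Fin N))) (y : EuclideanSpace ℝ (Fin N)) :
    hsScale r hr R y = r • R y := rfl

lemma hs_iter_scale {N m : ℕ} (r : ℝ) (hr : r ≠ 0) (R : (EuclideanSpace ℝ (Fin N)) ≃ₗᵢ[ℝ] (EuclideanSpace ℝ (Fin N))) (f : (EuclideanSpace ℝ (Fin N)) → ℝ)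
    (x : EuclideanSpace ℝ (Fin N)) (v : Fin m → EuclideanSpace ℝ (Fin N)) :
    iteratedFDeriv ℝ m (fun y => f (r • R y)) x v =
      r ^ m * iteratedFDeriv ℝ m f (r • R x) (fun k => R (v k)) := by
  have h := hs_iter_equiv (m := m) (hsScale r hr R) f x
  have h' : (f ∘ (hsScale r hr R)) = fun y => f (r • R y) := rfl
  rw [h'] at h
  rw [h, ContinuousMultilinearMap.compContinuousLinearMap_apply]
  have := (iteratedFDeriv ℝ m f (r • R x)).map_smul_univ (fun _ => r) (fun k => R (v k))
  simp only [Finset.prod_const, Finset.card_univ, Fintype.card_fin, smul_eq_mul] at this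
  rw [← this]
  rfl

lemma hs_logNorm_contDiffAt {N : ℕ} {x : EuclideanSpace ℝ (Fin N)} (hx : x ≠ 0) {n : WithTop ℕ∞} :
    ContDiffAt ℝ n (logNorm N) x := by
  unfold logNorm
  exact (contDiffAt_norm ℝ hx).log (norm_ne_zero_iff.2 hx)

lemma hs_iter_logNorm {N m : ℕ} (hm : m ≠ 0) (r : ℝ) (hr : 0 < r)
    (R : (EuclideanSpace ℝ (Fin N)) ≃ₗᵢ[ℝ] (EuclideanSpace ℝ (Fin N))) (x : EuclideanSpace ℝ (Fin N)) (hx : x ≠ 0) (v : Fin m → EuclideanSpace ℝ (Fin N)) :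
    iteratedFDeriv ℝ m (logNorm N) x v =
      r ^ m * iteratedFDeriv ℝ m (logNorm N) (r • R x) (fun k => R (v k)) := by
  rw [← hs_iter_scale r hr.ne']
  have h1 : (fun y => logNorm N (r • R y)) =ᶠ[nhds x] ((fun _ => Real.log r) + logNorm N) := by
    filter_upwards [isOpen_compl_singleton.mem_nhds hx] with y hy
    have hy' : ‖y‖ ≠ 0 := norm_ne_zero_iff.2 hy
    simp only [logNorm, norm_smul, Pi.add_apply, LinearIsometryEquiv.norm_map, Real.norm_eq_abs,
      abs_of_pos hr]
    rw [Real.log_mul hr.ne' hy']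
  rw [(h1.iteratedFDeriv ℝ m).self_of_nhds,
    iteratedFDeriv_add_apply contDiffAt_const (hs_logNorm_contDiffAt hx),
    iteratedFDeriv_const_of_ne hm]
  simp

lemma hs_exists_rot {N : ℕ} (x y : EuclideanSpace ℝ (Fin N)) (h : ‖x‖ = ‖y‖) :
    ∃ R : (EuclideanSpace ℝ (Fin N)) ≃ₗᵢ[ℝ] (EuclideanSpace ℝ (Fin N)), R x = y :=
  ⟨_, Submodule.reflection_sub h⟩

lemma hs_exists_rot' {N : ℕ} (hN : 0 < N) (x : EuclideanSpace ℝ (Fin N)) (hx : x ≠ 0) :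
    ∃ R : (EuclideanSpace ℝ (Fin N)) ≃ₗᵢ[ℝ] (EuclideanSpace ℝ (Fin N)), ‖x‖ • R (EuclideanSpace.single (⟨0, hN⟩ : Fin N) 1) = x := by
  have hx' : ‖x‖ ≠ 0 := norm_ne_zero_iff.2 hx
  obtain ⟨R, hR⟩ := hs_exists_rot (EuclideanSpace.single (⟨0, hN⟩ : Fin N) (1 : ℝ)) (‖x‖⁻¹ • x)
    (by simp [norm_smul, hx'])
  exact ⟨R, by rw [hR, smul_smul, mul_inv_cancel₀ hx', one_smul]⟩

lemma hs_single_ne {N : ℕ} (hN : 0 < N) : EuclideanSpace.single (⟨0, hN⟩ : Fin N) (1 : ℝ) ≠ 0 := by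
  rw [← norm_ne_zero_iff]; simp

lemma hs_gradNorm_log {N : ℕ} (hN : 0 < N) (x : EuclideanSpace ℝ (Fin N)) (hx : x ≠ 0) :
    ‖x‖ ^ N * gradNorm N N (logNorm N) x = Real.sqrt (ell N hN) := by
  obtain ⟨R, hR⟩ := hs_exists_rot' hN x hx
  have hpos := norm_pos_iff.2 hx
  unfold ell gradNorm mixedPartial
  simp_rw [hs_iter_logNorm hN.ne' ‖x‖ hpos R _ (hs_single_ne hN), hR, mul_pow]
  rw [← Finset.mul_sum, Real.sqrt_mul (by positivity), Real.sqrt_sq (by positivity)]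
  congr 2
  have := hs_frob_basis N N (EuclideanSpace.basisFun (Fin N) ℝ)
    ((EuclideanSpace.basisFun (Fin N) ℝ).map R) (iteratedFDeriv ℝ N (logNorm N) x)
  simpa using this

lemma hs_norm_iter_log {N m : ℕ} (hm : m ≠ 0) (hN : 0 < N) (x : EuclideanSpace ℝ (Fin N)) (hx : x ≠ 0) :
    ‖iteratedFDeriv ℝ m (logNorm N) x‖ ≤
      ‖iteratedFDeriv ℝ m (logNorm N) (EuclideanSpace.single (⟨0, hN⟩ : Fin N) 1)‖
        * (‖x‖⁻¹) ^ m := by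
  obtain ⟨R, hR⟩ := hs_exists_rot' hN x hx
  have hpos := norm_pos_iff.2 hx
  refine ContinuousMultilinearMap.opNorm_le_bound (by positivity) fun v => ?_
  have h := hs_iter_logNorm hm ‖x‖ hpos R _ (hs_single_ne hN) (fun k => R.symm (v k))
  simp only [hR, LinearIsometryEquiv.apply_symm_apply] at h
  have h2 := (iteratedFDeriv ℝ m (logNorm N)
    (EuclideanSpace.single (⟨0, hN⟩ : Fin N) 1)).le_opNorm (fun k => R.symm (v k))
  simp only [LinearIsometryEquiv.norm_map] at h2
  rw [h, norm_mul, norm_pow, norm_norm] at h2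
  have h3 : ‖x‖⁻¹ ^ m * ‖x‖ ^ m = 1 := by rw [← mul_pow, inv_mul_cancel₀ hpos.ne', one_pow]
  calc _ = (‖x‖⁻¹ ^ m) * (‖x‖ ^ m * ‖(iteratedFDeriv ℝ m (logNorm N) x) v‖) := by
        rw [← mul_assoc, h3, one_mul]
    _ ≤ (‖x‖⁻¹ ^ m) * _ := mul_le_mul_of_nonneg_left h2 (by positivity)
    _ = _ := by ring

/-- Frobenius norm of a multilinear form. -/
def hsFrob {N m : ℕ} (T : ContinuousMultilinearMap ℝ (fun _ : Fin m => EuclideanSpace ℝ (Fin N)) ℝ) : ℝ :=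
  Real.sqrt (∑ i : Fin m → Fin N, T (fun k => EuclideanSpace.single (i k) 1) ^ 2)

lemma hsFrob_eq {N m : ℕ} (T : ContinuousMultilinearMap ℝ (fun _ : Fin m => EuclideanSpace ℝ (Fin N)) ℝ) :
    hsFrob T = ‖(WithLp.toLp 2 (fun i : Fin m → Fin N =>
      T (fun k => EuclideanSpace.single (i k) 1)) : EuclideanSpace ℝ (Fin m → Fin N))‖ := by
  rw [EuclideanSpace.norm_eq]
  simp [hsFrob]

lemma hsFrob_le {N m : ℕ} (T : ContinuousMultilinearMap ℝ (fun _ : Fin m => EuclideanSpace ℝ (Fin N)) ℝ) :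
    hsFrob T ≤ Real.sqrt (Fintype.card (Fin m → Fin N)) * ‖T‖ := by
  unfold hsFrob
  rw [← Real.sqrt_sq (norm_nonneg T), ← Real.sqrt_mul (by positivity)]
  apply Real.sqrt_le_sqrt
  rw [← Finset.card_univ, ← nsmul_eq_mul]
  refine Finset.sum_le_card_nsmul _ _ _ fun i _ => ?_
  have := T.le_opNorm (fun k => EuclideanSpace.single (i k) (1:ℝ))
  simp only [PiLp.norm_single, norm_one, Finset.prod_const_one, mul_one,
    Real.norm_eq_abs] at this
  rw [← sq_abs]
  gcongr

lemma hsFrob_add {N m : ℕ} (a : ℝ)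
    (T U : ContinuousMultilinearMap ℝ (fun _ : Fin m => EuclideanSpace ℝ (Fin N)) ℝ) :
    hsFrob (a • T + U) ≤ |a| * hsFrob T + hsFrob U := by
  have h : (WithLp.toLp 2 (fun i : Fin m → Fin N =>
      (a • T + U) (fun k => EuclideanSpace.single (i k) 1)) : EuclideanSpace ℝ (Fin m → Fin N)) =
      a • (WithLp.toLp 2 (fun i : Fin m → Fin N =>
      T (fun k => EuclideanSpace.single (i k) 1)) : EuclideanSpace ℝ (Fin m → Fin N)) +
      (WithLp.toLp 2 (fun i : Fin m → Fin N =>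
      U (fun k => EuclideanSpace.single (i k) 1)) : EuclideanSpace ℝ (Fin m → Fin N)) := by
    ext i
    simp
  rw [hsFrob_eq, hsFrob_eq, hsFrob_eq, h, ← Real.norm_eq_abs, ← norm_smul]
  exact norm_add_le _ _

lemma hs_bound_S (n : ℕ) : ∃ C : ℝ, 0 ≤ C ∧ ∀ k ≤ n, ∀ s ∈ Set.Icc (0:ℝ) 1,
    ‖iteratedDeriv k Real.smoothTransition s‖ ≤ C := by
  have h : ∀ k : ℕ, ∃ C : ℝ, ∀ s ∈ Set.Icc (0:ℝ) 1,
      ‖iteratedDeriv k Real.smoothTransition s‖ ≤ C := fun k =>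
    isCompact_Icc.exists_bound_of_continuousOn
      ((Real.smoothTransition.contDiff (n := k)).continuous_iteratedDeriv k le_rfl).continuousOn
  choose C hC using h
  refine ⟨∑ k ∈ Finset.range (n+1), |C k|, Finset.sum_nonneg fun _ _ => abs_nonneg _, ?_⟩
  intro k hk s hs
  refine (hC k s hs).trans ((le_abs_self _).trans ?_)
  exact Finset.single_le_sum (f := fun k => |C k|) (fun _ _ => abs_nonneg _)
    (Finset.mem_range.2 (by omega))

lemma hs_iter_S (k : ℕ) (η t : ℝ) :
    iteratedDeriv k (fun w => Real.smoothTransition (1 - η * w)) t =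
      (-η) ^ k * iteratedDeriv k Real.smoothTransition (1 - η * t) := by
  have h1 : ContDiff ℝ k (fun z : ℝ => Real.smoothTransition (1 + z)) :=
    Real.smoothTransition.contDiff.comp (by fun_prop)
  have h2 := congrFun (iteratedDeriv_comp_const_mul h1 (-η)) t
  simp only [iteratedDeriv_comp_const_add, neg_mul, ← sub_eq_add_neg] at h2
  exact h2

lemma hs_remainder (n : ℕ) (C : ℝ) (hC0 : 0 ≤ C) (η : ℝ) (hη : 0 < η) (hη1 : η ≤ 1) (t : ℝ)
    (hC : ∀ k ≤ n, ‖iteratedDeriv k Real.smoothTransition (1 - η * t)‖ ≤ C) (k : ℕ) (hk : k ≤ n) :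
    ‖iteratedDeriv k ((fun w => Real.smoothTransition (1 - η * w)) +
      (fun w => (-Real.smoothTransition (1 - η * t)
        + η * deriv Real.smoothTransition (1 - η * t) * (w - t)))) t‖ ≤ C * η ^ 2 := by
  have h1 : ∀ k : ℕ, ContDiff ℝ k (fun w : ℝ => Real.smoothTransition (1 - η * w)) := fun k =>
    Real.smoothTransition.contDiff.comp (by fun_prop)
  rw [iteratedDeriv_add (h1 k).contDiffAt (by fun_prop), hs_iter_S]
  match k, hk with
  | 0, _ => simp; positivity
  | 1, _ =>
    have : deriv (fun w => (-Real.smoothTransition (1 - η * t)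
        + η * deriv Real.smoothTransition (1 - η * t) * (w - t))) t =
        η * deriv Real.smoothTransition (1 - η * t) := by
      simp
    rw [iteratedDeriv_one, iteratedDeriv_one, this]
    simp; positivity
  | k+2, hk =>
    have h0 : iteratedDeriv (k+2) (fun w => (-Real.smoothTransition (1 - η * t)
        + η * deriv Real.smoothTransition (1 - η * t) * (w - t))) t = 0 := by
      rw [iteratedDeriv_succ', iteratedDeriv_succ']
      have : deriv (fun w => (-Real.smoothTransition (1 - η * t)
        + η * deriv Real.smoothTransition (1 - η * t) * (w - t))) =
        fun _ => η * deriv Real.smoothTransition (1 - η * t) := by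
        ext w
        simp
      rw [this, deriv_const', iteratedDeriv_const]
      simp
    rw [h0, add_zero, norm_mul, norm_pow, norm_neg, Real.norm_eq_abs, abs_of_pos hη, mul_comm]
    exact mul_le_mul (hC _ hk) (pow_le_pow_of_le_one hη.le hη1 (by omega)) (by positivity) hC0

/-- the model function -/
def hsV (N : ℕ) (η : ℝ) (x : EuclideanSpace ℝ (Fin N)) : ℝ := Real.smoothTransition (1 - η * logNorm N x)

lemma hs_main_bound (N : ℕ) (hN : 0 < N) : ∃ K : ℝ, 0 ≤ K ∧ ∀ η : ℝ, 0 < η → η ≤ 1 →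
    ∀ x : EuclideanSpace ℝ (Fin N), x ≠ 0 → 1 - η * Real.log ‖x‖ ∈ Set.Icc (0:ℝ) 1 →
    gradNorm N N (hsV N η) x ≤ (‖x‖ ^ N)⁻¹ * (Real.sqrt (ell N hN) *
      (η * deriv Real.smoothTransition (1 - η * Real.log ‖x‖)) + K * η ^ 2) := by
  obtain ⟨C, hC0, hC⟩ := hs_bound_S N
  set D : ℝ := 1 + ∑ m ∈ Finset.range (N+1),
    ‖iteratedFDeriv ℝ m (logNorm N) (EuclideanSpace.single (⟨0, hN⟩ : Fin N) 1)‖ with hD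
  have hD1 : 1 ≤ D := by
    rw [hD]; linarith [Finset.sum_nonneg (s := Finset.range (N+1)) fun m _ =>
      norm_nonneg (iteratedFDeriv ℝ m (logNorm N) (EuclideanSpace.single (⟨0, hN⟩ : Fin N) 1))]
  have hDm : ∀ m ≤ N, ‖iteratedFDeriv ℝ m (logNorm N)
      (EuclideanSpace.single (⟨0, hN⟩ : Fin N) 1)‖ ≤ D := by
    intro m hm
    have := Finset.single_le_sum (f := fun m => ‖iteratedFDeriv ℝ m (logNorm N)
      (EuclideanSpace.single (⟨0, hN⟩ : Fin N) 1)‖) (s := Finset.range (N+1))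
      (fun _ _ => norm_nonneg _) (Finset.mem_range.2 (by omega : m < N + 1))
    rw [hD]; linarith
  refine ⟨Real.sqrt (Fintype.card (Fin N → Fin N)) * (N.factorial * C * D ^ N),
    by positivity, ?_⟩
  intro η hη hη1 x hx hs
  have hpos := norm_pos_iff.2 hx
  set t := Real.log ‖x‖ with ht
  have htl : logNorm N x = t := rfl
  set β := η * deriv Real.smoothTransition (1 - η * t) with hβ
  have hβ0 : 0 ≤ β := mul_nonneg hη.le (Real.smoothTransition.monotone.deriv_nonneg)
  set G := ((fun w => Real.smoothTransition (1 - η * w)) +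
      (fun w => (-Real.smoothTransition (1 - η * t) + β * (w - t)))) with hG
  have hGc : ContDiff ℝ N G := by
    apply ContDiff.add
    · exact Real.smoothTransition.contDiff.comp (by fun_prop)
    · fun_prop
  have hlog : ContDiffAt ℝ N (logNorm N) x := hs_logNorm_contDiffAt hx
  have hV : ContDiffAt ℝ N (hsV N η) x := by
    unfold hsV
    exact Real.smoothTransition.contDiffAt.comp x (contDiffAt_const.sub (contDiffAt_const.mul hlog))
  have hopen : IsOpen ({0}ᶜ : Set (EuclideanSpace ℝ (Fin N))) := isOpen_compl_singleton
  have hrem : ‖iteratedFDeriv ℝ N (G ∘ logNorm N) x‖ ≤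
      N.factorial * (C * η ^ 2) * (D * ‖x‖⁻¹) ^ N := by
    rw [← iteratedFDerivWithin_of_isOpen N hopen (by simpa using hx)]
    refine norm_iteratedFDerivWithin_comp_le (s := {0}ᶜ) (t := Set.univ) (N := N) hGc.contDiffOn
      (fun y hy => (hs_logNorm_contDiffAt hy).contDiffWithinAt) le_rfl uniqueDiffOn_univ
      hopen.uniqueDiffOn (Set.mapsTo_univ _ _) hx ?_ ?_
    · intro i hi
      rw [iteratedFDerivWithin_univ, norm_iteratedFDeriv_eq_norm_iteratedDeriv, htl]
      exact hs_remainder N C hC0 η hη hη1 t (fun k hk => hC k hk _ hs) i hi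
    · intro i hi1 hi
      rw [iteratedFDerivWithin_of_isOpen i hopen (by simpa using hx), mul_pow]
      refine (hs_norm_iter_log (by omega) hN x hx).trans ?_
      gcongr
      exact (hDm i hi).trans (le_self_pow₀ hD1 (by omega))
  have hcomp : hsV N η = (-β) • logNorm N + (G ∘ logNorm N +
      fun _ => Real.smoothTransition (1 - η * t) + β * t) := by
    ext y
    simp only [hsV, hG, Pi.add_apply, Pi.smul_apply, Function.comp_apply, smul_eq_mul]
    ring
  have hiter : iteratedFDeriv ℝ N (hsV N η) x =
      (-β) • iteratedFDeriv ℝ N (logNorm N) x + iteratedFDeriv ℝ N (G ∘ logNorm N) x := by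
    have hGl : ContDiffAt ℝ N (G ∘ logNorm N) x := hGc.contDiffAt.comp x hlog
    have e1 : ContDiffAt ℝ N ((-β) • logNorm N) x := hlog.const_smul (-β)
    have e2 : ContDiffAt ℝ N (G ∘ logNorm N +
      fun _ => Real.smoothTransition (1 - η * t) + β * t) x := hGl.add contDiffAt_const
    rw [hcomp, iteratedFDeriv_add_apply e1 e2,
      iteratedFDeriv_const_smul_apply hlog, iteratedFDeriv_add_apply hGl contDiffAt_const,
      iteratedFDeriv_const_of_ne hN.ne']
    simp
  have hgl : gradNorm N N (logNorm N) x = (‖x‖ ^ N)⁻¹ * Real.sqrt (ell N hN) := by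
    rw [← hs_gradNorm_log hN x hx, ← mul_assoc, inv_mul_cancel₀ (by positivity), one_mul]
  calc gradNorm N N (hsV N η) x = hsFrob (iteratedFDeriv ℝ N (hsV N η) x) := rfl
    _ ≤ |(-β)| * hsFrob (iteratedFDeriv ℝ N (logNorm N) x) +
        hsFrob (iteratedFDeriv ℝ N (G ∘ logNorm N) x) := by rw [hiter]; exact hsFrob_add _ _ _
    _ = β * gradNorm N N (logNorm N) x + hsFrob (iteratedFDeriv ℝ N (G ∘ logNorm N) x) := by
        rw [abs_neg, abs_of_nonneg hβ0]; rfl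
    _ ≤ β * ((‖x‖ ^ N)⁻¹ * Real.sqrt (ell N hN)) + Real.sqrt (Fintype.card (Fin N → Fin N)) *
        (N.factorial * (C * η ^ 2) * (D * ‖x‖⁻¹) ^ N) := by
        rw [hgl]
        gcongr
        exact (hsFrob_le _).trans (by gcongr)
    _ = _ := by rw [mul_pow, inv_pow]; ring

lemma hsV_contDiff (N : ℕ) (η : ℝ) (hη : 0 < η) : ContDiff ℝ (⊤ : ℕ∞) (hsV N η) := by
  rw [contDiff_iff_contDiffAt]
  intro x
  by_cases hx : x = 0
  · subst hx
    have : hsV N η =ᶠ[nhds 0] fun _ => 1 := by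
      filter_upwards [Metric.ball_mem_nhds (0 : EuclideanSpace ℝ (Fin N)) one_pos] with y hy
      have hy' : ‖y‖ < 1 := by simpa using hy
      have := Real.log_nonpos (norm_nonneg y) hy'.le
      exact Real.smoothTransition.one_of_one_le (by unfold logNorm; nlinarith)
    exact contDiffAt_const.congr_of_eventuallyEq this
  · unfold hsV
    exact Real.smoothTransition.contDiffAt.comp x
      (contDiffAt_const.sub (contDiffAt_const.mul (hs_logNorm_contDiffAt hx)))

lemma hsV_zero {N : ℕ} {η : ℝ} (hη : 0 < η) {x : EuclideanSpace ℝ (Fin N)} (hx : Real.exp (1/η) ≤ ‖x‖) :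
    hsV N η x = 0 := by
  apply Real.smoothTransition.zero_of_nonpos
  have h1 : 1/η ≤ Real.log ‖x‖ := (Real.le_log_iff_exp_le ((Real.exp_pos _).trans_le hx)).2 hx
  rw [div_le_iff₀ hη] at h1
  unfold logNorm; linarith

lemma hsV_one {N : ℕ} {η : ℝ} (hη : 0 < η) {x : EuclideanSpace ℝ (Fin N)} (hx : ‖x‖ ≤ 1) :
    hsV N η x = 1 := by
  have := Real.log_nonpos (norm_nonneg x) hx
  exact Real.smoothTransition.one_of_one_le (by unfold logNorm; nlinarith)

lemma hs_gradNorm_const {N : ℕ} (hN : 0 < N) {f : (EuclideanSpace ℝ (Fin N)) → ℝ} {x : EuclideanSpace ℝ (Fin N)} {c : ℝ}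
    (h : f =ᶠ[nhds x] fun _ => c) : gradNorm N N f x = 0 := by
  unfold gradNorm mixedPartial
  rw [(h.iteratedFDeriv ℝ N).self_of_nhds, iteratedFDeriv_const_of_ne hN.ne']
  simp

lemma hs_gradNorm_cont {N : ℕ} {f : (EuclideanSpace ℝ (Fin N)) → ℝ} (hf : ContDiff ℝ (⊤ : ℕ∞) f) :
    Continuous (gradNorm N N f) := by
  have h : Continuous (iteratedFDeriv ℝ N f) :=
    hf.continuous_iteratedFDeriv (by exact_mod_cast le_top)
  unfold gradNorm mixedPartial
  refine Real.continuous_sqrt.comp (continuous_finsetSum _ fun i _ => Continuous.pow ?_ 2)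
  exact (ContinuousMultilinearMap.apply ℝ (fun _ : Fin N => EuclideanSpace ℝ (Fin N)) ℝ _).continuous.comp h

lemma hs_gradNorm_integrable {N : ℕ} {f : (EuclideanSpace ℝ (Fin N)) → ℝ} (hf : ContDiff ℝ (⊤ : ℕ∞) f)
    (hc : HasCompactSupport f) : Integrable (gradNorm N N f) := by
  refine (hs_gradNorm_cont hf).integrable_of_hasCompactSupport ?_
  refine (hc.iteratedFDeriv N (𝕜 := ℝ)).mono ?_
  intro x hx hx'
  apply hx
  unfold gradNorm mixedPartial
  rw [hx']
  simp

lemma hs_radial (A K η : ℝ) (hη : 0 < η) :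
    IntegrableOn (fun y => A * (η * deriv Real.smoothTransition (1 - η * Real.log y) * y⁻¹)
        + K * η ^ 2 * y⁻¹) (Set.Icc 1 (Real.exp (1/η))) ∧
    ∫ y in Set.Icc 1 (Real.exp (1/η)),
      (A * (η * deriv Real.smoothTransition (1 - η * Real.log y) * y⁻¹)
        + K * η ^ 2 * y⁻¹) = A + K * η := by
  have hM : 1 ≤ Real.exp (1/η) := Real.one_le_exp (by positivity)
  have hS : Continuous (deriv Real.smoothTransition) :=
    (Real.smoothTransition.contDiff (n := 1)).continuous_deriv le_rfl
  have hcont : ContinuousOn (fun y => A * (η * deriv Real.smoothTransition (1 - η * Real.log y)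
      * y⁻¹) + K * η ^ 2 * y⁻¹) (Set.Icc 1 (Real.exp (1/η))) := by
    have hl : ContinuousOn Real.log (Set.Icc 1 (Real.exp (1/η))) :=
      Real.continuousOn_log.mono fun y hy => by
        have := hy.1
        simp only [Set.mem_compl_iff, Set.mem_singleton_iff]; linarith
    have hi : ContinuousOn (fun y : ℝ => y⁻¹) (Set.Icc 1 (Real.exp (1/η))) :=
      continuousOn_inv₀.mono fun y hy => by
        have := hy.1
        simp only [Set.mem_compl_iff, Set.mem_singleton_iff]; linarith
    have h2 := hS.comp_continuousOn (continuousOn_const.sub ((continuousOn_const (c := η)).mul hl)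
      : ContinuousOn (fun y => 1 - η * Real.log y) _)
    exact (continuousOn_const.mul ((continuousOn_const.mul h2).mul hi)).add
      (continuousOn_const.mul hi)
  refine ⟨hcont.integrableOn_compact isCompact_Icc, ?_⟩
  rw [integral_Icc_eq_integral_Ioc, ← intervalIntegral.integral_of_le hM]
  have hF : ∀ y ∈ Set.uIcc 1 (Real.exp (1/η)), HasDerivAt
      (fun y => -(A * Real.smoothTransition (1 - η * Real.log y)) + K * η ^ 2 * Real.log y)
      (A * (η * deriv Real.smoothTransition (1 - η * Real.log y) * y⁻¹) + K * η ^ 2 * y⁻¹) y := by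
    intro y hy
    rw [Set.uIcc_of_le hM] at hy
    have hy0 : y ≠ 0 := by linarith [hy.1]
    have h1 := Real.hasDerivAt_log hy0
    have h2 : HasDerivAt Real.smoothTransition (deriv Real.smoothTransition (1 - η * Real.log y))
        (1 - η * Real.log y) :=
      ((Real.smoothTransition.contDiff (n := 1)).differentiable (by simp) _).hasDerivAt
    have h3 := h2.comp y ((h1.const_mul η).const_sub 1)
    refine (((h3.const_mul A).neg).add (h1.const_mul (K * η ^ 2))).congr_deriv ?_
    ring
  rw [intervalIntegral.integral_eq_sub_of_hasDerivAt hF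
    (by rw [← Set.uIcc_of_le hM] at hcont; exact hcont.intervalIntegrable)]
  simp only [Real.log_exp, Real.log_one]
  have : 1 - η * (1/η) = 0 := by field_simp; ring
  rw [this]
  simp only [Real.smoothTransition.zero, mul_zero, sub_zero, Real.smoothTransition.one]
  field_simp
  ring

lemma hs_integral_bound (N : ℕ) (hN : 0 < N) : ∃ K : ℝ, 0 ≤ K ∧ ∀ η : ℝ, 0 < η → η ≤ 1 →
    ∫ x, gradNorm N N (hsV N η) x ≤ omegaSphere N * (Real.sqrt (ell N hN) + K * η) := by
  obtain ⟨K, hK0, hK⟩ := hs_main_bound N hN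
  refine ⟨K, hK0, fun η hη hη1 => ?_⟩
  have : Nonempty (Fin N) := ⟨⟨0, hN⟩⟩
  set A := Real.sqrt (ell N hN)
  set M := Real.exp (1/η) with hM
  obtain ⟨hI, hval⟩ := hs_radial A K η hη
  set B : ℝ → ℝ := Set.indicator (Set.Icc 1 M) (fun r => (r ^ N)⁻¹ *
    (A * (η * deriv Real.smoothTransition (1 - η * Real.log r)) + K * η ^ 2)) with hB
  have hle : ∀ x : EuclideanSpace ℝ (Fin N), gradNorm N N (hsV N η) x ≤ B ‖x‖ := by
    intro x
    by_cases h1 : ‖x‖ < 1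
    · rw [hs_gradNorm_const hN (c := 1), hB, Set.indicator_of_notMem]
      · intro h; linarith [h.1]
      · filter_upwards [(isOpen_lt continuous_norm continuous_const).mem_nhds h1] with y hy
        exact hsV_one hη (le_of_lt hy)
    by_cases h2 : M < ‖x‖
    · rw [hs_gradNorm_const hN (c := 0), hB, Set.indicator_of_notMem]
      · intro h; linarith [h.2]
      · filter_upwards [(isOpen_lt continuous_const continuous_norm).mem_nhds h2] with y hy
        exact hsV_zero hη (le_of_lt hy)
    push Not at h1 h2
    have hmem : ‖x‖ ∈ Set.Icc 1 M := ⟨h1, h2⟩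
    rw [hB, Set.indicator_of_mem hmem]
    refine hK η hη hη1 x (norm_pos_iff.1 (by linarith)) ?_
    have l0 := Real.log_nonneg h1
    have l1 : Real.log ‖x‖ ≤ 1/η := (Real.log_le_iff_le_exp (by linarith)).2 h2
    rw [le_div_iff₀ hη] at l1
    constructor <;> nlinarith
  have hfr : Module.finrank ℝ (EuclideanSpace ℝ (Fin N)) = N := by simp
  have hfun : (fun y : ℝ => y ^ (Module.finrank ℝ (EuclideanSpace ℝ (Fin N)) - 1) • B y) =
      Set.indicator (Set.Icc 1 M)
      (fun y => A * (η * deriv Real.smoothTransition (1 - η * Real.log y) * y⁻¹)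
        + K * η ^ 2 * y⁻¹) := by
    ext y
    by_cases hy : y ∈ Set.Icc 1 M
    · rw [hB, Set.indicator_of_mem hy, Set.indicator_of_mem hy, hfr]
      have hy0 : y ≠ 0 := by linarith [hy.1]
      have : (y ^ N)⁻¹ = (y ^ (N-1))⁻¹ * y⁻¹ := by
        rw [← mul_inv, ← pow_succ, Nat.sub_add_cancel hN]
      rw [this, smul_eq_mul]
      field_simp
    · rw [hB, Set.indicator_of_notMem hy, Set.indicator_of_notMem hy, smul_zero]
  have hBint : Integrable (fun x : EuclideanSpace ℝ (Fin N) => B ‖x‖) := by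
    rw [integrable_fun_norm_addHaar, hfun]
    exact ((integrable_indicator_iff measurableSet_Icc).2 hI).integrableOn
  have hsub : Set.Icc 1 M ⊆ Set.Ioi (0:ℝ) := fun y hy => by
    have := hy.1
    simp only [Set.mem_Ioi]; linarith
  calc ∫ x, gradNorm N N (hsV N η) x ≤ ∫ x : EuclideanSpace ℝ (Fin N), B ‖x‖ :=
        integral_mono_of_nonneg (Eventually.of_forall fun x => Real.sqrt_nonneg _) hBint
          (Eventually.of_forall hle)
    _ = _ := by
      rw [integral_fun_norm_addHaar, hfun, setIntegral_indicator measurableSet_Icc,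
        Set.inter_eq_self_of_subset_right hsub, hval, hfr]
      simp only [omegaSphere, nsmul_eq_mul, smul_eq_mul, Measure.real]
      ring

theorem statement10 (N : ℕ) (hN : 1 ≤ N)
    (Ω : Set (EuclideanSpace ℝ (Fin N))) (hΩ : IsOpen Ω) (hΩne : Ω.Nonempty)
    (ε : ℝ) (hε : 0 < ε) :
    ∃ u : EuclideanSpace ℝ (Fin N) → ℝ,
      ContDiff ℝ (⊤ : ℕ∞) u ∧ HasCompactSupport u ∧ tsupport u ⊆ Ω ∧ u ≠ 0 ∧
        ∫ x in Ω, gradNorm N N u x <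
          (Real.sqrt (ell N (by omega)) * omegaSphere N + ε) * ⨆ x, |u x| := by
  have hN0 : 0 < N := hN
  obtain ⟨x₀, hx₀⟩ := hΩne
  obtain ⟨ρ, hρ, hball⟩ := Metric.nhds_basis_closedBall.mem_iff.1 (hΩ.mem_nhds hx₀)
  obtain ⟨K, hK0, hK⟩ := hs_integral_bound N hN0
  have hω : 0 ≤ omegaSphere N := by unfold omegaSphere; positivity
  set η : ℝ := min 1 (ε / (omegaSphere N * K + 1)) with hηd
  have hη : 0 < η := by rw [hηd]; positivity
  have hη1 : η ≤ 1 := min_le_left _ _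
  have hηε : omegaSphere N * K * η < ε := by
    have h1 : η ≤ ε / (omegaSphere N * K + 1) := min_le_right _ _
    rw [le_div_iff₀ (by positivity)] at h1
    nlinarith
  set c : ℝ := Real.exp (1/η) / ρ with hc
  have hc0 : 0 < c := by positivity
  set u : (EuclideanSpace ℝ (Fin N)) → ℝ := fun x => hsV N η (c • (x - x₀)) with hu
  have hcd : ContDiff ℝ (⊤ : ℕ∞) u := (hsV_contDiff N η hη).comp (by fun_prop)
  have hts : tsupport u ⊆ Metric.closedBall x₀ ρ := by
    refine closure_minimal ?_ Metric.isClosed_closedBall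
    intro x hx
    by_contra hcon
    apply hx
    apply hsV_zero hη
    simp only [Metric.mem_closedBall, dist_eq_norm, not_le] at hcon
    rw [norm_smul, Real.norm_eq_abs, abs_of_pos hc0, hc, div_mul_eq_mul_div, le_div_iff₀ hρ]
    gcongr
  have hcs : HasCompactSupport u :=
    (isCompact_closedBall x₀ ρ).of_isClosed_subset (isClosed_tsupport u) hts
  have hu1 : u x₀ = 1 := hsV_one hη (by simp)
  have hsup : 1 ≤ ⨆ x, |u x| := by
    have hb : BddAbove (Set.range fun x => |u x|) := by
      refine ⟨1, ?_⟩
      rintro _ ⟨x, rfl⟩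
      simp only [hu, hsV]
      rw [abs_of_nonneg (Real.smoothTransition.nonneg _)]
      exact Real.smoothTransition.le_one _
    calc (1:ℝ) = |u x₀| := by rw [hu1, abs_one]
      _ ≤ _ := le_ciSup hb x₀
  refine ⟨u, hcd, hcs, hts.trans hball, fun h => by simp [h] at hu1, ?_⟩
  have hgrad : ∀ x, gradNorm N N u x = c ^ N * gradNorm N N (hsV N η) (c • (x - x₀)) := by
    intro x
    have e : ∀ v, iteratedFDeriv ℝ N u x v =
        c ^ N * iteratedFDeriv ℝ N (hsV N η) (c • (x - x₀)) v := by
      intro v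
      rw [hu, iteratedFDeriv_comp_sub (f := fun y => hsV N η (c • y))]
      exact hs_iter_scale c hc0.ne' (LinearIsometryEquiv.refl ℝ _) (hsV N η) (x - x₀) v
    unfold gradNorm mixedPartial
    simp_rw [e, mul_pow]
    rw [← Finset.mul_sum, Real.sqrt_mul (by positivity), Real.sqrt_sq (by positivity)]
  have hint : ∫ x, gradNorm N N u x = ∫ x, gradNorm N N (hsV N η) x := by
    simp_rw [hgrad]
    rw [integral_const_mul, integral_sub_right_eq_self
      (fun x => gradNorm N N (hsV N η) (c • x)) x₀, Measure.integral_comp_smul]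
    have hfr : Module.finrank ℝ (EuclideanSpace ℝ (Fin N)) = N := by simp
    rw [hfr, abs_of_pos (by positivity), smul_eq_mul, ← mul_assoc,
      mul_inv_cancel₀ (by positivity), one_mul]
  calc ∫ x in Ω, gradNorm N N u x ≤ ∫ x, gradNorm N N u x :=
        setIntegral_le_integral (hs_gradNorm_integrable hcd hcs)
          (Eventually.of_forall fun x => Real.sqrt_nonneg _)
    _ ≤ omegaSphere N * (Real.sqrt (ell N hN0) + K * η) := hint ▸ hK η hη hη1
    _ < (Real.sqrt (ell N hN0) * omegaSphere N + ε) * 1 := by nlinarith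
    _ ≤ _ := mul_le_mul_of_nonneg_left hsup (by positivity)
end
end

section
/- Let N ≥ 1, m ≥ 1, and let α = (α_1,…,α_N) be a multi-index with |α| = α_1 + ⋯ + α_N = m. Then there exist polynomials P^{(α)}_{m−2i} in N variables, for i = 0,…,⌊m/2⌋, each of which is either the zero polynomial or a homogeneous polynomial of degree m−2i with positive integer coefficients, such that for every f : ℝ → ℝ of class C^m and every x ∈ ℝ^N, the radial function u(x) = f(|x|²/2) satisfies ∂^m u / ∂x_1^{α_1}⋯∂x_N^{α_N} (x) = ∑_{i=0}^{⌊m/2⌋} f^{(m−i)}(|x|²/2) · P^{(α)}_{m−2i}(x_1,…,x_N). Moreover, when α = m·e_j is concentrated in a single coordinate, none of the polynomials P^{(α)}_{m−2i} is zero. -/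
open MeasureTheory Metric Filter Matrix

noncomputable section

open MvPolynomial in
/-- The polynomials attached to a list of differentiation indices, over `ℕ`. -/
def QQ {N : ℕ} : List (Fin N) → ℕ → MvPolynomial (Fin N) ℕ
  | [], 0 => 1
  | [], _ + 1 => 0
  | j :: l, 0 => X j * QQ l 0
  | j :: l, i + 1 => X j * QQ l (i + 1) + pderiv j (QQ l i)

lemma pderiv_swap {N : ℕ} (j k : Fin N) (p : MvPolynomial (Fin N) ℕ) :
    MvPolynomial.pderiv j (MvPolynomial.pderiv k p)
      = MvPolynomial.pderiv k (MvPolynomial.pderiv j p) := by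
  induction p using MvPolynomial.induction_on with
  | C a => simp
  | add p q hp hq => simp [hp, hq]
  | mul_X p n hp =>
    simp only [MvPolynomial.pderiv_mul, map_add, hp, MvPolynomial.pderiv_X]
    have h : ∀ a b c : Fin N, MvPolynomial.pderiv a
        (Pi.single (M := fun _ => MvPolynomial (Fin N) ℕ) b 1 c) = 0 := by
      intro a b c
      by_cases hc : c = b
      · subst hc; simp
      · simp [Pi.single_eq_of_ne hc]
    simp only [h]
    ring

lemma QQ_perm {N : ℕ} {l l' : List (Fin N)} (h : l.Perm l') : ∀ i, QQ l i = QQ l' i := by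
  induction h with
  | nil => intro i; rfl
  | cons x _ ih => intro i; cases i <;> simp [QQ, ih]
  | trans _ _ h1 h2 => intro i; rw [h1, h2]
  | swap j k l =>
    have h : MvPolynomial.pderiv k (MvPolynomial.X j : MvPolynomial (Fin N) ℕ)
        = MvPolynomial.pderiv j (MvPolynomial.X k) := by
      rw [MvPolynomial.pderiv_X, MvPolynomial.pderiv_X]
      by_cases hc : j = k
      · subst hc; rfl
      · rw [Pi.single_eq_of_ne hc, Pi.single_eq_of_ne (Ne.symm hc)]
    intro i
    match i with
    | 0 => simp only [QQ]; ring
    | 1 => simp only [QQ, MvPolynomial.pderiv_mul, h]; ring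
    | i + 2 =>
      simp only [QQ, MvPolynomial.pderiv_mul, map_add, h, pderiv_swap j k]; ring

lemma QQ_homog {N : ℕ} (l : List (Fin N)) : ∀ i,
    (2 * i ≤ l.length → (QQ l i).IsHomogeneous (l.length - 2 * i)) ∧
    (l.length < 2 * i → QQ l i = 0) := by
  induction l with
  | nil =>
    intro i
    cases i with
    | zero => simpa [QQ] using MvPolynomial.isHomogeneous_one _ _
    | succ i => simp [QQ]
  | cons j l ih =>
    intro i
    cases i with
    | zero =>
      simp only [QQ]
      refine ⟨fun _ => ?_, fun h => by omega⟩
      have := (MvPolynomial.isHomogeneous_X ℕ j).mul ((ih 0).1 (by omega))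
      convert this using 1
      simp; omega
    | succ i =>
      simp only [QQ, List.length_cons]
      constructor
      · intro h
        apply MvPolynomial.IsHomogeneous.add
        · by_cases h2 : 2 * (i + 1) ≤ l.length
          · have := (MvPolynomial.isHomogeneous_X ℕ j).mul ((ih (i+1)).1 h2)
            convert this using 1
            omega
          · rw [(ih (i+1)).2 (by omega), mul_zero]
            exact MvPolynomial.isHomogeneous_zero _ _ _
        · have := ((ih i).1 (by omega)).pderiv (i := j)
          convert this using 1
          omega
      · intro h
        rw [(ih (i+1)).2 (by omega), mul_zero, zero_add]
        by_cases h2 : l.length < 2 * i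
        · rw [(ih i).2 h2, map_zero]
        · have := (ih i).1 (by omega)
          have h0 : l.length - 2 * i = 0 := by omega
          rw [h0] at this
          rw [← MvPolynomial.totalDegree_zero_iff_isHomogeneous] at this
          rw [MvPolynomial.totalDegree_eq_zero_iff_eq_C.1 this, MvPolynomial.pderiv_C]

lemma QQ_replicate {N : ℕ} (j : Fin N) (m : ℕ) : ∀ i, 2 * i ≤ m →
    ∃ c : ℕ, 0 < c ∧ QQ (List.replicate m j) i
      = MvPolynomial.C c * MvPolynomial.X j ^ (m - 2 * i) := by
  induction m with
  | zero =>
    intro i hi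
    obtain rfl : i = 0 := by omega
    exact ⟨1, one_pos, by simp [QQ]⟩
  | succ m ih =>
    intro i hi
    cases i with
    | zero =>
      obtain ⟨c, hc, h⟩ := ih 0 (by omega)
      refine ⟨c, hc, ?_⟩
      simp only [List.replicate_succ, QQ, h]
      simp only [mul_zero, Nat.sub_zero, pow_succ]
      ring
    | succ i =>
      obtain ⟨c, hc, h⟩ := ih i (by omega)
      have e : m - 2 * i = (m + 1 - 2 * (i + 1)) + 1 := by omega
      have hd : MvPolynomial.pderiv j (QQ (List.replicate m j) i)
          = MvPolynomial.C (c * (m - 2 * i)) * MvPolynomial.X j ^ (m + 1 - 2 * (i + 1)) := by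
        rw [h, MvPolynomial.pderiv_C_mul, MvPolynomial.pderiv_pow, MvPolynomial.pderiv_X_self, e]
        simp [MvPolynomial.smul_eq_C_mul]
        ring
      have hpos : 0 < c * (m - 2 * i) := Nat.mul_pos hc (by omega)
      simp only [List.replicate_succ, QQ, hd]
      by_cases h2 : 2 * (i + 1) ≤ m
      · obtain ⟨c', hc', h'⟩ := ih (i + 1) h2
        refine ⟨c' + c * (m - 2 * i), by omega, ?_⟩
        have e' : m + 1 - 2 * (i + 1) = (m - 2 * (i + 1)) + 1 := by omega
        rw [h', e', pow_succ, map_add]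
        ring
      · refine ⟨_, hpos, ?_⟩
        rw [(QQ_homog (List.replicate m j) (i + 1)).2 (by simp; omega), mul_zero, zero_add]

/-- Evaluation of the natural-coefficient polynomial at a real point. -/
abbrev ev {N : ℕ} (p : MvPolynomial (Fin N) ℕ) (x : EuclideanSpace ℝ (Fin N)) : ℝ :=
  MvPolynomial.eval (fun j => x j) (MvPolynomial.map (Nat.castRingHom ℝ) p)

lemma ev_deriv {N : ℕ} (p : MvPolynomial (Fin N) ℕ) (x : EuclideanSpace ℝ (Fin N)) :
    ∃ L : EuclideanSpace ℝ (Fin N) →L[ℝ] ℝ, HasFDerivAt (ev p) L x ∧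
      ∀ j, L (EuclideanSpace.single j 1) = ev (MvPolynomial.pderiv j p) x := by
  induction p using MvPolynomial.induction_on with
  | C a =>
    refine ⟨0, ?_, by simp [ev]⟩
    have : ev (N := N) (MvPolynomial.C a) = fun _ => (a : ℝ) := by ext y; simp [ev]
    rw [this]
    exact hasFDerivAt_const _ _
  | add p q hp hq =>
    obtain ⟨L, hL, h1⟩ := hp
    obtain ⟨L', hL', h2⟩ := hq
    refine ⟨L + L', ?_, by intro j; simp [h1, h2, ev]⟩
    have : ev (p + q) = ev p + ev q := by ext y; simp [ev]
    rw [this]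
    exact hL.add hL'
  | mul_X p n hp =>
    obtain ⟨L, hL, h1⟩ := hp
    have hX : HasFDerivAt (fun y : EuclideanSpace ℝ (Fin N) => y n)
      (EuclideanSpace.proj n : EuclideanSpace ℝ (Fin N) →L[ℝ] ℝ) x :=
      (EuclideanSpace.proj n : EuclideanSpace ℝ (Fin N) →L[ℝ] ℝ).hasFDerivAt
    have : ev (p * MvPolynomial.X n) = fun y => ev p y * y n := by ext y; simp [ev]
    rw [this]
    refine ⟨_, hL.mul hX, ?_⟩
    intro j
    simp only [ContinuousLinearMap.add_apply, ContinuousLinearMap.smul_apply, h1, smul_eq_mul,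
      MvPolynomial.pderiv_mul, ev, map_add, map_mul, MvPolynomial.map_X, MvPolynomial.eval_X,
      MvPolynomial.pderiv_X]
    by_cases hc : n = j
    · subst hc; simp; ring
    · simp [Pi.single_eq_of_ne hc, hc]; ring

lemma radial_deriv {N : ℕ} (x : EuclideanSpace ℝ (Fin N)) :
    ∃ L : EuclideanSpace ℝ (Fin N) →L[ℝ] ℝ,
      HasFDerivAt (fun y : EuclideanSpace ℝ (Fin N) => ‖y‖ ^ 2 / 2) L x ∧
      ∀ j, L (EuclideanSpace.single j 1) = x j := by
  have h := ((hasStrictFDerivAt_norm_sq x).hasFDerivAt).mul_const (2⁻¹ : ℝ)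
  refine ⟨_, h, ?_⟩
  intro j
  simp [EuclideanSpace.inner_single_right]

lemma main_formula {N : ℕ} (m : ℕ) (f : ℝ → ℝ) (hf : ContDiff ℝ (m : ℕ∞) f) :
    ∀ (idx : Fin m → Fin N) (x : EuclideanSpace ℝ (Fin N)),
      mixedPartial N m (fun y => f (‖y‖ ^ 2 / 2)) idx x =
        ∑ i ∈ Finset.range (m + 1),
          iteratedDeriv (m - i) f (‖x‖ ^ 2 / 2) * ev (QQ (List.ofFn idx) i) x := by
  induction m with
  | zero => intro idx x; simp [mixedPartial, QQ, ev]
  | succ m ih =>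
    intro idx x
    have hf' : ContDiff ℝ (m : ℕ∞) f := hf.of_le (by exact_mod_cast Nat.le_succ m)
    have ih' := ih hf' (Fin.tail idx)
    have hu : ContDiff ℝ ((m + 1 : ℕ) : ℕ∞)
        (fun y : EuclideanSpace ℝ (Fin N) => f (‖y‖ ^ 2 / 2)) :=
      hf.comp ((contDiff_norm_sq ℝ).div_const 2)
    have hdiff := hu.differentiable_iteratedFDeriv (m := m) (by exact_mod_cast Nat.lt_succ_self m)
    have h1 : HasFDerivAt (mixedPartial N m (fun y => f (‖y‖ ^ 2 / 2)) (Fin.tail idx))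
        _ x := (hdiff x).hasFDerivAt.continuousMultilinear_apply_const
          (fun k => EuclideanSpace.single (Fin.tail idx k) 1)
    have h2 : mixedPartial N (m + 1) (fun y => f (‖y‖ ^ 2 / 2)) idx x =
        fderiv ℝ (mixedPartial N m (fun y => f (‖y‖ ^ 2 / 2)) (Fin.tail idx)) x
          (EuclideanSpace.single (idx 0) 1) := by
      rw [h1.fderiv, mixedPartial, iteratedFDeriv_succ_apply_left]
      rfl
    rw [h2, funext ih']
    obtain ⟨R, hR, hRj⟩ := radial_deriv x
    choose L hL hLj using fun i => ev_deriv (QQ (List.ofFn (Fin.tail idx)) i) x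
    have hd : ∀ i, HasDerivAt (iteratedDeriv (m - i) f)
        (iteratedDeriv (m - i + 1) f (‖x‖ ^ 2 / 2)) (‖x‖ ^ 2 / 2) := by
      intro i
      rw [iteratedDeriv_succ]
      exact ((hf.differentiable_iteratedDeriv (m - i)
        (by
          have h : m - i < m + 1 := by omega
          have h' : ((m - i : ℕ) : ℕ∞) < ((m + 1 : ℕ) : ℕ∞) := Nat.cast_lt.2 h
          exact WithTop.coe_lt_coe.2 h')) _).hasDerivAt
    have hs := HasFDerivAt.fun_sum (u := Finset.range (m + 1))
      fun i _ => ((hd i).comp_hasFDerivAt x hR).mul (hL i)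
    have hs' := hs.fderiv
    simp only [Function.comp_def, Pi.mul_apply] at hs'
    rw [hs']
    simp only [ContinuousLinearMap.sum_apply, ContinuousLinearMap.add_apply,
      ContinuousLinearMap.smul_apply, hRj, hLj, smul_eq_mul]
    have hl : List.ofFn idx = idx 0 :: List.ofFn (Fin.tail idx) := List.ofFn_succ
    rw [hl]
    have hz : QQ (List.ofFn (Fin.tail idx)) (m + 1) = 0 :=
      (QQ_homog _ _).2 (by rw [List.length_ofFn]; omega)
    generalize List.ofFn (Fin.tail idx) = l at hz ⊢
    have key : ∑ i ∈ Finset.range (m + 1),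
        iteratedDeriv (m + 1 - i) f (‖x‖ ^ 2 / 2) * (x (idx 0) * ev (QQ l i) x) =
        ∑ i ∈ Finset.range (m + 1),
          iteratedDeriv (m + 1 - (i + 1)) f (‖x‖ ^ 2 / 2) * (x (idx 0) * ev (QQ l (i + 1)) x)
        + iteratedDeriv (m + 1 - 0) f (‖x‖ ^ 2 / 2) * (x (idx 0) * ev (QQ l 0) x) := by
      rw [← Finset.sum_range_succ' (fun i => iteratedDeriv (m + 1 - i) f (‖x‖ ^ 2 / 2) *
        (x (idx 0) * ev (QQ l i) x)), Finset.sum_range_succ _ (m + 1), hz]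
      simp [ev]
    rw [Finset.sum_range_succ' _ (m + 1)]
    have e0 : ev (QQ (idx 0 :: l) 0) x = x (idx 0) * ev (QQ l 0) x := by simp [ev, QQ]
    have e1 : ∀ i, ev (QQ (idx 0 :: l) (i + 1)) x = x (idx 0) * ev (QQ l (i + 1)) x
        + ev (MvPolynomial.pderiv (idx 0) (QQ l i)) x := by intro i; simp [ev, QQ]
    simp only [e0, e1, mul_add, Finset.sum_add_distrib]
    rw [add_right_comm, ← key, add_comm]
    congr 1
    · apply Finset.sum_congr rfl
      intro i hi
      rw [Finset.mem_range] at hi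
      rw [show m + 1 - i = m - i + 1 by omega]
      ring
    · apply Finset.sum_congr rfl
      intro i _
      rw [show m + 1 - (i + 1) = m - i by omega]

lemma count_ofFn_eq {N m : ℕ} (idx : Fin m → Fin N) (j : Fin N) :
    (List.ofFn idx).count j = (Finset.univ.filter fun k => idx k = j).card := by
  have h : ((List.ofFn idx : List (Fin N)) : Multiset (Fin N)) = Finset.univ.val.map idx := by
    exact (Fin.univ_val_map idx).symm
  rw [← Multiset.coe_count, h, Multiset.count_map, Finset.card_def, Finset.filter_val]
  simp only [eq_comm]

/-- for each multi-index `α` with `|α| = m` there are polynomials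
`P^{(α)}_{m-2i}`, `i = 0,…,⌊m/2⌋`, each either zero or homogeneous of degree `m-2i` with
positive integer coefficients, such that for every radial `u(x) = f(|x|²/2)` with `f ∈ C^m`,
`∂^m u/∂x^α (x) = ∑_i f^{(m-i)}(|x|²/2) P^{(α)}_{m-2i}(x)`; moreover if `α = m·e_j` then
none of the polynomials is zero. -/
theorem statement14 (N m : ℕ) (hN : 1 ≤ N) (hm : 1 ≤ m)
    (α : Fin N → ℕ) (hα : ∑ j, α j = m) :
    ∃ P : ℕ → MvPolynomial (Fin N) ℝ,
      (∀ i ≤ m / 2, P i = 0 ∨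
        ((P i).IsHomogeneous (m - 2 * i) ∧
          ∀ d ∈ (P i).support, ∃ n : ℕ, 0 < n ∧ MvPolynomial.coeff d (P i) = (n : ℝ))) ∧
      (∀ f : ℝ → ℝ, ContDiff ℝ (m : ℕ∞) f →
        ∀ x : EuclideanSpace ℝ (Fin N),
          ∀ idx : Fin m → Fin N,
            (∀ j : Fin N, (Finset.univ.filter fun k => idx k = j).card = α j) →
              mixedPartial N m (fun y => f (‖y‖ ^ 2 / 2)) idx x =
                ∑ i ∈ Finset.range (m / 2 + 1),
                  iteratedDeriv (m - i) f (‖x‖ ^ 2 / 2) *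
                    MvPolynomial.eval (fun j => x j) (P i)) ∧
      ((∃ j : Fin N, α = Pi.single j m) → ∀ i ≤ m / 2, P i ≠ 0) := by
  classical
  let s : Multiset (Fin N) := ∑ j, Multiset.replicate (α j) j
  have hs : ∀ j, s.toList.count j = α j := by
    intro j
    rw [← Multiset.coe_count, Multiset.coe_toList, Multiset.count_sum']
    simp [Multiset.count_replicate]
  have hlen : s.toList.length = m := by
    rw [Multiset.length_toList, ← hα]
    simp [s]
  refine ⟨fun i => MvPolynomial.map (Nat.castRingHom ℝ) (QQ s.toList i), ?_, ?_, ?_⟩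
  · intro i hi
    right
    refine ⟨?_, ?_⟩
    · have := (QQ_homog s.toList i).1 (by omega)
      rw [hlen] at this
      exact this.map _
    · intro d hd
      rw [MvPolynomial.mem_support_iff, MvPolynomial.coeff_map] at hd
      refine ⟨MvPolynomial.coeff d (QQ s.toList i), ?_, by simp [MvPolynomial.coeff_map]⟩
      rcases Nat.eq_zero_or_pos (MvPolynomial.coeff d (QQ s.toList i)) with h | h
      · rw [h] at hd; simp at hd
      · exact h
  · intro f hf x idx hidx
    have hp : (List.ofFn idx).Perm s.toList := by
      rw [List.perm_iff_count]
      intro j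
      rw [hs, count_ofFn_eq, hidx]
    rw [main_formula m f hf idx x]
    symm
    simp only [QQ_perm hp]
    apply Finset.sum_subset
    · intro i; simp only [Finset.mem_range]; omega
    · intro i _ hi
      rw [(QQ_homog s.toList i).2 (by simp only [Finset.mem_range] at hi; omega)]
      simp
  · rintro ⟨j, hj⟩ i hi
    have hp : s.toList.Perm (List.replicate m j) := by
      rw [List.perm_iff_count]
      intro k
      rw [hs, hj, List.count_replicate]
      by_cases hk : k = j
      · subst hk; simp
      · simp [Pi.single_eq_of_ne hk, Ne.symm hk]
    obtain ⟨c, hc, h⟩ := QQ_replicate j m i (by omega)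
    simp only [QQ_perm hp, h]
    simp [hc.ne']
end
end

section
/- Let N ≥ 2 and let u : ℝ^N → ℝ be a radial function of class C^N on ℝ^N (say u(x) = f(|x|²/2) for some f ∈ C^N((0,∞)) on ℝ^N∖{0}) such that u and |∇^N u| are Lebesgue integrable on ℝ^N. Suppose there exists a function a : (0,∞) → ℝ such that for almost every x ∈ ℝ^N∖{0} and every (i_1,…,i_N) ∈ {1,…,N}^N, ∂^N u/∂x_{i_1}⋯∂x_{i_N}(x) = a(|x|) · ∂^N log|x|/∂x_{i_1}⋯∂x_{i_N}(x), i.e. the tensor ∇^N u(x) is the scalar multiple a(|x|) of ∇^N log|x|. Then u is identically zero. -/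
open MeasureTheory Metric Filter Matrix

noncomputable section

open scoped Polynomial Topology

lemma exists_antideriv (P : ℝ[X]) : ∃ Q : ℝ[X], Q.derivative = P := by
  induction P using Polynomial.induction_on' with
  | add p q hp hq =>
    obtain ⟨a, ha⟩ := hp
    obtain ⟨b, hb⟩ := hq
    exact ⟨a + b, by simp [ha, hb]⟩
  | monomial n c =>
    refine ⟨Polynomial.monomial (n + 1) (c / (n + 1)), ?_⟩
    rw [Polynomial.derivative_monomial]
    have : ((n : ℝ) + 1) ≠ 0 := by positivity
    simp
    field_simp

lemma const_of_deriv {g : ℝ → ℝ} (h : ∀ r, 0 < r → HasDerivAt g 0 r) :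
    ∃ c, ∀ r, 0 < r → g r = c := by
  have := isOpen_Ioi.exists_is_const_of_deriv_eq_zero (s := Set.Ioi (0:ℝ)) (f := g)
    isPreconnected_Ioi (fun r hr => (h r hr).differentiableAt.differentiableWithinAt)
    (fun r hr => (h r hr).deriv)
  exact this

lemma poly_of_deriv {g : ℝ → ℝ} (P : ℝ[X]) (h : ∀ r, 0 < r → HasDerivAt g (P.eval r) r) :
    ∃ Q : ℝ[X], ∀ r, 0 < r → g r = Q.eval r := by
  obtain ⟨Q, hQ⟩ := exists_antideriv P
  obtain ⟨c, hc⟩ := const_of_deriv (g := fun r => g r - Q.eval r) (fun r hr => by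
    have := (h r hr).sub (Q.hasDerivAt r)
    rw [hQ, sub_self] at this
    exact this)
  refine ⟨Q + Polynomial.C c, fun r hr => ?_⟩
  have := hc r hr
  simp
  linarith

lemma poly_of_iteratedDeriv (n : ℕ) : ∀ (g : ℝ → ℝ), ContDiffOn ℝ n g (Set.Ioi 0) →
    (∀ r, 0 < r → iteratedDeriv n g r = 0) →
    ∃ Q : ℝ[X], ∀ r, 0 < r → g r = Q.eval r := by
  induction n with
  | zero => 
    intro g _ h
    exact ⟨0, fun r hr => by simpa using h r hr⟩
  | succ n ih =>
    intro g hg h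
    obtain ⟨P, hP⟩ := ih (deriv g) (hg.deriv_of_isOpen isOpen_Ioi (by norm_cast)) (fun r hr => by
      rw [← iteratedDeriv_succ']; exact h r hr)
    refine poly_of_deriv P (fun r hr => ?_)
    rw [← hP r hr]
    exact ((hg.contDiffAt (Ioi_mem_nhds hr)).differentiableAt (by simp)).hasDerivAt

/-- second-order quantity -/
def radH (φ : ℝ → ℝ) (s : ℝ) : ℝ :=
  s ^ 2 * deriv (deriv φ) (s ^ 2 / 2) + 2 * deriv φ (s ^ 2 / 2)

lemma ode_solve (n : ℕ) (f : ℝ → ℝ) (hf : ContDiffOn ℝ (n + 2 : ℕ) f (Set.Ioi 0))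
    (h : ∀ r, 0 < r → iteratedDeriv n (radH f) r = 0) (hH : ContDiffOn ℝ n (radH f) (Set.Ioi 0)) :
    ∃ (C : ℝ) (R : ℝ[X]), ∀ r, 0 < r → f (r ^ 2 / 2) = C * Real.log r + R.eval r := by
  obtain ⟨P, hP⟩ := poly_of_iteratedDeriv n _ hH h
  have hf1 : ContDiffOn ℝ (n + 1 : ℕ) (deriv f) (Set.Ioi 0) :=
    hf.deriv_of_isOpen isOpen_Ioi (by norm_cast)
  have hsq : ∀ r : ℝ, HasDerivAt (fun r : ℝ => r ^ 2 / 2) r r := fun r => by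
    have := (hasDerivAt_pow 2 r).div_const 2
    simpa using this
  have d0 : ∀ r : ℝ, 0 < r → HasDerivAt (fun r => f (r ^ 2 / 2)) (deriv f (r^2/2) * r) r := by
    intro r hr
    have hp : 0 < r ^ 2 / 2 := by positivity
    have h1 := ((hf.contDiffAt (Ioi_mem_nhds hp)).differentiableAt (by simp)).hasDerivAt
    exact h1.comp r (hsq r)
  have d1 : ∀ r : ℝ, 0 < r → HasDerivAt (fun r => deriv f (r ^ 2 / 2))
      (deriv (deriv f) (r^2/2) * r) r := by
    intro r hr
    have hp : 0 < r ^ 2 / 2 := by positivity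
    have h1 := ((hf1.contDiffAt (Ioi_mem_nhds hp)).differentiableAt (by simp)).hasDerivAt
    exact h1.comp r (hsq r)
  obtain ⟨Q, hQ⟩ := poly_of_deriv (g := fun r => r ^ 2 * deriv f (r ^ 2 / 2)) (Polynomial.X * P)
    (fun r hr => by
      have := (hasDerivAt_pow 2 r).mul (d1 r hr)
      refine this.congr_deriv ?_
      rw [Polynomial.eval_mul, Polynomial.eval_X, ← hP r hr, radH]
      push_cast
      ring)
  obtain ⟨R, hR⟩ := poly_of_deriv (g := fun r => f (r ^ 2 / 2) - Q.coeff 0 * Real.log r) Q.divX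
    (fun r hr => by
      have := (d0 r hr).sub ((Real.hasDerivAt_log hr.ne').const_mul (Q.coeff 0))
      refine this.congr_deriv (Eq.symm ?_)
      have h1 := hQ r hr
      have h2 := congrArg (Polynomial.eval r) (Polynomial.divX_mul_X_add Q)
      simp at h2
      rw [← h2] at h1
      have h3 : r * (Q.divX.eval r) = r * (deriv f (r ^ 2 / 2) * r - Q.coeff 0 * r⁻¹) := by
        have : r * r⁻¹ = 1 := mul_inv_cancel₀ hr.ne'
        linear_combination -h1 + Q.coeff 0 * this
      exact mul_left_cancel₀ hr.ne' h3)
  exact ⟨Q.coeff 0, R, fun r hr => by linarith [hR r hr]⟩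

lemma radH_contDiffOn (n : ℕ) (f : ℝ → ℝ) (hf : ContDiffOn ℝ (n + 2 : ℕ) f (Set.Ioi 0)) :
    ContDiffOn ℝ n (radH f) (Set.Ioi 0) := by
  have hf1 : ContDiffOn ℝ (n + 1 : ℕ) (deriv f) (Set.Ioi 0) :=
    hf.deriv_of_isOpen isOpen_Ioi (by norm_cast)
  have hf2 : ContDiffOn ℝ n (deriv (deriv f)) (Set.Ioi 0) :=
    hf1.deriv_of_isOpen isOpen_Ioi (by norm_cast)
  have hm : Set.MapsTo (fun s : ℝ => s ^ 2 / 2) (Set.Ioi 0) (Set.Ioi 0) := fun s hs => by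
    have : 0 < s := hs
    show 0 < s ^ 2 / 2
    positivity
  have hs : ContDiffOn ℝ n (fun s : ℝ => s ^ 2 / 2) (Set.Ioi 0) := by fun_prop
  have a1 := (hf1.of_le (by norm_cast; omega)).comp hs hm
  have a2 := hf2.comp hs hm
  unfold radH
  exact ((by fun_prop : ContDiffOn ℝ n (fun s : ℝ => s ^ 2) (Set.Ioi 0)).mul a2).add
    (contDiffOn_const.mul a1)

lemma radH_log (s : ℝ) (hs : 0 < s) : radH (fun t => Real.log (2 * t) / 2) s = 0 := by
  have h1 : ∀ t : ℝ, 0 < t → deriv (fun t => Real.log (2 * t) / 2) t = (2 * t)⁻¹ := by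
    intro t ht
    have : HasDerivAt (fun t => Real.log (2 * t) / 2) (2 * 1 / (2 * t) / 2) t :=
      (((hasDerivAt_id t).const_mul 2).log (by positivity)).div_const 2
    rw [this.deriv]
    field_simp
  have hp : 0 < s ^ 2 / 2 := by positivity
  have h2 : deriv (deriv (fun t => Real.log (2 * t) / 2)) (s ^ 2 / 2)
      = deriv (fun t => (2 * t)⁻¹) (s ^ 2 / 2) := by
    apply Filter.EventuallyEq.deriv_eq
    filter_upwards [Ioi_mem_nhds hp] with t ht using h1 t ht
  have h3 : HasDerivAt (fun t : ℝ => (2 * t)⁻¹) (-(2 * 1) / (2 * (s^2/2)) ^ 2) (s ^ 2 / 2) :=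
    ((hasDerivAt_id (s^2/2)).const_mul 2).inv (by positivity)
  rw [radH, h2, h1 _ hp, h3.deriv]
  field_simp
  ring

lemma final_zero (N : ℕ) (hN : 2 ≤ N) (u : EuclideanSpace ℝ (Fin N) → ℝ) (hc : Continuous u)
    (hint : Integrable u) (C : ℝ) (R : ℝ[X])
    (h : ∀ x, x ≠ 0 → u x = C * Real.log ‖x‖ + R.eval ‖x‖) : u = 0 := by
  have : Nonempty (Fin N) := ⟨⟨0, by omega⟩⟩
  have : Nontrivial (EuclideanSpace ℝ (Fin N)) := inferInstance
  have lim0 : Tendsto (fun x : EuclideanSpace ℝ (Fin N) => ‖x‖) (𝓝[≠] 0) (𝓝[>] 0) :=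
    tendsto_norm_nhdsNE_zero
  have l1 : Tendsto (fun x => u x - R.eval ‖x‖) (𝓝[≠] 0) (𝓝 (u 0 - R.eval 0)) := by
    have : Continuous (fun x => u x - R.eval ‖x‖) := hc.sub (R.continuous.comp continuous_norm)
    have := this.tendsto 0
    simp only [norm_zero] at this
    exact this.mono_left nhdsWithin_le_nhds
  have l2 : Tendsto (fun x : EuclideanSpace ℝ (Fin N) => Real.log ‖x‖) (𝓝[≠] 0) atBot :=
    Real.tendsto_log_nhdsGT_zero.comp lim0
  have hC : C = 0 := by
    by_contra hC
    have l3 : Tendsto (fun x : EuclideanSpace ℝ (Fin N) => Real.log ‖x‖) (𝓝[≠] 0)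
        (𝓝 ((u 0 - R.eval 0) / C)) := by
      refine (l1.div_const C).congr' ?_
      filter_upwards [self_mem_nhdsWithin] with x hx
      rw [h x hx]
      field_simp
      ring
    exact not_tendsto_nhds_of_tendsto_atBot l2 _ l3
  subst hC
  simp only [zero_mul, zero_add] at h
  have hR : R = 0 := by
    by_contra hR
    have : ∃ c > 0, ∀ᶠ r in atTop, c ≤ |R.eval r| := by
      by_cases hd : 0 < R.degree
      · exact ⟨1, one_pos, (R.abs_tendsto_atTop hd).eventually_ge_atTop 1⟩
      · rw [not_lt] at hd
        have := Polynomial.eq_C_of_degree_le_zero hd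
        refine ⟨|R.coeff 0|, ?_, ?_⟩
        · rw [gt_iff_lt, abs_pos]
          intro h0
          rw [h0] at this
          exact hR (by simpa using this)
        · rw [this]; simp
    obtain ⟨c, hc0, hev⟩ := this
    obtain ⟨M, hM⟩ := eventually_atTop.1 hev
    have hfin := hint.measure_norm_ge_lt_top hc0
    have hsub : (Set.univ : Set (EuclideanSpace ℝ (Fin N))) ⊆
        closedBall 0 (max M 0) ∪ {x | c ≤ ‖u x‖} := by
      intro x _
      by_cases hx : ‖x‖ ≤ max M 0
      · left; simpa using hx
      · right
        rw [not_le] at hx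
        have hx0 : x ≠ 0 := by
          rintro rfl
          simp at hx
        show c ≤ ‖u x‖
        rw [h x hx0]
        exact hM _ ((le_max_left _ _).trans hx.le)
    have h1 : volume (Set.univ : Set (EuclideanSpace ℝ (Fin N))) < ⊤ :=
      (measure_mono hsub).trans_lt ((measure_union_le _ _).trans_lt
        (ENNReal.add_lt_top.2 ⟨measure_closedBall_lt_top, hfin⟩))
    rw [measure_univ_of_isAddLeftInvariant] at h1
    exact lt_irrefl _ h1
  subst hR
  simp only [Polynomial.eval_zero] at h l1
  funext x
  by_cases hx : x = 0
  · subst hx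
    have l4 : Tendsto (fun x => u x - 0) (𝓝[≠] 0) (𝓝 0) := by
      refine tendsto_const_nhds.congr' ?_
      filter_upwards [self_mem_nhdsWithin] with x hx
      rw [h x hx]; simp
    have := tendsto_nhds_unique l1 l4
    simpa using this
  · exact h x hx

section radial
variable {E : Type*} [NormedAddCommGroup E] [InnerProductSpace ℝ E]

lemma hasFDerivAt_half_sq (x : E) :
    HasFDerivAt (fun x : E => ‖x‖ ^ 2 / 2) (innerSL ℝ x) x := by
  have h := (hasStrictFDerivAt_norm_sq x).hasFDerivAt
  have h2 := h.const_mul (1/2 : ℝ)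
  have e1 : (fun x : E => ‖x‖ ^ 2 / 2) = fun x : E => 1 / 2 * ‖x‖ ^ 2 := by funext y; ring
  have e2 : (innerSL ℝ x : E →L[ℝ] ℝ) = (1 / 2 : ℝ) • 2 • innerSL ℝ x := by ext y; simp
  rw [e1, e2]
  exact h2

lemma fderiv_radial {h : E → ℝ} {φ : ℝ → ℝ} (hφ : DifferentiableOn ℝ φ (Set.Ioi 0))
    (hh : ∀ x, x ≠ 0 → h x = φ (‖x‖ ^ 2 / 2)) (x : E) (hx : x ≠ 0) :
    fderiv ℝ h x = deriv φ (‖x‖ ^ 2 / 2) • innerSL ℝ x := by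
  have hp : 0 < ‖x‖ ^ 2 / 2 := by have := norm_pos_iff.2 hx; positivity
  have h1 : HasFDerivAt (fun x => φ (‖x‖ ^ 2 / 2)) (deriv φ (‖x‖ ^ 2 / 2) • innerSL ℝ x) x :=
    ((hφ.differentiableAt (Ioi_mem_nhds hp)).hasDerivAt).comp_hasFDerivAt x (hasFDerivAt_half_sq x)
  refine HasFDerivAt.fderiv (h1.congr_of_eventuallyEq ?_)
  filter_upwards [isOpen_ne.mem_nhds hx] with y hy using hh y hy

lemma fderiv2_radial {h : E → ℝ} {φ : ℝ → ℝ} (hφ : DifferentiableOn ℝ φ (Set.Ioi 0))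
    (hφ' : DifferentiableOn ℝ (deriv φ) (Set.Ioi 0))
    (hh : ∀ x, x ≠ 0 → h x = φ (‖x‖ ^ 2 / 2)) (x : E) (hx : x ≠ 0) (v w : E) :
    fderiv ℝ (fderiv ℝ h) x v w = deriv (deriv φ) (‖x‖ ^ 2 / 2) * inner ℝ x v * inner ℝ x w
      + deriv φ (‖x‖ ^ 2 / 2) * inner ℝ v w := by
  have hp : 0 < ‖x‖ ^ 2 / 2 := by have := norm_pos_iff.2 hx; positivity
  have h1 : HasFDerivAt (fun x : E => deriv φ (‖x‖ ^ 2 / 2))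
      (deriv (deriv φ) (‖x‖ ^ 2 / 2) • innerSL ℝ x) x :=
    HasDerivAt.comp_hasFDerivAt (h₂ := deriv φ) x
      ((hφ'.differentiableAt (Ioi_mem_nhds hp)).hasDerivAt) (hasFDerivAt_half_sq x)
  have h2 : HasFDerivAt (fun x : E => innerSL ℝ x) (innerSL ℝ : E →L[ℝ] E →L[ℝ] ℝ) x :=
    (innerSL ℝ : E →L[ℝ] E →L[ℝ] ℝ).hasFDerivAt
  have h3 := h1.smul h2
  have h4 : HasFDerivAt (fderiv ℝ h) _ x := h3.congr_of_eventuallyEq (by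
    filter_upwards [isOpen_ne.mem_nhds hx] with y hy using fderiv_radial hφ hh y hy)
  rw [h4.fderiv]
  have e1 : (innerSL ℝ : E →L[ℝ] E →L[ℝ] ℝ) v w = inner ℝ v w := innerSL_apply_apply ℝ v w
  have e2 : (innerSL ℝ : E →L[ℝ] E →L[ℝ] ℝ) x v = inner ℝ x v := innerSL_apply_apply ℝ x v
  have e3 : (innerSL ℝ : E →L[ℝ] E →L[ℝ] ℝ) x w = inner ℝ x w := innerSL_apply_apply ℝ x w
  rw [← e1, ← e2, ← e3]
  change deriv φ (‖x‖ ^ 2 / 2) * (innerSL ℝ : E →L[ℝ] E →L[ℝ] ℝ) v w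
    + (deriv (deriv φ) (‖x‖ ^ 2 / 2) * (innerSL ℝ : E →L[ℝ] E →L[ℝ] ℝ) x v)
      * (innerSL ℝ : E →L[ℝ] E →L[ℝ] ℝ) x w = _
  ring

lemma iteratedFDeriv_ray {F : Type*} [NormedAddCommGroup F] [NormedSpace ℝ F] (n : ℕ)
    {G : E → F} {s : Set E} (hs : IsOpen s) (hG : ContDiffOn ℝ n G s) (e : E) (r : ℝ)
    (hr : r • e ∈ s) :
    iteratedFDeriv ℝ n G (r • e) (fun _ => e) = iteratedDeriv n (fun t : ℝ => G (t • e)) r := by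
  let L : ℝ →L[ℝ] E := ContinuousLinearMap.toSpanSingleton ℝ e
  have hL : ∀ t, L t = t • e := fun t => by simp [L]
  have ho : IsOpen (L ⁻¹' s) := hs.preimage L.continuous
  have hr' : L r ∈ s := by rw [hL]; exact hr
  have key := L.iteratedFDerivWithin_comp_right hG hs.uniqueDiffOn ho.uniqueDiffOn hr' le_rfl
  rw [iteratedFDerivWithin_of_isOpen n ho hr', iteratedFDerivWithin_of_isOpen n hs hr'] at key
  rw [iteratedDeriv_eq_iteratedFDeriv]
  have e1 : (fun t : ℝ => G (t • e)) = G ∘ L := by funext t; simp [hL]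
  rw [e1, key, ContinuousMultilinearMap.compContinuousLinearMap_apply]
  simp [hL]

/-- the vector tuple (e,...,e,y,y) -/
def tup (n : ℕ) (e y : E) : Fin (n + 2) → E :=
  Fin.snoc (α := fun _ => E) (Fin.snoc (α := fun _ => E) (fun _ : Fin n => e) y) y

lemma iteratedFDeriv_tup (n : ℕ) {h : E → ℝ} {φ : ℝ → ℝ}
    (hφ : ContDiffOn ℝ (n + 2 : ℕ) φ (Set.Ioi 0))
    (hh : ∀ x, x ≠ 0 → h x = φ (‖x‖ ^ 2 / 2)) (e y : E) (he : ‖e‖ = 1) (r : ℝ) (hr : 0 < r) :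
    iteratedFDeriv ℝ (n + 2) h (r • e) (tup n e y) =
      iteratedDeriv n (fun s => s ^ 2 * deriv (deriv φ) (s ^ 2 / 2) * inner ℝ e y ^ 2
        + deriv φ (s ^ 2 / 2) * inner ℝ y y) r := by
  have he0 : e ≠ 0 := by rintro rfl; simp at he
  have hre : r • e ≠ 0 := smul_ne_zero hr.ne' he0
  have hφ1 : ContDiffOn ℝ (n + 1 : ℕ) (deriv φ) (Set.Ioi 0) :=
    hφ.deriv_of_isOpen isOpen_Ioi (by norm_cast)
  have hs : IsOpen {x : E | x ≠ 0} := isOpen_ne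
  have hh0 : ContDiffOn ℝ (n + 2 : ℕ) h {x : E | x ≠ 0} := by
    have hm : Set.MapsTo (fun x : E => ‖x‖ ^ 2 / 2) {x : E | x ≠ 0} (Set.Ioi 0) := fun x hx => by
      have : 0 < ‖x‖ := norm_pos_iff.2 hx
      show 0 < ‖x‖ ^ 2 / 2
      positivity
    have h1 : ContDiffOn ℝ (n + 2 : ℕ) (fun x : E => ‖x‖ ^ 2 / 2) {x : E | x ≠ 0} :=
      ((contDiff_norm_sq ℝ).div_const 2).contDiffOn
    exact (hφ.comp h1 hm).congr (fun x hx => hh x hx)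
  have hh1 : ContDiffOn ℝ (n + 1 : ℕ) (fderiv ℝ h) {x : E | x ≠ 0} :=
    hh0.fderiv_of_isOpen hs (by norm_cast)
  have hh2 : ContDiffOn ℝ n (fderiv ℝ (fderiv ℝ h)) {x : E | x ≠ 0} :=
    hh1.fderiv_of_isOpen hs (by norm_cast)
  rw [iteratedFDeriv_succ_apply_right, iteratedFDeriv_succ_apply_right]
  simp only [tup, Fin.init_snoc, Fin.snoc_last]
  let ev : (E →L[ℝ] E →L[ℝ] ℝ) →L[ℝ] ℝ :=
    (ContinuousLinearMap.apply ℝ ℝ y).comp (ContinuousLinearMap.apply ℝ (E →L[ℝ] ℝ) y)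
  have hev : ∀ T, ev T = T y y := fun T => rfl
  have k1 := ev.iteratedFDeriv_comp_left (hh2.contDiffAt (hs.mem_nhds hre)) (i := n) le_rfl
  have k2 := congrArg (fun T => T (fun _ => e)) k1
  simp only [ContinuousLinearMap.compContinuousMultilinearMap_coe, Function.comp_apply, hev] at k2
  refine Eq.trans k2.symm ?_
  rw [iteratedFDeriv_ray n hs (ev.contDiff.comp_contDiffOn hh2) e r hre]
  apply Filter.EventuallyEq.iteratedDeriv_eq
  filter_upwards [Ioi_mem_nhds hr] with s hs'
  have hs0 : 0 < s := hs'
  simp only [Function.comp_apply, hev]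
  rw [fderiv2_radial (hφ.differentiableOn (by simp)) (hφ1.differentiableOn (by simp)) hh _
    (smul_ne_zero hs0.ne' he0)]
  simp only [norm_smul, he, inner_smul_left, Real.norm_eq_abs, mul_one, sq_abs]
  simp
  ring

lemma iteratedFDeriv_tup_add (n : ℕ) {h : E → ℝ} {φ : ℝ → ℝ}
    (hφ : ContDiffOn ℝ (n + 2 : ℕ) φ (Set.Ioi 0))
    (hh : ∀ x, x ≠ 0 → h x = φ (‖x‖ ^ 2 / 2)) (e y : E) (he : ‖e‖ = 1) (hy : ‖y‖ = 1)
    (hey : inner ℝ e y = 0) (r : ℝ) (hr : 0 < r) :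
    iteratedFDeriv ℝ (n + 2) h (r • e) (tup n e e) + iteratedFDeriv ℝ (n + 2) h (r • e) (tup n e y)
      = iteratedDeriv n (radH φ) r := by
  rw [iteratedFDeriv_tup n hφ hh e e he r hr, iteratedFDeriv_tup n hφ hh e y he r hr]
  have hf1 : ContDiffOn ℝ (n + 1 : ℕ) (deriv φ) (Set.Ioi 0) :=
    hφ.deriv_of_isOpen isOpen_Ioi (by norm_cast)
  have hf2 : ContDiffOn ℝ n (deriv (deriv φ)) (Set.Ioi 0) :=
    hf1.deriv_of_isOpen isOpen_Ioi (by norm_cast)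
  have hp : 0 < r ^ 2 / 2 := by positivity
  have hsq : ContDiffAt ℝ n (fun s : ℝ => s ^ 2 / 2) r := by fun_prop
  have a1 : ContDiffAt ℝ n (fun s : ℝ => deriv φ (s ^ 2 / 2)) r :=
    ContDiffAt.comp (g := deriv φ) r
      ((hf1.contDiffAt (Ioi_mem_nhds hp)).of_le (by norm_cast; omega)) hsq
  have a2 : ContDiffAt ℝ n (fun s : ℝ => deriv (deriv φ) (s ^ 2 / 2)) r :=
    ContDiffAt.comp (g := deriv (deriv φ)) r (hf2.contDiffAt (Ioi_mem_nhds hp)) hsq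
  rw [← iteratedDeriv_fun_add (by fun_prop) (by fun_prop)]
  congr 1
  funext s
  simp [radH, hey, he, hy]
  ring

end radial

lemma exists_orth (n : ℕ) (x : EuclideanSpace ℝ (Fin (n + 2))) :
    ∃ y : EuclideanSpace ℝ (Fin (n + 2)), ‖y‖ = 1 ∧ inner ℝ x y = 0 := by
  have h : (Submodule.span ℝ {x})ᗮ ≠ ⊥ := by
    intro h
    rw [Submodule.orthogonal_eq_bot_iff] at h
    have h1 := finrank_span_le_card (R := ℝ) ({x} : Set (EuclideanSpace ℝ (Fin (n + 2))))
    rw [h, finrank_top] at h1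
    simp at h1
  obtain ⟨z, hz, hz0⟩ := Submodule.exists_mem_ne_zero_of_ne_bot h
  refine ⟨‖z‖⁻¹ • z, ?_, ?_⟩
  · rw [norm_smul, norm_inv, norm_norm, inv_mul_cancel₀ (norm_ne_zero_iff.2 hz0)]
  · rw [inner_smul_right, Submodule.mem_orthogonal_singleton_iff_inner_right.1 hz, mul_zero]

lemma multilinear_eq (N m : ℕ) (u v : EuclideanSpace ℝ (Fin N) → ℝ) (x : EuclideanSpace ℝ (Fin N))
    (c : ℝ) (h : ∀ i : Fin m → Fin N, mixedPartial N m u i x = c * mixedPartial N m v i x)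
    (w : Fin m → EuclideanSpace ℝ (Fin N)) :
    iteratedFDeriv ℝ m u x w = c * iteratedFDeriv ℝ m v x w := by
  have key : (iteratedFDeriv ℝ m u x).toMultilinearMap
      = (c • iteratedFDeriv ℝ m v x).toMultilinearMap := by
    refine Module.Basis.ext_multilinear
      (fun _ => (EuclideanSpace.basisFun (Fin N) ℝ).toBasis) (fun i => ?_)
    have := h i
    simpa [mixedPartial] using this
  have := congrArg (fun T => T w) key
  simpa using this

/-- if a radial `C^N` function `u` on `ℝ^N`, `N ≥ 2`, with `u` and `|∇^N u|`
integrable, satisfies `∇^N u(x) = a(|x|) ∇^N log|x|` a.e., then `u ≡ 0`. -/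
theorem statement15 (N : ℕ) (hN : 2 ≤ N)
    (u : EuclideanSpace ℝ (Fin N) → ℝ) (hu : ContDiff ℝ (N : ℕ∞) u)
    (f : ℝ → ℝ) (hf : ContDiffOn ℝ (N : ℕ∞) f (Set.Ioi 0))
    (hrad : ∀ x : EuclideanSpace ℝ (Fin N), x ≠ 0 → u x = f (‖x‖ ^ 2 / 2))
    (hint : Integrable u) (hint' : Integrable (fun x => gradNorm N N u x))
    (a : ℝ → ℝ)
    (ha : ∀ᵐ x : EuclideanSpace ℝ (Fin N), x ≠ 0 →
      ∀ i : Fin N → Fin N,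
        mixedPartial N N u i x = a ‖x‖ * mixedPartial N N (logNorm N) i x) :
    u = 0 := by
  obtain ⟨n, rfl⟩ : ∃ n, N = n + 2 := ⟨N - 2, by omega⟩
  have hf' : ContDiffOn ℝ (n + 2 : ℕ) f (Set.Ioi 0) := by exact_mod_cast hf
  have hg : ContDiffOn ℝ (n + 2 : ℕ) (fun t : ℝ => Real.log (2 * t) / 2) (Set.Ioi 0) := by
    refine ContDiffOn.div_const (ContDiffOn.log (by fun_prop) ?_) 2
    intro t ht
    have : 0 < t := ht
    positivity
  have hlog : ∀ x : EuclideanSpace ℝ (Fin (n + 2)), x ≠ 0 →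
      logNorm (n + 2) x = Real.log (2 * (‖x‖ ^ 2 / 2)) / 2 := by
    intro x _
    rw [logNorm, mul_div_cancel₀ _ (two_ne_zero), Real.log_pow]
    push_cast
    ring
  have hH := radH_contDiffOn n f hf'
  have hae : ∀ᵐ x : EuclideanSpace ℝ (Fin (n + 2)), x ≠ 0 → iteratedDeriv n (radH f) ‖x‖ = 0 := by
    filter_upwards [ha] with x hx hx0
    have hx1 := multilinear_eq _ _ _ _ _ _ (hx hx0)
    have hr : 0 < ‖x‖ := norm_pos_iff.2 hx0
    obtain ⟨y, hy, hxy⟩ := exists_orth n x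
    set e := ‖x‖⁻¹ • x with he_def
    have he : ‖e‖ = 1 := by rw [he_def, norm_smul, norm_inv, norm_norm, inv_mul_cancel₀ hr.ne']
    have hey : inner ℝ e y = 0 := by rw [he_def, inner_smul_left, hxy, mul_zero]
    have hxe : ‖x‖ • e = x := by rw [he_def, smul_inv_smul₀ hr.ne']
    have k1 := iteratedFDeriv_tup_add n hf' hrad e y he hy hey ‖x‖ hr
    have k2 := iteratedFDeriv_tup_add n hg hlog e y he hy hey ‖x‖ hr
    have k3 : iteratedDeriv n (radH (fun t : ℝ => Real.log (2 * t) / 2)) ‖x‖ = 0 := by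
      have : radH (fun t : ℝ => Real.log (2 * t) / 2) =ᶠ[𝓝 ‖x‖] fun _ => 0 := by
        filter_upwards [Ioi_mem_nhds hr] with s hs using radH_log s hs
      rw [this.iteratedDeriv_eq]
      simp
    rw [hxe] at k1 k2
    rw [← k1, hx1, hx1, ← mul_add, k2, k3, mul_zero]
  have hall : ∀ r, 0 < r → iteratedDeriv n (radH f) r = 0 := by
    intro r hr
    by_contra hne
    have hcont : ContinuousAt (iteratedDeriv n (radH f)) r := by
      have h1 := hH.continuousOn_iteratedDerivWithin le_rfl isOpen_Ioi.uniqueDiffOn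
      have h2 := h1.continuousAt (Ioi_mem_nhds hr)
      refine h2.congr ?_
      filter_upwards [Ioi_mem_nhds hr] with s hs
      exact iteratedDerivWithin_of_isOpen isOpen_Ioi hs
    let x : EuclideanSpace ℝ (Fin (n + 2)) := EuclideanSpace.single 0 r
    have hxr : ‖x‖ = r := by simp [x, abs_of_pos hr]
    have hx0 : x ≠ 0 := by
      rw [← norm_pos_iff, hxr]; exact hr
    rw [← hxr] at hcont hne
    have hc2 : ContinuousAt (fun z : EuclideanSpace ℝ (Fin (n + 2)) =>
        iteratedDeriv n (radH f) ‖z‖) x :=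
      ContinuousAt.comp (g := iteratedDeriv n (radH f)) hcont continuous_norm.continuousAt
    have hev := (hc2.eventually_ne hne).and (isOpen_ne.mem_nhds hx0)
    have hpos := Measure.measure_pos_of_mem_nhds (volume : Measure (EuclideanSpace ℝ (Fin (n + 2)))) hev
    refine hpos.ne' (measure_mono_null ?_ (ae_iff.1 hae))
    rintro z ⟨hz1, hz2⟩ hz
    exact hz1 (hz hz2)
  obtain ⟨C, R, hCR⟩ := ode_solve n f hf' hall hH
  refine final_zero _ hN u hu.continuous hint C R (fun x hx => ?_)
  rw [hrad x hx, hCR _ (norm_pos_iff.2 hx)]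
end
end
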